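/- Let Γ ≤ SL(2,ℝ) be a discrete subgroup admitting a compact set F ⊆ ℍ² with ⋃_{γ ∈ Γ} γ·F = ℍ² (i.e. Γ is co-compact). Then there exists a constant c(Γ) > 0 such that for every finite set P ⊆ F of N ≥ 2 points with d_Γ(p,q) ≠ 0 for all distinct p, q ∈ P, the number of distinct values of d_Γ(p,q) over pairs of distinct points p, q ∈ P is at least c(Γ) · N / log N. -/

import Mathlib

open scoped UpperHalfPlane MatrixGroups

noncomputable section

/-- The topology on `SL(2,ℝ)` induced from the space of matrices. -/
instance : TopologicalSpace SL(2, ℝ) :=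
  TopologicalSpace.induced (fun g => (g : Matrix (Fin 2) (Fin 2) ℝ)) inferInstance

/-- The quotient pseudo-distance `d_Γ(p,q) = inf_{γ ∈ Γ} d(p, γ·q)` associated to a
subgroup `Γ ≤ SL(2,ℝ)` acting on the hyperbolic plane. -/
def quotDist (Γ : Subgroup SL(2, ℝ)) (p q : ℍ) : ℝ :=
  ⨅ γ : Γ, dist p ((γ : SL(2, ℝ)) • q)

/-!
The isometries of `ℍ` taking `p` to `r` form a line in a three-dimensional projective space, and
the lines of `(p, r)` and `(q, s)` meet exactly when `d(p, q) = d(r, s)` (Elekes–Sharir). Hence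
counting quadruples with equal distances is counting meeting pairs in a set of `N²` lines in `ℝ³`.
At most `N` of these lines are pairwise coplanar, because the lines of `(p, r)` and `(p, s)` are
skew; and they contain no large grid of two families of mutually meeting lines, because a point of
`ℍ` equidistant from three given points is unique.

For such lines, Guth and Katz bound by `O(N³ / k²)` the number of points on at least `k` of them.
If there were more, then many of the lines would lie on a surface of degree much smaller than the
number of rich points on each line: when the lines are numerous it comes from polynomial
partitioning (ham sandwich cuts, from the Borsuk–Ulam theorem), and when they are few from
parameter counting. On an irreducible component which contains many of the lines, either many lines
through a line are coplanar, or the flecnode function vanishes on the component, which forces the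
transversals of a line to sweep out a quadric and produces a grid.

Summing the bound over `k` gives `O(N³ log N)` quadruples, hence by Cauchy–Schwarz at least
`c N / log N` distances. For quotient distances between points of a compact set, only finitely many
elements of the discrete group `Γ` matter, so that they are distances between the points of
finitely many translates of `P`.
-/

namespace GuthKatz

open MvPolynomial

/-! ### Polynomials of bounded degree, directional derivatives and restriction to lines -/

section PolynomialsOfBoundedDegree

lemma sum_range_choose_add_sub_one (k m : ℕ) :
    ∑ n ∈ Finset.range (m + 1), (k + n - 1).choose n = (m + k).choose k := by
  induction m with
  | zero => simp
  | succ m ih =>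
    rw [Finset.sum_range_succ, ih, Nat.choose_symm_add.symm, Nat.choose_symm_add.symm,
      show m + 1 + k = m + k + 1 by ring, Nat.choose_succ_succ',
      show k + (m + 1) - 1 = m + k by omega]

lemma finrank_restrictTotalDegree (σ R : Type*) [Fintype σ] [CommRing R] [Nontrivial R] (m : ℕ) :
    Module.finrank R (restrictTotalDegree σ R m) =
      (m + Fintype.card σ).choose (Fintype.card σ) := by
  classical
  let T : Finset (σ →₀ ℕ) := (Finset.range (m + 1)).biUnion (Finset.univ.finsuppAntidiag ·)
  have hT : {n : σ →₀ ℕ | (n.sum fun _ e ↦ e) ≤ m} = (T : Set (σ →₀ ℕ)) := by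
    ext n
    simp [T, Finset.mem_finsuppAntidiag, Finsupp.sum_fintype]
  have hbasis : Module.finrank R (restrictTotalDegree σ R m) =
      Nat.card {n : σ →₀ ℕ | (n.sum fun _ e ↦ e) ≤ m} :=
    Module.finrank_eq_nat_card_basis (basisRestrictSupport R _)
  rw [hbasis, hT, Nat.card_coe_set_eq, Set.ncard_coe_finset, Finset.card_biUnion]
  · simp_rw [Finset.card_finsuppAntidiag_nat_eq_choose, Finset.card_univ]
    exact sum_range_choose_add_sub_one _ m
  · intro a _ b _ hab
    rw [Function.onFun, Finset.disjoint_left]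
    intro x hxa hxb
    rw [Finset.mem_finsuppAntidiag] at hxa hxb
    exact hab (hxa.1.symm.trans hxb.1)

lemma six_mul_choose_three (m : ℕ) :
    6 * (m + 3).choose 3 = (m + 1) * (m + 2) * (m + 3) := by
  have h := Nat.add_one_mul_choose_eq (m + 2) 2
  have h' := Nat.add_one_mul_choose_eq (m + 1) 1
  simp only [Nat.choose_one_right, Nat.reduceAdd] at h h'
  nlinarith

lemma exists_ne_zero_forall_apply_eq_zero {K V ι : Type*} [Field K] [AddCommGroup V] [Module K V]
    [Module.Finite K V] (T : Finset ι) (φ : ι → V →ₗ[K] K) (h : T.card < Module.finrank K V) :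
    ∃ v : V, v ≠ 0 ∧ ∀ i ∈ T, φ i v = 0 := by
  let A : V →ₗ[K] (T → K) := LinearMap.pi fun i ↦ φ i
  obtain ⟨v, hv, hv0⟩ : ∃ v ∈ LinearMap.ker A, v ≠ 0 :=
    Submodule.exists_mem_ne_zero_of_ne_bot
      (LinearMap.ker_ne_bot_of_finrank_lt (by simpa using h))
  exact ⟨v, hv0, fun i hi ↦ congrFun (LinearMap.mem_ker.mp hv) ⟨i, hi⟩⟩

end PolynomialsOfBoundedDegree

section DirectionalDerivative

variable {σ R : Type*} [CommRing R]

/-- The derivative of polynomials in the constant direction `v`. -/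
def dirDeriv (v : σ → R) : Derivation R (MvPolynomial σ R) (MvPolynomial σ R) :=
  mkDerivation R fun i ↦ C (v i)

@[simp]
lemma dirDeriv_X (v : σ → R) (i : σ) : dirDeriv v (X i) = C (v i) := mkDerivation_X _ _ _

@[simp]
lemma dirDeriv_C (v : σ → R) (r : R) : dirDeriv v (C r) = 0 := derivation_C _ _

lemma dirDeriv_C_mul (v : σ → R) (r : R) (f : MvPolynomial σ R) :
    dirDeriv v (C r * f) = C r * dirDeriv v f := by
  simp [Derivation.leibniz, smul_eq_mul]

lemma dirDeriv_comm (u v : σ → R) (f : MvPolynomial σ R) :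
    dirDeriv u (dirDeriv v f) = dirDeriv v (dirDeriv u f) := by
  have h : ⁅dirDeriv u, dirDeriv v⁆ = 0 :=
    derivation_ext fun i ↦ by simp [Derivation.commutator_apply]
  rw [← sub_eq_zero, ← Derivation.commutator_apply, h, Derivation.zero_apply]

lemma dirDeriv_add (u v : σ → R) : dirDeriv (u + v) = dirDeriv u + dirDeriv v :=
  derivation_ext fun i ↦ by simp

lemma dirDeriv_smul (r : R) (v : σ → R) : dirDeriv (r • v) = r • dirDeriv v :=
  derivation_ext fun i ↦ by simp [smul_eq_C_mul]

lemma totalDegree_dirDeriv_le (v : σ → R) (f : MvPolynomial σ R) :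
    (dirDeriv v f).totalDegree ≤ f.totalDegree - 1 := by
  conv_lhs => rw [f.as_sum, map_sum]
  refine (totalDegree_finsetSum _ _).trans (Finset.sup_le fun s hs ↦ ?_)
  rw [dirDeriv, mkDerivation_monomial]
  refine (totalDegree_smul_le _ _).trans ?_
  refine (totalDegree_finsetSum _ _).trans (Finset.sup_le fun i hi ↦ ?_)
  have hi : 1 ≤ s i := Nat.one_le_iff_ne_zero.mpr (Finsupp.mem_support_iff.mp hi)
  have hsplit : (s - Finsupp.single i 1) + Finsupp.single i 1 = s :=
    tsub_add_cancel_of_le (Finsupp.single_le_iff.mpr hi)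
  have hdeg := congrArg Finsupp.degree hsplit
  have hs : s.degree ≤ f.totalDegree := le_totalDegree hs
  have hmon : (monomial (s - Finsupp.single i 1) (s i : R)).totalDegree ≤
      (s - Finsupp.single i 1).degree := totalDegree_monomial_le _ _
  have hmul := totalDegree_mul (monomial (s - Finsupp.single i 1) (s i : R)) (C (v i))
  rw [totalDegree_C] at hmul
  rw [map_add, Finsupp.degree_single] at hdeg
  exact hmul.trans (by omega)

/-- The restriction `t ↦ f (p + t • v)` of a polynomial `f` to the line through `p` with
direction `v`. -/
def restrictLine (p v : σ → R) : MvPolynomial σ R →ₐ[R] Polynomial R :=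
  aeval fun i ↦ Polynomial.C (p i) + Polynomial.X * Polynomial.C (v i)

lemma eval_restrictLine (p v : σ → R) (f : MvPolynomial σ R) (t : R) :
    (restrictLine p v f).eval t = eval (p + t • v) f := by
  induction f using MvPolynomial.induction_on with
  | C r => simp [restrictLine]
  | add f g hf hg => simp [hf, hg]
  | mul_X f i hf =>
    rw [map_mul, Polynomial.eval_mul, hf, map_mul]
    simp [restrictLine]
    ring

lemma natDegree_restrictLine_le (p v : σ → R) (f : MvPolynomial σ R) :
    (restrictLine p v f).natDegree ≤ f.totalDegree := by
  rw [← mul_one f.totalDegree]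
  exact aeval_natDegree_le f le_rfl _ fun i ↦ by compute_degree

lemma derivative_restrictLine (p v : σ → R) (f : MvPolynomial σ R) :
    (restrictLine p v f).derivative = restrictLine p v (dirDeriv v f) := by
  induction f using MvPolynomial.induction_on with
  | C r => simp [restrictLine]
  | add f g hf hg => simp [hf, hg]
  | mul_X f i hf =>
    rw [map_mul, Polynomial.derivative_mul, hf, Derivation.leibniz, dirDeriv_X]
    simp [restrictLine]
    ring

end DirectionalDerivative

/-! ### Lines in space -/

/-- Three-dimensional space `ℝ³`. -/
abbrev Space : Type := Fin 3 → ℝ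

/-- The polynomial functions on `Space`. -/
abbrev SpacePoly : Type := MvPolynomial (Fin 3) ℝ

lemma finrank_restrictTotalDegree_three (m : ℕ) :
    Module.finrank ℝ (restrictTotalDegree (Fin 3) ℝ m) = (m + 3).choose 3 := by
  simpa using finrank_restrictTotalDegree (Fin 3) ℝ m

/-- The line `{(a + t c, b + t d, t) | t ∈ ℝ}`; exactly the lines of `ℝ³` transversal to the
horizontal planes have this form, in a unique way. -/
@[ext]
structure Line where
  a : ℝ
  b : ℝ
  c : ℝ
  d : ℝ

namespace Line

instance : DecidableEq Line := Classical.decEq _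

/-- The point of `l` at height `t`. -/
def point (l : Line) (t : ℝ) : Space := ![l.a + t * l.c, l.b + t * l.d, t]

/-- The direction vector of `l` with vertical component `1`. -/
def dir (l : Line) : Space := ![l.c, l.d, 1]

instance : Membership Space Line := ⟨fun l x ↦ x = l.point (x 2)⟩

/-- Two lines are coplanar, that is, they meet or are parallel. -/
def Coplanar (l m : Line) : Prop := (l.a - m.a) * (l.d - m.d) = (l.b - m.b) * (l.c - m.c)

variable {l m : Line} {x y : Space}

lemma point_mem (l : Line) (t : ℝ) : l.point t ∈ l := rfl

lemma point_eq_of_mem (h : x ∈ l) : l.point (x 2) = x := Eq.symm h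

lemma apply_zero_of_mem (h : x ∈ l) : x 0 = l.a + x 2 * l.c := congrFun h 0

lemma apply_one_of_mem (h : x ∈ l) : x 1 = l.b + x 2 * l.d := congrFun h 1

lemma point_add_smul_dir (l : Line) (s t : ℝ) : l.point s + t • l.dir = l.point (s + t) := by
  funext i
  fin_cases i <;> simp [point, dir] <;> ring

lemma add_smul_dir_mem (h : x ∈ l) (t : ℝ) : x + t • l.dir ∈ l := by
  rw [← point_eq_of_mem h, point_add_smul_dir]
  exact point_mem _ _

lemma exists_eq_add_smul_dir (hx : x ∈ l) (hy : y ∈ l) : ∃ t : ℝ, y = x + t • l.dir :=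
  ⟨y 2 - x 2, by
    rw [← point_eq_of_mem hx, point_add_smul_dir, ← point_eq_of_mem hy]; simp [point]⟩

lemma height_injOn (l : Line) : Set.InjOn (fun x : Space ↦ x 2) {x | x ∈ l} :=
  fun x hx y hy hxy ↦ by
    rw [← point_eq_of_mem hx, ← point_eq_of_mem hy]
    exact congrArg l.point hxy

lemma eq_of_two_points (hxl : x ∈ l) (hyl : y ∈ l) (hxm : x ∈ m) (hym : y ∈ m) (hxy : x ≠ y) :
    l = m := by
  have hz : x 2 - y 2 ≠ 0 := sub_ne_zero.mpr fun h ↦ hxy (l.height_injOn hxl hyl h)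
  have hl0 := apply_zero_of_mem hxl
  have hl1 := apply_one_of_mem hxl
  have hm0 := apply_zero_of_mem hxm
  have hm1 := apply_one_of_mem hxm
  have hc : l.c = m.c := mul_left_cancel₀ hz (by
    linarith [apply_zero_of_mem hyl, apply_zero_of_mem hym])
  have hd : l.d = m.d := mul_left_cancel₀ hz (by
    linarith [apply_one_of_mem hyl, apply_one_of_mem hym])
  rw [hc] at hl0
  rw [hd] at hl1
  exact Line.ext (by linarith) (by linarith) hc hd

lemma coplanar_of_mem (hl : x ∈ l) (hm : x ∈ m) : Coplanar l m := by
  have hac : l.a - m.a = -x 2 * (l.c - m.c) := by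
    linarith [apply_zero_of_mem hl, apply_zero_of_mem hm]
  have hbd : l.b - m.b = -x 2 * (l.d - m.d) := by
    linarith [apply_one_of_mem hl, apply_one_of_mem hm]
  rw [Coplanar, hac, hbd]
  ring

lemma Coplanar.symm (h : Coplanar l m) : Coplanar m l := by
  unfold Coplanar at *
  linarith

end Line

/-- The polynomial `f` vanishes on the line `l`, which is then contained in its zero set. -/
def VanishesOn (f : SpacePoly) (l : Line) : Prop := ∀ t, eval (l.point t) f = 0

section VanishesOn

variable {f g : SpacePoly} {l : Line} {x : Space}

lemma vanishesOn_iff_forall_smul_dir (hx : x ∈ l) :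
    VanishesOn f l ↔ ∀ t : ℝ, eval (x + t • l.dir) f = 0 := by
  rw [← Line.point_eq_of_mem hx]
  simp only [Line.point_add_smul_dir]
  exact (Equiv.addLeft (x 2)).forall_congr_right.symm

lemma vanishesOn_iff_restrictLine_eq_zero (hx : x ∈ l) :
    VanishesOn f l ↔ restrictLine x l.dir f = 0 := by
  rw [vanishesOn_iff_forall_smul_dir hx]
  exact ⟨fun h ↦ Polynomial.funext fun t ↦ by rw [eval_restrictLine, h, Polynomial.eval_zero],
    fun h t ↦ by rw [← eval_restrictLine, h, Polynomial.eval_zero]⟩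

lemma VanishesOn.eval_eq_zero (h : VanishesOn f l) (hx : x ∈ l) : eval x f = 0 :=
  Line.point_eq_of_mem hx ▸ h _

lemma vanishesOn_mul : VanishesOn (f * g) l ↔ VanishesOn f l ∨ VanishesOn g l := by
  simp only [vanishesOn_iff_restrictLine_eq_zero (l.point_mem 0), map_mul, mul_eq_zero]

lemma VanishesOn.of_pow {k : ℕ} (h : VanishesOn (f ^ k) l) : VanishesOn f l := fun t ↦
  eq_zero_of_pow_eq_zero (by simpa using h t)

lemma not_vanishesOn_of_isUnit (hf : IsUnit f) (l : Line) : ¬ VanishesOn f l := fun h ↦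
  (hf.map (eval (l.point 0))).ne_zero (h 0)

lemma VanishesOn.dirDeriv_dir (h : VanishesOn f l) : VanishesOn (dirDeriv l.dir f) l := by
  have hl := l.point_mem 0
  rw [vanishesOn_iff_restrictLine_eq_zero hl] at h ⊢
  rw [← derivative_restrictLine, h, Polynomial.derivative_zero]

lemma vanishesOn_of_totalDegree_lt_card (T : Finset Space) (hT : ∀ x ∈ T, x ∈ l)
    (hzero : ∀ x ∈ T, eval x f = 0) (hcard : f.totalDegree < T.card) : VanishesOn f l := by
  have heval (t : ℝ) : (restrictLine (l.point 0) l.dir f).eval t = eval (l.point t) f := by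
    rw [eval_restrictLine, Line.point_add_smul_dir, zero_add]
  rw [vanishesOn_iff_restrictLine_eq_zero (l.point_mem 0)]
  refine Polynomial.eq_zero_of_natDegree_lt_card_of_eval_eq_zero' _ (T.image (· 2)) ?_ ?_
  · rw [Finset.forall_mem_image]
    intro x hx
    rw [heval, Line.point_eq_of_mem (hT x hx), hzero x hx]
  · rw [Finset.card_image_of_injOn (l.height_injOn.mono hT)]
    exact (natDegree_restrictLine_le _ _ f).trans_lt hcard

end VanishesOn

end GuthKatz

namespace GuthKatz

/-! ### Mod 2 chains and barycentric subdivision -/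

/-- Mod 2 chains of ordered simplices with vertices in `E`. A list with `k + 1` entries is a
`k`-simplex; the empty list is the augmentation simplex. -/
abbrev Chain (E : Type*) : Type _ := List E →₀ ZMod 2

namespace Chain

variable {E F M : Type*} [AddCommGroup M] [Module (ZMod 2) M]

/-- The chain consisting of the single simplex `l`. -/
def simplex (l : List E) : Chain E := Finsupp.single l 1

/-- The linear extension to chains of a function defined on simplices. -/
def lift (f : List E → M) : Chain E →ₗ[ZMod 2] M := Finsupp.linearCombination (ZMod 2) f

@[simp]
lemma lift_simplex (f : List E → M) (l : List E) : lift f (simplex l) = f l := by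
  simp [lift, simplex]

lemma hom_ext {A B : Chain E →ₗ[ZMod 2] M} (h : ∀ l, A (simplex l) = B (simplex l)) : A = B :=
  Finsupp.lhom_ext' fun l ↦ LinearMap.ext_ring (h l)

/-- The cone with apex `b` over a chain. -/
def cone (b : E) : Chain E →ₗ[ZMod 2] Chain E := lift fun l ↦ simplex (b :: l)

/-- The image of a chain under a map of the vertices. -/
def map (f : E → F) : Chain E →ₗ[ZMod 2] Chain F := lift fun l ↦ simplex (l.map f)

/-- The boundary of a simplex, the sum of its facets. -/
def simplexBoundary : List E → Chain E
  | [] => 0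
  | v :: l => simplex l + cone v (simplexBoundary l)

/-- The boundary operator of the augmented chain complex. -/
def boundary : Chain E →ₗ[ZMod 2] Chain E := lift simplexBoundary

/-- Subdivision of chains of simplices with `k` vertices: the subdivision of a simplex `l` is the
cone with apex `b l` over its subdivided boundary. -/
def subdivide (b : List E → E) : ℕ → (Chain E →ₗ[ZMod 2] Chain E)
  | 0 => LinearMap.id
  | k + 1 => lift fun l ↦ cone (b l) (subdivide b k (boundary (simplex l)))

@[simp]
lemma cone_simplex (b : E) (l : List E) : cone b (simplex l) = simplex (b :: l) :=
  lift_simplex _ _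

@[simp]
lemma map_simplex (f : E → F) (l : List E) : map f (simplex l) = simplex (l.map f) :=
  lift_simplex _ _

@[simp]
lemma boundary_simplex_nil : boundary (simplex ([] : List E)) = 0 := lift_simplex _ _

lemma boundary_simplex_cons (v : E) (l : List E) :
    boundary (simplex (v :: l)) = simplex l + cone v (boundary (simplex l)) := by
  simp [boundary, simplexBoundary]

lemma subdivide_succ_simplex (b : List E → E) (k : ℕ) (l : List E) :
    subdivide b (k + 1) (simplex l) = cone (b l) (subdivide b k (boundary (simplex l))) :=
  lift_simplex _ _

lemma boundary_cone (b : E) (c : Chain E) : boundary (cone b c) = c + cone b (boundary c) := by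
  have h : boundary ∘ₗ cone b = LinearMap.id + cone b ∘ₗ boundary :=
    hom_ext fun l ↦ by simp [boundary_simplex_cons]
  exact LinearMap.congr_fun h c

lemma boundary_boundary (c : Chain E) : boundary (boundary c) = 0 := by
  have h : (boundary ∘ₗ boundary : Chain E →ₗ[ZMod 2] Chain E) = 0 := hom_ext fun l ↦ by
    simp only [LinearMap.comp_apply, LinearMap.zero_apply]
    induction l with
    | nil => simp
    | cons v l ih =>
      rw [boundary_simplex_cons, map_add, boundary_cone, ih, map_zero, add_zero,
        ZModModule.add_self]
  exact LinearMap.congr_fun h c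

lemma boundary_subdivide (b : List E → E) (k : ℕ) (c : Chain E) :
    boundary (subdivide b (k + 1) c) = subdivide b k (boundary c) := by
  have h : boundary ∘ₗ subdivide b (k + 1) = subdivide b k ∘ₗ boundary := by
    induction k with
    | zero =>
      exact hom_ext fun l ↦ by
        simp [subdivide, boundary_cone, boundary_boundary]
    | succ k ih =>
      refine hom_ext fun l ↦ ?_
      have hcycle := LinearMap.congr_fun ih (boundary (simplex l))
      simp only [LinearMap.comp_apply, boundary_boundary, map_zero] at hcycle
      simp only [LinearMap.comp_apply]
      rw [subdivide_succ_simplex, boundary_cone, hcycle, map_zero, add_zero]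
  exact LinearMap.congr_fun h c

lemma boundary_subdivide_iterate (b : List E → E) (k r : ℕ) (c : Chain E) :
    boundary ((subdivide b (k + 1))^[r] c) = (subdivide b k)^[r] (boundary c) :=
  (Function.Semiconj.iterate_right (boundary_subdivide b k) r) c

lemma map_cone (f : E → F) (b : E) (c : Chain E) : map f (cone b c) = cone (f b) (map f c) := by
  have h : map f ∘ₗ cone b = cone (f b) ∘ₗ map f := hom_ext fun l ↦ by simp
  exact LinearMap.congr_fun h c

lemma boundary_map (f : E → F) (c : Chain E) : boundary (map f c) = map f (boundary c) := by
  have h : boundary ∘ₗ map f = map f ∘ₗ boundary := hom_ext fun l ↦ by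
    simp only [LinearMap.comp_apply]
    induction l with
    | nil => simp
    | cons v l ih =>
      rw [boundary_simplex_cons, map_add, map_cone, ← ih]
      simp [boundary_simplex_cons]
  exact LinearMap.congr_fun h c

lemma map_subdivide {f : E → F} {b : List E → E} {b' : List F → F}
    (hb : ∀ l, b' (l.map f) = f (b l)) (k : ℕ) (c : Chain E) :
    map f (subdivide b k c) = subdivide b' k (map f c) := by
  have h : map f ∘ₗ subdivide b k = subdivide b' k ∘ₗ map f := by
    induction k with
    | zero => rfl
    | succ k ih =>
      refine hom_ext fun l ↦ ?_
      have hfacets := LinearMap.congr_fun ih (boundary (simplex l))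
      simp only [LinearMap.comp_apply] at hfacets ⊢
      rw [map_simplex, subdivide_succ_simplex, subdivide_succ_simplex, map_cone, hfacets, hb,
        ← map_simplex, boundary_map]
  exact LinearMap.congr_fun h c

lemma map_subdivide_iterate {f : E → F} {b : List E → E} {b' : List F → F}
    (hb : ∀ l, b' (l.map f) = f (b l)) (k r : ℕ) (c : Chain E) :
    map f ((subdivide b k)^[r] c) = (subdivide b' k)^[r] (map f c) :=
  (Function.Semiconj.iterate_right (map_subdivide hb k) r) c

/-- The chains all of whose simplices satisfy `P`. -/
def supportedOn (P : List E → Prop) : Submodule (ZMod 2) (Chain E) :=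
  Finsupp.supported (ZMod 2) (ZMod 2) {l | P l}

section supportedOn

variable {P Q : List E → Prop} {c : Chain E}

lemma simplex_mem_supportedOn {l : List E} (h : P l) : simplex l ∈ supportedOn P :=
  Finsupp.single_mem_supported _ _ h

lemma supportedOn_mono (h : ∀ l, P l → Q l) (hc : c ∈ supportedOn P) : c ∈ supportedOn Q :=
  Finsupp.supported_mono (fun l hl ↦ h l hl) hc

lemma apply_mem_of_mem_supportedOn {A : Chain E →ₗ[ZMod 2] M} {N : Submodule (ZMod 2) M}
    (h : ∀ l, P l → A (simplex l) ∈ N) (hc : c ∈ supportedOn P) : A c ∈ N := by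
  have hle : supportedOn P ≤ N.comap A := by
    rw [supportedOn, Finsupp.supported_eq_span_single, Submodule.span_le]
    rintro _ ⟨l, hl, rfl⟩
    exact h l hl
  exact hle hc

lemma eq_of_mem_supportedOn {A B : Chain E →ₗ[ZMod 2] M}
    (h : ∀ l, P l → A (simplex l) = B (simplex l)) (hc : c ∈ supportedOn P) : A c = B c := by
  have hmem := apply_mem_of_mem_supportedOn (A := A - B) (N := ⊥)
    (fun l hl ↦ by simp [h l hl]) hc
  simpa [sub_eq_zero] using hmem

lemma cone_mem_supportedOn (b : E) (h : ∀ l, P l → Q (b :: l)) (hc : c ∈ supportedOn P) :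
    cone b c ∈ supportedOn Q :=
  apply_mem_of_mem_supportedOn
    (fun l hl ↦ by rw [cone_simplex]; exact simplex_mem_supportedOn (h l hl)) hc

lemma map_mem_supportedOn {Q : List F → Prop} (f : E → F) (h : ∀ l, P l → Q (l.map f))
    (hc : c ∈ supportedOn P) : map f c ∈ supportedOn Q :=
  apply_mem_of_mem_supportedOn
    (fun l hl ↦ by rw [map_simplex]; exact simplex_mem_supportedOn (h l hl)) hc

lemma boundary_simplex_mem_supportedOn (l : List E) :
    boundary (simplex l) ∈ supportedOn fun m ↦ m.length + 1 = l.length ∧ m ⊆ l := by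
  induction l with
  | nil => simp
  | cons v l ih =>
    rw [boundary_simplex_cons]
    refine Submodule.add_mem _ (simplex_mem_supportedOn (by simp)) ?_
    refine cone_mem_supportedOn v (fun m hm ↦ ⟨by simp [hm.1], ?_⟩) ih
    exact List.cons_subset_cons v hm.2

end supportedOn

/-! ### Cup products of coboundaries -/

/-- The cup product `δu_{k-1} ⌣ ⋯ ⌣ δu_0` of the coboundaries of the `0`-cochains `u i`,
on `k`-simplices. -/
def cupList (u : ℕ → E → ZMod 2) : ℕ → List E → ZMod 2
  | 0, _ => 1
  | k + 1, v :: v' :: l => (u k v + u k v') * cupList u k (v' :: l)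
  | _ + 1, _ => 0

/-- The value of a `0`-cochain at the first vertex of a simplex. -/
def headValue (w : E → ZMod 2) : List E → ZMod 2
  | [] => 0
  | v :: _ => w v

/-- The cochain `δu_{k-1} ⌣ ⋯ ⌣ δu_0`. -/
def cup (u : ℕ → E → ZMod 2) (k : ℕ) : Chain E →ₗ[ZMod 2] ZMod 2 := lift (cupList u k)

/-- The cochain `u_k ⌣ δu_{k-1} ⌣ ⋯ ⌣ δu_0`, whose coboundary is `cup u (k + 1)`. -/
def cupPrimitive (u : ℕ → E → ZMod 2) (k : ℕ) : Chain E →ₗ[ZMod 2] ZMod 2 :=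
  lift fun l ↦ headValue (u k) l * cupList u k l

variable (u : ℕ → E → ZMod 2) (k : ℕ)

lemma cupPrimitive_cone (v : E) (c : Chain E) :
    cupPrimitive u k (cone v c) = u k v * cup u k (cone v c) := by
  have h : cupPrimitive u k ∘ₗ cone v = u k v • (cup u k ∘ₗ cone v) :=
    hom_ext fun l ↦ by simp [cupPrimitive, cup, headValue]
  exact LinearMap.congr_fun h c

lemma cup_succ_simplex_of_cup_boundary_eq_zero {l : List E} (hl : l.length = k + 2)
    (hcocycle : cup u k (boundary (simplex l)) = 0) :
    cup u (k + 1) (simplex l) = cupPrimitive u k (boundary (simplex l)) := by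
  match l, hl with
  | v :: v' :: l, _ =>
    rw [boundary_simplex_cons, map_add] at hcocycle ⊢
    have hcone : cup u k (cone v (boundary (simplex (v' :: l)))) = cup u k (simplex (v' :: l)) :=
      add_left_cancel (hcocycle.trans (ZModModule.add_self _).symm)
    rw [cupPrimitive_cone, hcone]
    simp only [cup, cupPrimitive, lift_simplex, cupList, headValue]
    ring

lemma cup_boundary_simplex {l : List E} (hl : l.length = k + 2) :
    cup u k (boundary (simplex l)) = 0 := by
  induction k generalizing l with
  | zero =>
    match l, hl with
    | [v, v'], _ =>
      simp only [boundary_simplex_cons, boundary_simplex_nil, map_add, map_zero, add_zero, cup,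
        cone_simplex, lift_simplex, cupList]
      exact ZModModule.add_self _
  | succ k ih =>
    have hfacets : boundary (simplex l) ∈ supportedOn fun m ↦ m.length = k + 2 :=
      supportedOn_mono (fun m hm ↦ by omega) (boundary_simplex_mem_supportedOn l)
    rw [eq_of_mem_supportedOn (B := cupPrimitive u k ∘ₗ boundary)
      (fun m hm ↦ cup_succ_simplex_of_cup_boundary_eq_zero u k hm (ih hm)) hfacets,
      LinearMap.comp_apply, boundary_boundary, map_zero]

lemma cup_succ_eq_cupPrimitive_boundary {c : Chain E}
    (hc : c ∈ supportedOn fun l ↦ l.length = k + 2) :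
    cup u (k + 1) c = cupPrimitive u k (boundary c) :=
  eq_of_mem_supportedOn (B := cupPrimitive u k ∘ₗ boundary)
    (fun _ hl ↦ cup_succ_simplex_of_cup_boundary_eq_zero u k hl (cup_boundary_simplex u k hl)) hc

section Antipodal

variable {u} {f : E → E} {S : Set E} (hu : ∀ k, ∀ v ∈ S, u k v + u k (f v) = 1)
include hu

lemma cupList_map_of_antipodal (l : List E) (hl : ∀ v ∈ l, v ∈ S) :
    cupList u k (l.map f) = cupList u k l := by
  induction k generalizing l with
  | zero => rfl
  | succ k ih =>
    match l, hl with
    | [], _ => rfl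
    | [v], _ => rfl
    | v :: v' :: l, hl =>
      have htail := ih (v' :: l) fun x hx ↦ hl x (List.mem_cons_of_mem _ hx)
      have hsum : u k (f v) + u k (f v') = u k v + u k v' := by
        rw [eq_sub_of_add_eq' (hu k v (hl v (by simp))),
          eq_sub_of_add_eq' (hu k v' (hl v' (by simp)))]
        ring_nf
        simp [show (2 : ZMod 2) = 0 from rfl, ZModModule.neg_eq_self, sub_eq_add_neg]
      simp only [List.map_cons] at htail ⊢
      simp only [cupList, htail, hsum]

lemma cupPrimitive_add_map_of_antipodal {c : Chain E}
    (hc : c ∈ supportedOn fun l ↦ l ≠ [] ∧ ∀ v ∈ l, v ∈ S) :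
    cupPrimitive u k (c + map f c) = cup u k c := by
  rw [map_add]
  refine eq_of_mem_supportedOn (A := cupPrimitive u k + cupPrimitive u k ∘ₗ map f) ?_ hc
  rintro l ⟨hne, hl⟩
  simp only [LinearMap.add_apply, LinearMap.comp_apply, map_simplex, cupPrimitive, cup,
    lift_simplex]
  rw [cupList_map_of_antipodal k hu l hl, ← add_mul]
  match l, hne with
  | v :: l, _ => simp [headValue, hu k v (hl v (by simp))]

end Antipodal

lemma cupList_eq_zero_of_const {i : ℕ} {a : ZMod 2} (hik : i < k) (l : List E)
    (hl : ∀ v ∈ l, u i v = a) : cupList u k l = 0 := by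
  induction k generalizing l with
  | zero => omega
  | succ k ih =>
    match l, hl with
    | [], _ => rfl
    | [v], _ => rfl
    | v :: v' :: l, hl =>
      rw [cupList]
      rcases Nat.lt_succ_iff_lt_or_eq.mp hik with h | rfl
      · rw [ih h (v' :: l) fun x hx ↦ hl x (List.mem_cons_of_mem _ hx), mul_zero]
      · rw [hl v (by simp), hl v' (by simp), ZModModule.add_self, zero_mul]

end Chain

/-! ### Barycentric subdivision shrinks simplices -/

section IsSmallIn

variable {E : Type*} [PseudoMetricSpace E]

/-- The simplex `l` has `k` vertices, all in `Q`, and diameter at most `D`. -/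
def IsSmallIn (Q : Set E) (k : ℕ) (D : ℝ) (l : List E) : Prop :=
  l.length = k ∧ (∀ x ∈ l, x ∈ Q) ∧ ∀ x ∈ l, ∀ y ∈ l, dist x y ≤ D

lemma IsSmallIn.cons_of_subset_closedBall {Q : Set E} {k : ℕ} {D : ℝ} {l : List E} {b : E}
    (h : IsSmallIn (Q ∩ Metric.closedBall b D) k D l) (hb : b ∈ Q) (hD : 0 ≤ D) :
    IsSmallIn Q (k + 1) D (b :: l) := by
  obtain ⟨hlen, hmem, hdiam⟩ := h
  refine ⟨by simp [hlen], ?_, ?_⟩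
  · exact List.forall_mem_cons.mpr ⟨hb, fun x hx ↦ (hmem x hx).1⟩
  · intro x hx y hy
    rcases List.mem_cons.mp hx with rfl | hxl <;> rcases List.mem_cons.mp hy with hyb | hyl
    · simpa [hyb] using hD
    · exact (dist_comm _ _).trans_le (hmem y hyl).2
    · exact hyb ▸ (hmem x hxl).2
    · exact hdiam x hxl y hyl

end IsSmallIn

section Barycenter

variable {E : Type*} [NormedAddCommGroup E] [NormedSpace ℝ E]

/-- The barycenter of a simplex; the barycenter of the empty list is `0`. -/
def barycenter (l : List E) : E := (l.length : ℝ)⁻¹ • l.sum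

lemma barycenter_map_neg (l : List E) : barycenter (l.map (-·)) = -barycenter l := by
  have hsum : (l.map (-·)).sum = -l.sum := (List.sum_neg l).symm
  rw [barycenter, barycenter, hsum, List.length_map, smul_neg]

lemma barycenter_mem {Q : Set E} (hQ : Convex ℝ Q) {l : List E} (hne : l ≠ [])
    (hl : ∀ x ∈ l, x ∈ Q) : barycenter l ∈ Q := by
  rw [barycenter, ← Fin.sum_univ_getElem, Finset.smul_sum]
  refine hQ.sum_mem (fun i _ ↦ by positivity) ?_ fun i _ ↦ hl _ (List.getElem_mem i.isLt)
  simp [hne]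

lemma dist_barycenter_le {l : List E} {D : ℝ} (hD : ∀ x ∈ l, ∀ y ∈ l, dist x y ≤ D) {x : E}
    (hx : x ∈ l) : dist x (barycenter l) ≤ (1 - 1 / (l.length : ℝ)) * D := by
  have hpos : 0 < l.length := List.length_pos_of_mem hx
  have hlen : (0 : ℝ) < l.length := by exact_mod_cast hpos
  have hsub : barycenter l - x = (l.length : ℝ)⁻¹ • ∑ i : Fin l.length, (l[i] - x) := by
    rw [barycenter, Finset.sum_sub_distrib, smul_sub]
    simp only [Fin.getElem_fin, Fin.sum_univ_getElem, Finset.sum_const, Finset.card_univ,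
      Fintype.card_fin]
    rw [← Nat.cast_smul_eq_nsmul ℝ, smul_smul, inv_mul_cancel₀ hlen.ne', one_smul]
  obtain ⟨j, hj⟩ := List.get_of_mem hx
  have hnorm : ‖∑ i : Fin l.length, (l[i] - x)‖ ≤ (l.length - 1) * D := by
    have hjx : l[j] - x = 0 := sub_eq_zero.mpr hj
    rw [← Finset.sum_erase_add _ _ (Finset.mem_univ j), hjx, add_zero]
    refine (norm_sum_le_of_le _ (n := fun _ ↦ D) fun i _ ↦ ?_).trans ?_
    · rw [← dist_eq_norm]
      exact hD _ (List.getElem_mem i.isLt) _ hx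
    · simp [Finset.card_erase_of_mem, Nat.cast_pred hpos]
  rw [dist_comm, dist_eq_norm, hsub, norm_smul, Real.norm_of_nonneg (by positivity)]
  calc (l.length : ℝ)⁻¹ * ‖∑ i : Fin l.length, (l[i] - x)‖
      ≤ (l.length : ℝ)⁻¹ * ((l.length - 1) * D) := by gcongr
    _ = (1 - 1 / (l.length : ℝ)) * D := by field_simp

lemma one_sub_one_div_mul_mono {D : ℝ} (hD : 0 ≤ D) {m k : ℕ} (hm : 0 < m) (hmk : m ≤ k) :
    (1 - 1 / (m : ℝ)) * D ≤ (1 - 1 / (k : ℝ)) * D := by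
  gcongr

lemma subdivide_barycenter_mem_supportedOn {Q : Set E} (hQ : Convex ℝ Q) (k : ℕ) (D : ℝ)
    (l : List E) (hl : IsSmallIn Q k D l) :
    Chain.subdivide barycenter k (Chain.simplex l) ∈
      Chain.supportedOn (IsSmallIn Q k ((1 - 1 / (k : ℝ)) * D)) := by
  induction k generalizing l Q with
  | zero =>
    obtain rfl : l = [] := List.length_eq_zero_iff.mp hl.1
    exact Chain.simplex_mem_supportedOn (by simp [IsSmallIn])
  | succ k ih =>
    obtain ⟨hlen, hmem, hdiam⟩ := hl
    have hne : l ≠ [] := List.ne_nil_of_length_eq_add_one hlen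
    have hD : 0 ≤ D := dist_nonneg.trans
      (hdiam _ (List.head_mem hne) _ (List.head_mem hne))
    set D' := (1 - 1 / ((k + 1 : ℕ) : ℝ)) * D with hD'
    have hD'0 : 0 ≤ D' := by
      simpa [hD'] using one_sub_one_div_mul_mono hD one_pos (by omega : 1 ≤ k + 1)
    have hball : ∀ x ∈ l, x ∈ Q ∩ Metric.closedBall (barycenter l) D' := fun x hx ↦
      ⟨hmem x hx, by rw [hD', ← hlen]; exact dist_barycenter_le hdiam hx⟩
    rw [Chain.subdivide_succ_simplex]
    refine Chain.cone_mem_supportedOn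
      (P := IsSmallIn (Q ∩ Metric.closedBall (barycenter l) D') k D') _
      (fun m hm ↦ hm.cons_of_subset_closedBall (barycenter_mem hQ hne hmem) hD'0) ?_
    refine Chain.apply_mem_of_mem_supportedOn ?_ (Chain.boundary_simplex_mem_supportedOn l)
    rintro m ⟨hmlen, hml⟩
    refine Chain.supportedOn_mono ?_ (ih (hQ.inter (convex_closedBall _ _)) m
      ⟨by omega, fun x hx ↦ hball x (hml hx), fun x hx y hy ↦ hdiam x (hml hx) y (hml hy)⟩)
    rintro m' ⟨hlen', hmem', hdiam'⟩
    refine ⟨hlen', hmem', fun x hx y hy ↦ (hdiam' x hx y hy).trans ?_⟩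
    exact one_sub_one_div_mul_mono hD (hlen' ▸ List.length_pos_of_mem hx) k.le_succ

lemma subdivide_barycenter_iterate_mem_supportedOn {𝓕 : Set (Set E)}
    (h𝓕 : ∀ Q ∈ 𝓕, Convex ℝ Q) {k : ℕ} {D : ℝ} {c : Chain E}
    (hc : c ∈ Chain.supportedOn fun l ↦ ∃ Q ∈ 𝓕, IsSmallIn Q k D l) (r : ℕ) :
    (Chain.subdivide barycenter k)^[r] c ∈
      Chain.supportedOn fun l ↦ ∃ Q ∈ 𝓕, IsSmallIn Q k ((1 - 1 / (k : ℝ)) ^ r * D) l := by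
  induction r with
  | zero => simpa using hc
  | succ r ih =>
    rw [Function.iterate_succ_apply']
    refine Chain.apply_mem_of_mem_supportedOn ?_ ih
    rintro l ⟨Q, hQ, hl⟩
    refine Chain.supportedOn_mono (fun m hm ↦ ⟨Q, hQ, ?_⟩)
      (subdivide_barycenter_mem_supportedOn (h𝓕 Q hQ) k _ l hl)
    rwa [pow_succ', mul_assoc]

end Barycenter

end GuthKatz

namespace GuthKatz

/-! ### The Borsuk–Ulam theorem -/

section CrossPolytope

variable {ι : Type*} [Fintype ι]

variable (ι) in
/-- The unit sphere of the `ℓ¹` norm, which is the boundary of the cross-polytope. -/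
def l1Sphere : Set (ι → ℝ) := {v | ∑ i, |v i| = 1}

/-- The facet of the cross-polytope in the orthant with sign vector `s`. -/
def crossPolytopeFacet (s : ι → ℤˣ) : Set (ι → ℝ) :=
  {v | (∀ i, 0 ≤ (s i : ℝ) * v i) ∧ ∑ i, (s i : ℝ) * v i = 1}

lemma abs_apply_le_one_of_mem_l1Sphere {v : ι → ℝ} (hv : v ∈ l1Sphere ι) (i : ι) : |v i| ≤ 1 :=
  (Finset.single_le_sum (f := fun i ↦ |v i|) (fun _ _ ↦ abs_nonneg _) (Finset.mem_univ i)).trans_eq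
    hv

lemma isCompact_l1Sphere : IsCompact (l1Sphere ι) := by
  refine Metric.isCompact_of_isClosed_isBounded (isClosed_eq (by fun_prop) continuous_const)
    ((Metric.isBounded_closedBall (x := 0) (r := 1)).subset fun v hv ↦ ?_)
  rw [mem_closedBall_zero_iff, pi_norm_le_iff_of_nonneg zero_le_one]
  exact abs_apply_le_one_of_mem_l1Sphere hv

lemma ne_zero_of_mem_l1Sphere {v : ι → ℝ} (hv : v ∈ l1Sphere ι) : v ≠ 0 := by
  rintro rfl
  simp [l1Sphere] at hv

lemma dist_le_two_of_mem_l1Sphere {v w : ι → ℝ} (hv : v ∈ l1Sphere ι) (hw : w ∈ l1Sphere ι) :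
    dist v w ≤ 2 := by
  refine (dist_pi_le_iff zero_le_two).mpr fun i ↦ (abs_sub _ _).trans ?_
  linarith [abs_apply_le_one_of_mem_l1Sphere hv i, abs_apply_le_one_of_mem_l1Sphere hw i]

lemma crossPolytopeFacet_subset_l1Sphere (s : ι → ℤˣ) : crossPolytopeFacet s ⊆ l1Sphere ι := by
  rintro v ⟨hnonneg, hsum⟩
  rw [l1Sphere, Set.mem_ofPred_eq, ← hsum]
  refine Finset.sum_congr rfl fun i _ ↦ ?_
  rw [← abs_of_nonneg (hnonneg i), abs_mul]
  rcases Int.units_eq_one_or (s i) with h | h <;> simp [h]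

lemma convex_crossPolytopeFacet (s : ι → ℤˣ) : Convex ℝ (crossPolytopeFacet s) := by
  intro x hx y hy a b ha hb hab
  have hcomb (i : ι) : (s i : ℝ) * (a • x + b • y) i = a * (s i * x i) + b * (s i * y i) := by
    simp only [Pi.add_apply, Pi.smul_apply, smul_eq_mul]
    ring
  refine ⟨fun i ↦ ?_, ?_⟩
  · rw [hcomb]
    exact add_nonneg (mul_nonneg ha (hx.1 i)) (mul_nonneg hb (hy.1 i))
  · simp_rw [hcomb, Finset.sum_add_distrib, ← Finset.mul_sum, hx.2, hy.2, mul_one, hab]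

lemma neg_mem_crossPolytopeFacet_neg {s : ι → ℤˣ} {v : ι → ℝ} (hv : v ∈ crossPolytopeFacet s) :
    -v ∈ crossPolytopeFacet (-s) := by
  simpa [crossPolytopeFacet] using hv

variable [DecidableEq ι]

lemma mem_crossPolytopeFacet_update {s : ι → ℤˣ} {v : ι → ℝ} (hv : v ∈ crossPolytopeFacet s)
    {i : ι} (hi : v i = 0) (a : ℤˣ) : v ∈ crossPolytopeFacet (Function.update s i a) := by
  have hcoord (j : ι) : (Function.update s i a j : ℝ) * v j = s j * v j := by
    rcases eq_or_ne j i with rfl | hj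
    · simp [hi]
    · rw [Function.update_of_ne hj]
  simpa only [crossPolytopeFacet, Set.mem_ofPred_eq, hcoord] using hv

lemma single_mem_crossPolytopeFacet {s : ι → ℤˣ} {i : ι} (hi : s i = 1) :
    Pi.single i 1 ∈ crossPolytopeFacet s := by
  refine ⟨fun j ↦ ?_, ?_⟩
  · rcases eq_or_ne j i with rfl | hj <;> simp [*]
  · rw [Finset.sum_eq_single i] <;> simp +contextual [hi]

end CrossPolytope

section Hemisphere

variable {n : ℕ}

open Chain

variable (n) in
/-- The triangulated `k`-dimensional hemisphere of the boundary of the cross-polytope: the cone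
from the vertex `e_k` over the equator, which consists of the `(k - 1)`-dimensional hemisphere and
its antipode. Meaningful for `k ≤ n`, since `Fin.ofNat` wraps around. -/
def hemisphere : ℕ → Chain (Fin (n + 1) → ℝ)
  | 0 => simplex [Pi.single 0 1]
  | k + 1 => cone (Pi.single (Fin.ofNat (n + 1) (k + 1)) 1)
      (hemisphere k + map (-·) (hemisphere k))

lemma map_neg_map_neg {E : Type*} [InvolutiveNeg E] (c : Chain E) :
    map (-·) (map (-·) c) = c := by
  have h : map (-·) ∘ₗ map (-· : E → E) = LinearMap.id :=
    hom_ext fun l ↦ by simp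
  exact LinearMap.congr_fun h c

lemma boundary_hemisphere_succ (k : ℕ) :
    boundary (hemisphere n (k + 1)) = hemisphere n k + map (-·) (hemisphere n k) := by
  have hcycle : boundary (hemisphere n k + map (-·) (hemisphere n k)) = 0 := by
    induction k with
    | zero => simp [hemisphere, boundary_simplex_cons, ZModModule.add_self]
    | succ k ih =>
      have hbd : boundary (hemisphere n (k + 1)) = hemisphere n k + map (-·) (hemisphere n k) := by
        rw [hemisphere, boundary_cone, ih, map_zero, add_zero]
      rw [map_add, boundary_map, hbd, map_add, map_neg_map_neg, add_comm (map _ _),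
        ZModModule.add_self]
  rw [hemisphere, boundary_cone, hcycle, map_zero, add_zero]

/-- The simplex `l` has `k + 1` vertices, which lie on a common facet of the cross-polytope and in
the span of the first `k + 1` coordinate vectors. -/
def IsFlagSimplex (k : ℕ) (l : List (Fin (n + 1) → ℝ)) : Prop :=
  l.length = k + 1 ∧ ∃ s, ∀ v ∈ l, v ∈ crossPolytopeFacet s ∧ ∀ j : Fin (n + 1), k < j → v j = 0

lemma IsFlagSimplex.map_neg {k : ℕ} {l : List (Fin (n + 1) → ℝ)} (h : IsFlagSimplex k l) :
    IsFlagSimplex k (l.map (-·)) := by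
  obtain ⟨hlen, s, hs⟩ := h
  refine ⟨by simp [hlen], -s, List.forall_mem_map.mpr fun v hv ↦ ?_⟩
  exact ⟨neg_mem_crossPolytopeFacet_neg (hs v hv).1, fun j hj ↦ by simp [(hs v hv).2 j hj]⟩

lemma IsFlagSimplex.cons_single {k : ℕ} (hk : k < n) {l : List (Fin (n + 1) → ℝ)}
    (h : IsFlagSimplex k l) :
    IsFlagSimplex (k + 1) (Pi.single (Fin.ofNat (n + 1) (k + 1)) 1 :: l) := by
  obtain ⟨hlen, s, hs⟩ := h
  set i := Fin.ofNat (n + 1) (k + 1)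
  have hi : (i : ℕ) = k + 1 := Nat.mod_eq_of_lt (by omega)
  refine ⟨by simp [hlen], Function.update s i 1, List.forall_mem_cons.mpr ⟨?_, fun v hv ↦ ?_⟩⟩
  · exact ⟨single_mem_crossPolytopeFacet (by simp), fun j hj ↦
      Pi.single_eq_of_ne (Fin.ne_of_val_ne (by omega)) _⟩
  · have hzero := (hs v hv).2
    exact ⟨mem_crossPolytopeFacet_update (hs v hv).1 (hzero i (by omega)) 1,
      fun j hj ↦ hzero j (by omega)⟩

lemma hemisphere_mem_supportedOn_isFlagSimplex {k : ℕ} (hk : k ≤ n) :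
    hemisphere n k ∈ supportedOn (IsFlagSimplex k) := by
  induction k with
  | zero =>
    refine simplex_mem_supportedOn ⟨rfl, 1, List.forall_mem_singleton.mpr ⟨?_, fun j hj ↦ ?_⟩⟩
    · exact single_mem_crossPolytopeFacet rfl
    · exact Pi.single_eq_of_ne (Fin.ne_of_val_ne hj.ne') _
  | succ k ih =>
    have ih := ih (by omega)
    exact cone_mem_supportedOn _ (fun l hl ↦ hl.cons_single (by omega))
      (Submodule.add_mem _ ih (map_mem_supportedOn _ (fun l hl ↦ hl.map_neg) ih))

variable (n) in
/-- The `r`-fold barycentric subdivision of the `k`-dimensional hemisphere. -/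
def subdividedHemisphere (r k : ℕ) : Chain (Fin (n + 1) → ℝ) :=
  (subdivide barycenter (k + 1))^[r] (hemisphere n k)

lemma subdividedHemisphere_mem_supportedOn {k : ℕ} (hk : k ≤ n) (r : ℕ) :
    subdividedHemisphere n r k ∈
      supportedOn (IsSmallIn (l1Sphere (Fin (n + 1))) (k + 1) ((1 - 1 / (k + 1 : ℝ)) ^ r * 2)) := by
  have hsmall : hemisphere n k ∈ supportedOn fun l ↦
      ∃ Q ∈ Set.range crossPolytopeFacet, IsSmallIn Q (k + 1) 2 l := by
    refine supportedOn_mono ?_ (hemisphere_mem_supportedOn_isFlagSimplex hk)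
    rintro l ⟨hlen, s, hs⟩
    have hsphere (v) (hv : v ∈ l) := crossPolytopeFacet_subset_l1Sphere s (hs v hv).1
    exact ⟨_, ⟨s, rfl⟩, hlen, fun v hv ↦ (hs v hv).1, fun v hv w hw ↦
      dist_le_two_of_mem_l1Sphere (hsphere v hv) (hsphere w hw)⟩
  have hconvex : ∀ Q ∈ Set.range (crossPolytopeFacet (ι := Fin (n + 1))), Convex ℝ Q :=
    Set.forall_mem_range.mpr convex_crossPolytopeFacet
  refine supportedOn_mono ?_ (subdivide_barycenter_iterate_mem_supportedOn hconvex hsmall r)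
  rintro l ⟨_, ⟨s, rfl⟩, hlen, hmem, hdiam⟩
  exact ⟨hlen, fun v hv ↦ crossPolytopeFacet_subset_l1Sphere s (hmem v hv), by
    simpa using hdiam⟩

lemma boundary_subdividedHemisphere_succ (r k : ℕ) :
    boundary (subdividedHemisphere n r (k + 1)) =
      subdividedHemisphere n r k + map (-·) (subdividedHemisphere n r k) := by
  rw [subdividedHemisphere, boundary_subdivide_iterate, boundary_hemisphere_succ,
    iterate_map_add, subdividedHemisphere, map_subdivide_iterate barycenter_map_neg]

lemma subdividedHemisphere_zero (r : ℕ) :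
    subdividedHemisphere n r 0 = simplex [Pi.single 0 1] := by
  refine Function.iterate_fixed ?_ r
  simp [hemisphere, subdivide, boundary_simplex_cons, barycenter]

lemma cup_subdividedHemisphere {u : ℕ → (Fin (n + 1) → ℝ) → ZMod 2}
    (hu : ∀ k, ∀ v ∈ l1Sphere (Fin (n + 1)), u k v + u k (-v) = 1) (r : ℕ) {k : ℕ} (hk : k ≤ n) :
    cup u k (subdividedHemisphere n r k) = 1 := by
  induction k with
  | zero => simp [subdividedHemisphere_zero, cup, cupList]
  | succ k ih =>
    have hlen : subdividedHemisphere n r (k + 1) ∈ supportedOn fun l ↦ l.length = k + 2 :=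
      supportedOn_mono (fun l hl ↦ hl.1) (subdividedHemisphere_mem_supportedOn hk r)
    rw [cup_succ_eq_cupPrimitive_boundary u k hlen, boundary_subdividedHemisphere_succ,
      cupPrimitive_add_map_of_antipodal k hu, ih (by omega)]
    refine supportedOn_mono ?_ (subdividedHemisphere_mem_supportedOn (by omega) r)
    exact fun l hl ↦ ⟨List.ne_nil_of_length_eq_add_one hl.1, hl.2.1⟩

end Hemisphere

section BorsukUlam

variable {n m : ℕ}

open Classical in
/-- The label of `v` is `1` if `g v k > 0` and `0` if `g v k < 0`; the ties `g v k = 0`, as well as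
all labels with `k ≥ m`, are decided by the sign of `v` in the lexicographic order. -/
def signLabel (g : (Fin n → ℝ) → Fin m → ℝ) (k : ℕ) (v : Fin n → ℝ) : ZMod 2 :=
  if h : k < m then if 0 < g v ⟨k, h⟩ ∨ g v ⟨k, h⟩ = 0 ∧ 0 < toLex v then 1 else 0
  else if 0 < toLex v then 1 else 0

lemma signLabel_add_neg {g : (Fin n → ℝ) → Fin m → ℝ} (hg : ∀ v, g (-v) = -g v) (k : ℕ)
    {v : Fin n → ℝ} (hv : v ≠ 0) : signLabel g k v + signLabel g k (-v) = 1 := by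
  have hlex : 0 < toLex (-v) ↔ ¬ 0 < toLex v := by
    rw [toLex_neg, Left.neg_pos_iff]
    have hne : toLex v ≠ 0 := hv
    exact ⟨fun h ↦ h.not_gt, fun h ↦ (not_lt.mp h).lt_of_ne hne⟩
  rw [signLabel, signLabel]
  split_ifs with hk hpos hneg hneg hpos hneg hneg <;>
    simp only [hg, Pi.neg_apply, hlex] at * <;> grind

lemma signLabel_eq_of_abs_sub_lt {g : (Fin n → ℝ) → Fin m → ℝ} {i : Fin m} {v w : Fin n → ℝ}
    (h : |g v i - g w i| < |g w i|) : signLabel g i v = signLabel g i w := by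
  simp only [signLabel, i.isLt, dif_pos, Fin.eta]
  rcases abs_lt.mp h with ⟨hlow, hhigh⟩
  rcases lt_trichotomy (g w i) 0 with hw | hw | hw
  · rw [abs_of_neg hw] at hhigh
    rw [if_neg (by grind), if_neg (by grind)]
  · simp [hw] at h
    grind
  · rw [abs_of_pos hw] at hlow
    rw [if_pos (by grind), if_pos (by grind)]

lemma exists_forall_cupList_signLabel_eq_zero {g : (Fin n → ℝ) → Fin m → ℝ} (hc : Continuous g)
    (hg : ∀ v ∈ l1Sphere (Fin n), g v ≠ 0) :
    ∃ δ > 0, ∀ k D l, D < δ → IsSmallIn (l1Sphere (Fin n)) (k + 1) D l →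
      Chain.cupList (signLabel g) m l = 0 := by
  rcases (l1Sphere (Fin n)).eq_empty_or_nonempty with hempty | hne
  · refine ⟨1, one_pos, fun k D l _ ⟨hlen, hmem, _⟩ ↦ ?_⟩
    obtain ⟨v, _, rfl⟩ := List.exists_of_length_succ l hlen
    simpa [hempty] using hmem v
  obtain ⟨v₀, hv₀, hmin⟩ := isCompact_l1Sphere.exists_isMinOn hne hc.norm.continuousOn
  obtain ⟨δ, hδ, hclose⟩ := Metric.uniformContinuousOn_iff.mp
    (isCompact_l1Sphere.uniformContinuousOn_of_continuous hc.continuousOn) ‖g v₀‖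
    (norm_pos_iff.mpr (hg v₀ hv₀))
  refine ⟨δ, hδ, fun k D l hD ⟨hlen, hmem, hdiam⟩ ↦ ?_⟩
  obtain ⟨w, l, rfl⟩ := List.exists_of_length_succ l hlen
  have hw := hmem w (by simp)
  obtain ⟨i, hi⟩ : ∃ i, ‖g v₀‖ ≤ ‖g w i‖ := by
    by_contra! hlt
    exact ((pi_norm_lt_iff (norm_pos_iff.mpr (hg v₀ hv₀))).mpr hlt).not_ge (hmin hw)
  refine Chain.cupList_eq_zero_of_const _ _ i.isLt _ (a := signLabel g i w) fun v hv ↦ ?_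
  refine signLabel_eq_of_abs_sub_lt ?_
  calc |g v i - g w i| ≤ dist (g v) (g w) := dist_le_pi_dist (g v) (g w) i
    _ < ‖g v₀‖ := hclose v (hmem v hv) w hw ((hdiam v hv w (by simp)).trans_lt hD)
    _ ≤ |g w i| := hi

theorem borsuk_ulam {g : (Fin (n + 1) → ℝ) → Fin n → ℝ} (hc : Continuous g)
    (hg : ∀ v, g (-v) = -g v) : ∃ v ∈ l1Sphere (Fin (n + 1)), g v = 0 := by
  by_contra! hno
  obtain ⟨δ, hδ, hzero⟩ := exists_forall_cupList_signLabel_eq_zero hc hno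
  obtain ⟨r, hr⟩ := exists_pow_lt_of_lt_one (half_pos hδ)
    (sub_lt_self 1 (by positivity) : 1 - 1 / (n + 1 : ℝ) < 1)
  have hone : Chain.cup (signLabel g) n (subdividedHemisphere n r n) = 1 :=
    cup_subdividedHemisphere (u := signLabel g)
      (fun k v hv ↦ signLabel_add_neg hg k (ne_zero_of_mem_l1Sphere hv)) r le_rfl
  have hvanish : Chain.cup (signLabel g) n (subdividedHemisphere n r n) = 0 := by
    refine Chain.eq_of_mem_supportedOn (B := 0) (fun l hl ↦ ?_)
      (subdividedHemisphere_mem_supportedOn le_rfl r)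
    simpa [Chain.cup] using hzero n _ l (by linarith) hl
  exact one_ne_zero (hone.symm.trans hvanish)

end BorsukUlam

end GuthKatz

namespace GuthKatz

open MvPolynomial Filter Topology

/-! ### The ham sandwich theorem for finite sets -/

section HamSandwich

/-- The truncation of a real number to the interval `[-1, 1]`. -/
def clamp (t : ℝ) : ℝ := max (-1) (min 1 t)

lemma continuous_clamp : Continuous clamp := by
  unfold clamp
  fun_prop

lemma clamp_neg (t : ℝ) : clamp (-t) = -clamp t := by
  simp only [clamp, max_def, min_def]
  split_ifs <;> linarith

lemma clamp_of_one_le {t : ℝ} (ht : 1 ≤ t) : clamp t = 1 := by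
  rw [clamp, min_eq_left ht, max_eq_right (by norm_num)]

lemma neg_one_le_clamp (t : ℝ) : -1 ≤ clamp t := le_max_left _ _

variable {X : Type*}

lemma two_mul_card_filter_le_of_sum_clamp_eq_zero {S : Finset X} {f : X → ℝ} {P : X → Prop}
    [DecidablePred P] (hsum : ∑ x ∈ S, clamp (f x) = 0) (hP : ∀ x ∈ S.filter P, 1 ≤ f x) :
    2 * (S.filter P).card ≤ S.card := by
  have hpos : ∑ x ∈ S with P x, clamp (f x) = (S.filter P).card := by
    rw [Finset.sum_congr rfl fun x hx ↦ clamp_of_one_le (hP x hx)]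
    simp
  have hneg : -((S.filter (¬ P ·)).card : ℝ) ≤ ∑ x ∈ S with ¬ P x, clamp (f x) := by
    simpa using Finset.card_nsmul_le_sum (S.filter (¬ P ·)) (fun x ↦ clamp (f x)) (-1)
      fun x _ ↦ neg_one_le_clamp _
  rw [← Finset.sum_filter_add_sum_filter_not S P, hpos] at hsum
  have hle : (S.filter P).card ≤ (S.filter (¬ P ·)).card := by
    exact_mod_cast (by linarith : ((S.filter P).card : ℝ) ≤ (S.filter (¬ P ·)).card)
  have := Finset.card_filter_add_card_filter_not (s := S) P
  omega

lemma two_mul_card_pos_le_of_tendsto {S : Finset X} {c : ℕ → ℝ} (hc : Tendsto c atTop atTop)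
    {F : ℕ → X → ℝ} {f : X → ℝ} (hF : ∀ x, Tendsto (F · x) atTop (𝓝 (f x)))
    (hsum : ∀ m, ∑ x ∈ S, clamp (c m * F m x) = 0) : 2 * (S.filter (0 < f ·)).card ≤ S.card := by
  have hlarge : ∀ᶠ m in atTop, ∀ x ∈ S.filter (0 < f ·), 1 ≤ c m * F m x :=
    (Filter.eventually_all_finset _).mpr fun x hx ↦
      (hc.atTop_mul_pos (Finset.mem_filter.mp hx).2 (hF x)).eventually_ge_atTop 1
  obtain ⟨m, hm⟩ := hlarge.exists
  exact two_mul_card_filter_le_of_sum_clamp_eq_zero (hsum m) hm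

lemma ham_sandwich_fin {n : ℕ} (φ : X → (Fin (n + 1) → ℝ) →ₗ[ℝ] ℝ) (S : Fin n → Finset X) :
    ∃ v ≠ 0, ∀ i, 2 * ((S i).filter (0 < φ · v)).card ≤ (S i).card ∧
      2 * ((S i).filter (φ · v < 0)).card ≤ (S i).card := by
  have hφ (x : X) : Continuous (φ x) := (φ x).continuous_of_finiteDimensional
  have happrox (m : ℕ) : ∃ v ∈ l1Sphere (Fin (n + 1)),
      (fun i ↦ ∑ x ∈ S i, clamp (m * φ x v)) = 0 := by
    refine borsuk_ulam (continuous_pi fun i ↦ continuous_finsetSum _ fun x _ ↦ ?_) fun v ↦ ?_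
    · exact continuous_clamp.comp (continuous_const.mul (hφ x))
    · funext i
      simp [clamp_neg]
  choose w hw hzero using happrox
  obtain ⟨v, hv, s, hs, hlim⟩ := isCompact_l1Sphere.tendsto_subseq hw
  have hc : Tendsto (fun m ↦ (s m : ℝ)) atTop atTop :=
    tendsto_natCast_atTop_atTop.comp hs.tendsto_atTop
  have hlimφ (x : X) : Tendsto (fun m ↦ φ x (w (s m))) atTop (𝓝 (φ x v)) :=
    ((hφ x).tendsto v).comp hlim
  refine ⟨v, ne_zero_of_mem_l1Sphere hv, fun i ↦ ⟨?_, ?_⟩⟩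
  · exact two_mul_card_pos_le_of_tendsto hc hlimφ fun m ↦ congrFun (hzero (s m)) i
  · have hneg (m : ℕ) : ∑ x ∈ S i, clamp (s m * -φ x (w (s m))) = 0 := by
      simpa [clamp_neg] using congrFun (hzero (s m)) i
    simpa using two_mul_card_pos_le_of_tendsto hc (fun x ↦ (hlimφ x).neg) hneg

theorem ham_sandwich {ι V : Type*} [Fintype ι] [AddCommGroup V] [Module ℝ V] [Module.Finite ℝ V]
    (hcard : Fintype.card ι < Module.finrank ℝ V) (φ : X → V →ₗ[ℝ] ℝ) (S : ι → Finset X) :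
    ∃ v ≠ 0, ∀ i, ∀ s : SignType, s ≠ 0 →
      2 * ((S i).filter fun x ↦ SignType.sign (φ x v) = s).card ≤ (S i).card := by
  obtain ⟨b, hb⟩ := exists_linearIndependent_of_le_finrank (Nat.succ_le_of_lt hcard)
  let L := Fintype.linearCombination ℝ b
  obtain ⟨v, hv, hsides⟩ := ham_sandwich_fin (fun x ↦ φ x ∘ₗ L)
    fun i ↦ S ((Fintype.equivFin ι).symm i)
  refine ⟨L v, fun h ↦ hv (funext (Fintype.linearIndependent_iff.mp hb v h)), fun i s hs ↦ ?_⟩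
  have hi := hsides (Fintype.equivFin ι i)
  simp only [Equiv.symm_apply_apply, LinearMap.comp_apply] at hi
  cases s
  · exact absurd rfl hs
  · simpa only [SignType.neg_eq_neg_one, sign_eq_neg_one_iff] using hi.2
  · simpa only [SignType.pos_eq_one, sign_eq_one_iff] using hi.1

end HamSandwich

/-! ### Polynomial partitioning -/

section PolynomialPartitioning

/-- The signs of the polynomials `F i` at the point `x`. The cells of the partition of space given
by the `F i` are the sets where this takes a fixed value without zeros. -/
def signPattern {ι σ : Type*} (F : ι → MvPolynomial σ ℝ) (x : σ → ℝ) (i : ι) : SignType :=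
  SignType.sign (eval x (F i))

lemma card_pi_signType_ne_zero (j : ℕ) :
    Fintype.card {s : Fin j → SignType // ∀ i, s i ≠ 0} = 2 ^ j := by
  have htwo : Fintype.card {s : SignType // s ≠ 0} = 2 := by decide
  have e : {s : Fin j → SignType // ∀ i, s i ≠ 0} ≃ (Fin j → {s : SignType // s ≠ 0}) :=
    Equiv.subtypePiEquivPi (p := fun (_ : Fin j) (s : SignType) ↦ s ≠ 0)
  rw [Fintype.card_congr e, Fintype.card_pi]
  simp [htwo]

lemma two_pow_lt_finrank_restrictTotalDegree (j : ℕ) :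
    2 ^ j < Module.finrank ℝ (restrictTotalDegree (Fin 3) ℝ (3 * 2 ^ (j / 3))) := by
  have hpow : 2 ^ j ≤ 4 * (2 ^ (j / 3)) ^ 3 := by
    rw [← pow_mul, show (4 : ℕ) = 2 ^ 2 by norm_num, ← pow_add]
    exact Nat.pow_le_pow_right (by norm_num) (by omega)
  have hsix := six_mul_choose_three (3 * 2 ^ (j / 3))
  rw [finrank_restrictTotalDegree_three]
  generalize 2 ^ (j / 3) = q at *
  nlinarith [Nat.zero_le q, Nat.zero_le (q ^ 2), Nat.zero_le (q ^ 3)]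

lemma exists_bisecting_polynomials (S : Finset Space) (j : ℕ) :
    ∃ F : Fin j → SpacePoly, (∀ i, F i ≠ 0) ∧ (∀ i, (F i).totalDegree ≤ 3 * 2 ^ (i / 3 : ℕ)) ∧
      ∀ s : Fin j → SignType, (∀ i, s i ≠ 0) →
        2 ^ j * (S.filter (signPattern F · = s)).card ≤ S.card := by
  induction j with
  | zero => exact ⟨Fin.elim0, by simp, by simp, fun s _ ↦ by simpa using Finset.card_filter_le _ _⟩
  | succ j ih =>
    obtain ⟨F, hF0, hFdeg, hFcell⟩ := ih
    let φ (x : Space) : restrictTotalDegree (Fin 3) ℝ (3 * 2 ^ (j / 3)) →ₗ[ℝ] ℝ :=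
      (aeval x).toLinearMap ∘ₗ Submodule.subtype _
    obtain ⟨⟨f, hfdeg⟩, hf0, hf⟩ := ham_sandwich
      ((card_pi_signType_ne_zero j).trans_lt (two_pow_lt_finrank_restrictTotalDegree j)) φ
      fun s ↦ S.filter (signPattern F · = s)
    refine ⟨Fin.snoc F f, ?_, ?_, fun s hs ↦ ?_⟩
    · simpa [Fin.forall_fin_succ', hF0] using hf0
    · simpa [Fin.forall_fin_succ', hFdeg] using (mem_restrictTotalDegree _ _ f).mp hfdeg
    · have hsplit : S.filter (signPattern (Fin.snoc F f : Fin (j + 1) → SpacePoly) · = s) =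
          (S.filter (signPattern F · = Fin.init s)).filter
            fun x ↦ SignType.sign (eval x f) = s (Fin.last j) := by
        ext x
        simp [funext_iff, Fin.forall_fin_succ', signPattern, Fin.init, and_assoc]
      have hbisect := hf ⟨Fin.init s, fun i ↦ hs _⟩ (s (Fin.last j)) (hs _)
      rw [hsplit, pow_succ, mul_assoc]
      exact (Nat.mul_le_mul_left _ hbisect).trans (hFcell _ fun i ↦ hs _)

lemma sum_range_three_mul_two_pow_div_three (m : ℕ) :
    ∑ i ∈ Finset.range (3 * m), 3 * 2 ^ (i / 3) + 9 = 9 * 2 ^ m := by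
  induction m with
  | zero => simp
  | succ m ih =>
    rw [show 3 * (m + 1) = 3 * m + 1 + 1 + 1 by ring, Finset.sum_range_succ,
      Finset.sum_range_succ, Finset.sum_range_succ, show 3 * m / 3 = m by omega,
      show (3 * m + 1) / 3 = m by omega, show (3 * m + 1 + 1) / 3 = m by omega, pow_succ]
    omega

lemma exists_partitioning_polynomials (S : Finset Space) (m : ℕ) :
    ∃ F : Fin (3 * m) → SpacePoly, ∏ i, F i ≠ 0 ∧ (∏ i, F i).totalDegree ≤ 9 * 2 ^ m ∧
      ∀ s : Fin (3 * m) → SignType, (∀ i, s i ≠ 0) →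
        (S.filter (signPattern F · = s)).card ≤ S.card / 8 ^ m := by
  obtain ⟨F, hF0, hFdeg, hFcell⟩ := exists_bisecting_polynomials S (3 * m)
  refine ⟨F, Finset.prod_ne_zero_iff.mpr fun i _ ↦ hF0 i, ?_, fun s hs ↦ ?_⟩
  · calc (∏ i, F i).totalDegree ≤ ∑ i, (F i).totalDegree := totalDegree_finsetProd _ _
      _ ≤ ∑ i : Fin (3 * m), 3 * 2 ^ (i / 3 : ℕ) := Finset.sum_le_sum fun i _ ↦ hFdeg i
      _ ≤ 9 * 2 ^ m := by
        rw [← Finset.sum_range fun i ↦ 3 * 2 ^ (i / 3)]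
        have := sum_range_three_mul_two_pow_div_three m
        omega
  · rw [Nat.le_div_iff_mul_le (by positivity), mul_comm, show 8 ^ m = 2 ^ (3 * m) by
      rw [pow_mul]; norm_num]
    exact hFcell s hs

lemma sign_eval_eq_of_forall_ne_zero {p : Polynomial ℝ} {a b : ℝ}
    (h : ∀ t ∈ Set.uIcc a b, p.eval t ≠ 0) :
    SignType.sign (p.eval a) = SignType.sign (p.eval b) := by
  have hivt := intermediate_value_uIcc (p.continuous.continuousOn (s := Set.uIcc a b))
  have hzero : (0 : ℝ) ∉ Set.uIcc (p.eval a) (p.eval b) := fun h0 ↦ by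
    obtain ⟨t, ht, hpt⟩ := hivt h0
    exact h t ht hpt
  rw [Set.mem_uIcc, not_or, not_and_or, not_and_or] at hzero
  rcases lt_or_gt_of_ne (h a Set.left_mem_uIcc) with ha | ha <;>
    rcases lt_or_gt_of_ne (h b Set.right_mem_uIcc) with hb | hb
  · rw [sign_neg ha, sign_neg hb]
  · grind
  · grind
  · rw [sign_pos ha, sign_pos hb]

lemma exists_subset_injOn_image_eq {α β : Type*} [DecidableEq β] (f : α → β) (T : Finset α) :
    ∃ R ⊆ T, Set.InjOn f R ∧ R.image f = T.image f := by
  have hsurj : Set.SurjOn f T (T.image f : Finset β) := by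
    rw [Finset.coe_image]
    exact Set.surjOn_image f T
  exact_mod_cast Finset.exists_subset_injOn_image_eq_of_surjOn (T : Set α) (T.image f) hsurj

lemma card_image_le_card_image {α β γ : Type*} [DecidableEq β] [DecidableEq γ] {T : Finset α}
    {f : α → β} {g : α → γ} (h : ∀ a ∈ T, ∀ b ∈ T, g a = g b → f a = f b) :
    (T.image f).card ≤ (T.image g).card := by
  obtain ⟨R, hRT, hinj, himage⟩ := exists_subset_injOn_image_eq f T
  have hginj : Set.InjOn g R := fun a ha b hb hab ↦ hinj ha hb (h a (hRT ha) b (hRT hb) hab)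
  calc (T.image f).card = R.card := by rw [← himage, Finset.card_image_of_injOn hinj]
    _ = (R.image g).card := (Finset.card_image_of_injOn hginj).symm
    _ ≤ (T.image g).card := Finset.card_le_card (Finset.image_subset_image hRT)

lemma card_image_sign_eval_le {ι : Type*} [Fintype ι] {p : ι → Polynomial ℝ}
    (hp : ∏ i, p i ≠ 0) {T : Finset ℝ} (hT : ∀ t ∈ T, ∀ i, (p i).eval t ≠ 0) :
    (T.image fun t i ↦ SignType.sign ((p i).eval t)).card ≤ (∏ i, p i).natDegree + 1 := by
  let rootsBelow (t : ℝ) : Finset ℝ := (∏ i, p i).roots.toFinset.filter (· < t)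
  have hcount (t : ℝ) : (rootsBelow t).card < (∏ i, p i).natDegree + 1 :=
    Nat.lt_succ_of_le <| (Finset.card_filter_le _ _).trans <|
      (Multiset.toFinset_card_le _).trans (Polynomial.card_roots' _)
  have hsame : ∀ t ∈ T, ∀ t' ∈ T, t ≤ t' → (rootsBelow t).card = (rootsBelow t').card →
      ∀ i, SignType.sign ((p i).eval t) = SignType.sign ((p i).eval t') := by
    intro t _ t' ht' htt' hcard i
    refine sign_eval_eq_of_forall_ne_zero fun s hs h0 ↦ ?_
    rw [Set.uIcc_of_le htt'] at hs
    have hst' : s < t' := hs.2.lt_of_ne fun h ↦ hT t' ht' i (h ▸ h0)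
    have hroot : s ∈ (∏ i, p i).roots := by
      rw [Polynomial.mem_roots hp, Polynomial.IsRoot, Polynomial.eval_prod]
      exact Finset.prod_eq_zero (Finset.mem_univ i) h0
    have hsub : rootsBelow t ⊆ rootsBelow t' :=
      Finset.monotone_filter_right _ fun r _ hr ↦ hr.trans_le htt'
    have hmem : s ∈ rootsBelow t := by
      rw [Finset.eq_of_subset_of_card_le hsub hcard.ge]
      exact Finset.mem_filter.mpr ⟨Multiset.mem_toFinset.mpr hroot, hst'⟩
    exact hs.1.not_gt (Finset.mem_filter.mp hmem).2
  refine (card_image_le_card_image (g := fun t ↦ (rootsBelow t).card) fun t ht t' ht' h ↦ ?_).trans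
    ((Finset.card_le_card (Finset.image_subset_iff.mpr fun t _ ↦
      Finset.mem_range.mpr (hcount t))).trans_eq (Finset.card_range _))
  funext i
  rcases le_total t t' with htt' | htt'
  · exact hsame t ht t' ht' htt' h i
  · exact (hsame t' ht' t ht htt' h.symm i).symm

lemma card_le_card_image_add_card_offDiag_filter {α β : Type*} [DecidableEq β]
    (A : Finset α) (g : α → β) :
    A.card ≤ (A.image g).card + (A.offDiag.filter fun q ↦ g q.1 = g q.2).card := by
  classical
  obtain ⟨R, hRA, hinj, himage⟩ := exists_subset_injOn_image_eq g A
  have hrest : A \ R ⊆ (A.offDiag.filter fun q ↦ g q.1 = g q.2).image Prod.fst := fun x hx ↦ by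
    obtain ⟨hxA, hxR⟩ := Finset.mem_sdiff.mp hx
    obtain ⟨y, hyR, hyx⟩ := Finset.mem_image.mp (himage ▸ Finset.mem_image_of_mem g hxA)
    have hxy : x ≠ y := fun h ↦ hxR (h ▸ hyR)
    exact Finset.mem_image.mpr ⟨(x, y), by simp [hxA, hRA hyR, hxy, hyx], rfl⟩
  calc A.card = R.card + (A \ R).card := by rw [add_comm, Finset.card_sdiff_add_card_eq_card hRA]
    _ ≤ _ := by
      rw [← himage, Finset.card_image_of_injOn hinj]
      exact Nat.add_le_add_left ((Finset.card_le_card hrest).trans Finset.card_image_le) _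

section Cells

variable {ι : Type*} [Fintype ι] {F : ι → SpacePoly} {A : Finset Space} {V : Finset Line}

lemma signPattern_ne_zero {x : Space} (hx : eval x (∏ i, F i) ≠ 0) (i : ι) :
    signPattern F x i ≠ 0 := by
  rw [map_prod, Finset.prod_ne_zero_iff] at hx
  exact sign_ne_zero.mpr (hx i (Finset.mem_univ i))

lemma card_image_signPattern_le {l : Line} (hl : ¬ VanishesOn (∏ i, F i) l)
    (hAl : ∀ x ∈ A, x ∈ l) (hA : ∀ x ∈ A, eval x (∏ i, F i) ≠ 0) :
    (A.image (signPattern F)).card ≤ (∏ i, F i).totalDegree + 1 := by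
  have heval (x) (hx : x ∈ A) (i) :
      (restrictLine (l.point 0) l.dir (F i)).eval (x 2) = eval x (F i) := by
    rw [eval_restrictLine, Line.point_add_smul_dir, zero_add, Line.point_eq_of_mem (hAl x hx)]
  have himage : A.image (signPattern F) = (A.image (· 2)).image fun t i ↦
      SignType.sign ((restrictLine (l.point 0) l.dir (F i)).eval t) := by
    rw [Finset.image_image]
    exact Finset.image_congr fun x hx ↦ funext fun i ↦ by
      rw [Function.comp_apply, heval x hx, signPattern]
  rw [himage]
  refine (card_image_sign_eval_le ?_ (Finset.forall_mem_image.mpr fun x hx i ↦ ?_)).trans ?_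
  · rwa [← map_prod, Ne, ← vanishesOn_iff_restrictLine_eq_zero (l.point_mem 0)]
  · rw [heval x hx]
    exact sign_ne_zero.mp (signPattern_ne_zero (hA x hx) i)
  · rw [← map_prod]
    exact Nat.succ_le_succ (natDegree_restrictLine_le _ _ _)

open Classical in
lemma sum_card_pairs_on_lines_le (R : Space → Space → Prop) [DecidableRel R] :
    ∑ l ∈ V, ((A.filter (· ∈ l)).offDiag.filter fun q ↦ R q.1 q.2).card ≤
      ∑ x ∈ A, (A.filter (R x)).card := by
  rw [← Finset.card_biUnion, ← Finset.card_sigma]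
  · refine Finset.card_le_card_of_injOn (fun q ↦ ⟨q.1, q.2⟩) (fun q hq ↦ ?_) ?_
    · obtain ⟨l, -, hq⟩ := Finset.mem_biUnion.mp hq
      simp only [Finset.mem_filter, Finset.mem_offDiag] at hq
      simpa using ⟨hq.1.1.1, hq.1.2.1.1, hq.2⟩
    · rintro ⟨x, y⟩ _ ⟨x', y'⟩ _ h
      simpa using h
  · intro l _ l' _ hll'
    rw [Function.onFun, Finset.disjoint_left]
    intro q hq hq'
    simp only [Finset.mem_filter, Finset.mem_offDiag] at hq hq'
    exact hll' (Line.eq_of_two_points hq.1.1.2 hq.1.2.1.2 hq'.1.1.2 hq'.1.2.1.2 hq.1.2.2)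

open Classical in
lemma sum_card_lines_eq_sum_card_points (f : SpacePoly) (hA : ∀ x ∈ A, eval x f ≠ 0) :
    ∑ x ∈ A, (V.filter (x ∈ ·)).card =
      ∑ l ∈ V with ¬ VanishesOn f l, (A.filter (· ∈ l)).card := by
  have hlines (x) (hx : x ∈ A) :
      V.filter (x ∈ ·) = (V.filter (¬ VanishesOn f ·)).filter (x ∈ ·) := by
    rw [Finset.filter_filter]
    exact Finset.filter_congr fun l _ ↦
      ⟨fun hxl ↦ ⟨fun hv ↦ hA x hx (hv.eval_eq_zero hxl), hxl⟩, And.right⟩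
  rw [Finset.sum_congr rfl fun x hx ↦ congrArg Finset.card (hlines x hx)]
  exact Finset.sum_card_bipartiteAbove_eq_sum_card_bipartiteBelow _

open Classical in
lemma sum_card_lines_le_of_card_cell_le {K : ℕ} (hA : ∀ x ∈ A, eval x (∏ i, F i) ≠ 0)
    (hK : ∀ x ∈ A, (A.filter (signPattern F x = signPattern F ·)).card ≤ K) :
    ∑ x ∈ A, (V.filter (x ∈ ·)).card ≤
      (V.filter (¬ VanishesOn (∏ i, F i) ·)).card * ((∏ i, F i).totalDegree + 1) +
        A.card * K := by
  have hline (l) (hl : l ∈ V.filter (¬ VanishesOn (∏ i, F i) ·)) :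
      (A.filter (· ∈ l)).card ≤ ((∏ i, F i).totalDegree + 1) +
        ((A.filter (· ∈ l)).offDiag.filter fun q ↦ signPattern F q.1 = signPattern F q.2).card :=
    (card_le_card_image_add_card_offDiag_filter _ (signPattern F)).trans <|
      Nat.add_le_add_right (card_image_signPattern_le (Finset.mem_filter.mp hl).2
        (fun x hx ↦ (Finset.mem_filter.mp hx).2) fun x hx ↦ hA x (Finset.mem_filter.mp hx).1) _
  rw [sum_card_lines_eq_sum_card_points _ hA]
  refine (Finset.sum_le_sum hline).trans ?_
  rw [Finset.sum_add_distrib, Finset.sum_const, smul_eq_mul]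
  refine Nat.add_le_add_left ((sum_card_pairs_on_lines_le
    fun x y ↦ signPattern F x = signPattern F y).trans ?_) _
  exact Finset.sum_le_card_nsmul _ _ _ hK

end Cells

open Classical in
theorem exists_partitioning_polynomial (S : Finset Space) (V : Finset Line) (m : ℕ) :
    ∃ f : SpacePoly, f ≠ 0 ∧ f.totalDegree ≤ 9 * 2 ^ m ∧
      ∑ x ∈ S with eval x f ≠ 0, (V.filter (x ∈ ·)).card ≤
        (V.filter (¬ VanishesOn f ·)).card * (9 * 2 ^ m + 1) +
          (S.filter (eval · f ≠ 0)).card * (S.card / 8 ^ m) := by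
  obtain ⟨F, hF0, hFdeg, hFcell⟩ := exists_partitioning_polynomials S m
  have hoff : ∀ x ∈ S.filter (eval · (∏ i, F i) ≠ 0), eval x (∏ i, F i) ≠ 0 :=
    fun x hx ↦ (Finset.mem_filter.mp hx).2
  refine ⟨∏ i, F i, hF0, hFdeg, (sum_card_lines_le_of_card_cell_le (K := S.card / 8 ^ m)
    hoff fun x hx ↦ ?_).trans ?_⟩
  · refine (Finset.card_le_card fun y hy ↦ ?_).trans (hFcell _ (signPattern_ne_zero (hoff x hx)))
    obtain ⟨hyS, hxy⟩ := Finset.mem_filter.mp hy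
    exact Finset.mem_filter.mpr ⟨(Finset.mem_filter.mp hyS).1, hxy.symm⟩
  · gcongr

end PolynomialPartitioning

end GuthKatz

namespace GuthKatz

open MvPolynomial

/-! ### Bézout's theorem for lines -/

section Bezout

lemma exists_linear_vanishesOn_of_ne {l m : Line} (h : l ≠ m) :
    ∃ p : SpacePoly, p.totalDegree ≤ 1 ∧ VanishesOn p m ∧ ¬ VanishesOn p l := by
  have hdeg (i : Fin 3) (r s : ℝ) : (X i - C r - C s * X 2 : SpacePoly).totalDegree ≤ 1 :=
    (totalDegree_sub _ _).trans (max_le ((totalDegree_sub _ _).trans (max_le (by simp) (by simp)))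
      ((totalDegree_mul _ _).trans (by simp)))
  by_cases hac : l.a = m.a ∧ l.c = m.c
  · refine ⟨X 1 - C m.b - C m.d * X 2, hdeg _ _ _, fun t ↦ by simp [Line.point, mul_comm],
      fun hv ↦ h ?_⟩
    have h0 : l.b = m.b := by simpa [Line.point, sub_eq_zero] using hv 0
    have h1 : l.b + l.d - m.b - m.d = 0 := by simpa [Line.point] using hv 1
    exact Line.ext hac.1 h0 hac.2 (by linarith)
  · refine ⟨X 0 - C m.a - C m.c * X 2, hdeg _ _ _, fun t ↦ by simp [Line.point, mul_comm],
      fun hv ↦ hac ?_⟩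
    have h0 : l.a = m.a := by simpa [Line.point, sub_eq_zero] using hv 0
    have h1 : l.a + l.c - m.a - m.c = 0 := by simpa [Line.point] using hv 1
    exact ⟨h0, by linarith⟩

lemma exists_vanishesOn_forall_ne {V : Finset Line} {l : Line} (hl : l ∈ V) :
    ∃ p : SpacePoly, p.totalDegree < V.card ∧ (∀ m ∈ V, m ≠ l → VanishesOn p m) ∧
      ¬ VanishesOn p l := by
  choose! p hdeg hvan hnot using fun m (hm : m ∈ V.erase l) ↦
    exists_linear_vanishesOn_of_ne (Finset.ne_of_mem_erase hm).symm
  refine ⟨∏ m ∈ V.erase l, p m, ?_, fun m hm hml t ↦ ?_, ?_⟩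
  · calc (∏ m ∈ V.erase l, p m).totalDegree ≤ ∑ m ∈ V.erase l, 1 :=
          (totalDegree_finsetProd _ _).trans (Finset.sum_le_sum hdeg)
      _ < V.card := by simpa using Finset.card_erase_lt_of_mem hl
  · have hm' := Finset.mem_erase.mpr ⟨hml, hm⟩
    rw [map_prod]
    exact Finset.prod_eq_zero hm' (hvan m hm' t)
  · simp only [vanishesOn_iff_restrictLine_eq_zero (l.point_mem 0)] at hnot ⊢
    rw [map_prod]
    exact Finset.prod_ne_zero_iff.mpr hnot

lemma totalDegree_X_pow_le {σ R : Type*} [CommRing R] (i : σ) (j : ℕ) :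
    (X i ^ j : MvPolynomial σ R).totalDegree ≤ j := by
  rw [X_pow_eq_monomial]
  exact (totalDegree_monomial_le _ _).trans_eq (Finsupp.degree_single i j)

lemma totalDegree_aeval_X_le {σ R : Type*} [CommRing R] (i : σ) (p : Polynomial R) :
    (Polynomial.aeval (X i : MvPolynomial σ R) p).totalDegree ≤ p.natDegree := by
  rw [Polynomial.aeval_eq_sum_range]
  refine (totalDegree_finsetSum _ _).trans (Finset.sup_le fun j hj ↦ ?_)
  calc (p.coeff j • X i ^ j : MvPolynomial σ R).totalDegree ≤ (X i ^ j).totalDegree :=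
        totalDegree_smul_le _ _
    _ ≤ j := totalDegree_X_pow_le i j
    _ ≤ p.natDegree := Finset.mem_range_succ_iff.mp hj

lemma choose_three_add_le (δ e k : ℕ) :
    (k + δ + e + 3).choose 3 + (k + 3).choose 3 ≤
      (k + e + 3).choose 3 + (k + δ + 3).choose 3 + δ * e * (k + δ + e + 2) := by
  have h1 := six_mul_choose_three (k + δ + e)
  have h2 := six_mul_choose_three k
  have h3 := six_mul_choose_three (k + e)
  have h4 := six_mul_choose_three (k + δ)
  nlinarith [Nat.zero_le (δ * e * (δ + e))]

section MulSpace

variable {σ R : Type*} [CommRing R]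

/-- The multiples of `g` by polynomials of degree at most `m`. -/
def mulRestrictTotalDegree (g : MvPolynomial σ R) (m : ℕ) : Submodule R (MvPolynomial σ R) :=
  (restrictTotalDegree σ R m).map (LinearMap.mulLeft R g)

lemma mem_mulRestrictTotalDegree {g f : MvPolynomial σ R} {m : ℕ} :
    f ∈ mulRestrictTotalDegree g m ↔ ∃ p, p.totalDegree ≤ m ∧ g * p = f := by
  simp [mulRestrictTotalDegree, mem_restrictTotalDegree]

lemma mulRestrictTotalDegree_le {g : MvPolynomial σ R} {m n : ℕ} (h : g.totalDegree + m ≤ n) :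
    mulRestrictTotalDegree g m ≤ restrictTotalDegree σ R n := fun f hf ↦ by
  obtain ⟨p, hp, rfl⟩ := mem_mulRestrictTotalDegree.mp hf
  rw [mem_restrictTotalDegree]
  exact (totalDegree_mul g p).trans (by omega)

variable [IsDomain R]

lemma finrank_mulRestrictTotalDegree {g : MvPolynomial σ R} (hg : g ≠ 0) (m : ℕ) :
    Module.finrank R (mulRestrictTotalDegree g m) =
      Module.finrank R (restrictTotalDegree σ R m) :=
  ((restrictTotalDegree σ R m).equivMapOfInjective _ (mul_right_injective₀ hg)).symm.finrank_eq

lemma mulRestrictTotalDegree_inf_le [UniqueFactorizationMonoid R] {g h : MvPolynomial σ R}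
    (hh : h ≠ 0) (hgh : IsRelPrime g h) (k n : ℕ) :
    mulRestrictTotalDegree g (k + h.totalDegree) ⊓ mulRestrictTotalDegree h n ≤
      mulRestrictTotalDegree (g * h) k := fun f ⟨hfg, hfh⟩ ↦ by
  obtain ⟨p, hp, rfl⟩ := mem_mulRestrictTotalDegree.mp hfg
  obtain ⟨r, -, hr⟩ := mem_mulRestrictTotalDegree.mp hfh
  obtain ⟨s, rfl⟩ := hgh.symm.dvd_of_dvd_mul_left ⟨r, hr.symm⟩
  refine mem_mulRestrictTotalDegree.mpr ⟨s, ?_, by ring⟩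
  rcases eq_or_ne s 0 with rfl | hs
  · simp
  · rw [totalDegree_mul_of_isDomain hh hs] at hp
    omega

instance [Finite σ] (g : MvPolynomial σ R) (m : ℕ) :
    Module.Finite R (mulRestrictTotalDegree g m) :=
  inferInstanceAs (Module.Finite R ((restrictTotalDegree σ R m).map _))

end MulSpace

variable {g h : SpacePoly}

lemma finrank_restrictTotalDegree_le_finrank_sup (hg : g ≠ 0) (hh : h ≠ 0)
    (hgh : IsRelPrime g h) (k : ℕ) :
    Module.finrank ℝ (restrictTotalDegree (Fin 3) ℝ (k + g.totalDegree + h.totalDegree)) ≤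
      Module.finrank ℝ ↥(mulRestrictTotalDegree g (k + h.totalDegree) ⊔
        mulRestrictTotalDegree h (k + g.totalDegree)) +
      g.totalDegree * h.totalDegree * (k + g.totalDegree + h.totalDegree + 2) := by
  have hsum := Submodule.finrank_sup_add_finrank_inf_eq
    (mulRestrictTotalDegree g (k + h.totalDegree)) (mulRestrictTotalDegree h (k + g.totalDegree))
  have hinf := Submodule.finrank_mono
    (mulRestrictTotalDegree_inf_le hh hgh k (k + g.totalDegree))
  have hchoose := choose_three_add_le g.totalDegree h.totalDegree k
  rw [finrank_mulRestrictTotalDegree hg, finrank_mulRestrictTotalDegree hh,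
    finrank_restrictTotalDegree_three, finrank_restrictTotalDegree_three] at hsum
  rw [finrank_mulRestrictTotalDegree (mul_ne_zero hg hh), finrank_restrictTotalDegree_three]
    at hinf
  rw [finrank_restrictTotalDegree_three]
  omega

/-- The restriction of polynomials to each of the lines in `V`. -/
def restrictLines (V : Finset Line) : SpacePoly →ₗ[ℝ] V → Polynomial ℝ :=
  LinearMap.pi fun l ↦ (restrictLine (l.1.point 0) l.1.dir).toLinearMap

lemma card_mul_le_finrank_map_restrictLines (V : Finset Line) (m : ℕ) :
    V.card * (m + 2 - V.card) ≤
      Module.finrank ℝ ((restrictTotalDegree (Fin 3) ℝ m).map (restrictLines V)) := by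
  choose u hdeg hvan hnot using fun l : V ↦ exists_vanishesOn_forall_ne l.2
  let Ψ : (V → Polynomial.degreeLT ℝ (m + 2 - V.card)) →ₗ[ℝ] V → Polynomial ℝ :=
    LinearMap.pi fun l ↦ LinearMap.mulRight ℝ (restrictLine (l.1.point 0) l.1.dir (u l)) ∘ₗ
        Submodule.subtype _ ∘ₗ LinearMap.proj l
  have hinj : Function.Injective Ψ := fun c c' h ↦ funext fun l ↦ Subtype.ext <|
    mul_right_cancel₀ ((vanishesOn_iff_restrictLine_eq_zero (l.1.point_mem 0)).not.mp (hnot l))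
      (congrFun h l)
  have hX (l : Line) (p : Polynomial ℝ) :
      restrictLine (l.point 0) l.dir (Polynomial.aeval (X 2) p) = p := by
    rw [← Polynomial.aeval_algHom_apply]
    simp [restrictLine, Line.point, Line.dir]
  have hrange : LinearMap.range Ψ ≤ (restrictTotalDegree (Fin 3) ℝ m).map (restrictLines V) := by
    rintro _ ⟨c, rfl⟩
    refine ⟨∑ l, Polynomial.aeval (X 2) (c l).1 * u l, Submodule.sum_mem _ fun l _ ↦ ?_, ?_⟩
    · rw [mem_restrictTotalDegree]
      rcases eq_or_ne (c l).1 0 with hc | hc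
      · simp [hc]
      · have hu := hdeg l
        have hdegc := (Polynomial.natDegree_lt_iff_degree_lt hc).mpr
          (Polynomial.mem_degreeLT.mp (c l).2)
        have hdegX := totalDegree_aeval_X_le (2 : Fin 3) (c l).1
        exact (totalDegree_mul _ _).trans (by omega)
    · funext l
      simp only [restrictLines, LinearMap.pi_apply, AlgHom.toLinearMap_apply, map_sum, map_mul, hX]
      refine Finset.sum_eq_single l (fun l' _ hl' ↦ ?_) (by simp)
      rw [(vanishesOn_iff_restrictLine_eq_zero (l.1.point_mem 0)).mp
        (hvan l' l l.2 fun h ↦ hl' (Subtype.ext h.symm)), mul_zero]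
  calc V.card * (m + 2 - V.card) = Module.finrank ℝ (LinearMap.range Ψ) := by
        rw [LinearMap.finrank_range_of_inj hinj, Module.finrank_pi_fintype,
          Finset.sum_congr rfl fun l _ ↦ (Polynomial.degreeLTEquiv ℝ _).finrank_eq]
        simp
    _ ≤ _ := Submodule.finrank_mono hrange

lemma finrank_map_add_finrank_le {K E E' : Type*} [Field K] [AddCommGroup E] [Module K E]
    [AddCommGroup E'] [Module K E'] {I U : Submodule K E} [Module.Finite K U] (f : E →ₗ[K] E')
    (hIU : I ≤ U) (hI : I ≤ LinearMap.ker f) :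
    Module.finrank K (U.map f) + Module.finrank K I ≤ Module.finrank K U := by
  rw [← LinearMap.finrank_range_add_finrank_ker (f.domRestrict U), LinearMap.range_domRestrict,
    LinearMap.ker_domRestrict, ← (Submodule.comapSubtypeEquivOfLe hIU).finrank_eq]
  exact Nat.add_le_add_left (Submodule.finrank_mono (Submodule.comap_mono hI)) _

lemma mulRestrictTotalDegree_le_ker_restrictLines {V : Finset Line}
    (hV : ∀ l ∈ V, VanishesOn g l) (m : ℕ) :
    mulRestrictTotalDegree g m ≤ LinearMap.ker (restrictLines V) := fun f hf ↦ by
  obtain ⟨p, -, rfl⟩ := mem_mulRestrictTotalDegree.mp hf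
  refine LinearMap.mem_ker.mpr (funext fun l ↦ ?_)
  simp [restrictLines, (vanishesOn_iff_restrictLine_eq_zero (l.1.point_mem 0)).mp (hV l l.2)]

lemma card_mul_le_totalDegree_mul_totalDegree_mul (hg : g ≠ 0) (hh : h ≠ 0)
    (hgh : IsRelPrime g h) {V : Finset Line} (hVg : ∀ l ∈ V, VanishesOn g l)
    (hVh : ∀ l ∈ V, VanishesOn h l) (k : ℕ) :
    V.card * (k + g.totalDegree + h.totalDegree + 2 - V.card) ≤
      g.totalDegree * h.totalDegree * (k + g.totalDegree + h.totalDegree + 2) := by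
  have hlower := card_mul_le_finrank_map_restrictLines V (k + g.totalDegree + h.totalDegree)
  have hrank := finrank_map_add_finrank_le (restrictLines V)
    (sup_le (mulRestrictTotalDegree_le (g := g) (m := k + h.totalDegree) (by omega))
      (mulRestrictTotalDegree_le (n := k + g.totalDegree + h.totalDegree) (by omega)))
    (sup_le (mulRestrictTotalDegree_le_ker_restrictLines hVg _)
      (mulRestrictTotalDegree_le_ker_restrictLines hVh (k + g.totalDegree)))
  have hupper := finrank_restrictTotalDegree_le_finrank_sup hg hh hgh k
  exact Nat.le_of_add_le_add_left <| (Nat.add_comm _ _).trans_le <|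
    (Nat.add_le_add_right hlower _).trans (hrank.trans hupper)

theorem card_le_totalDegree_mul_totalDegree (hg : g ≠ 0) (hh : h ≠ 0) (hgh : IsRelPrime g h)
    {V : Finset Line} (hVg : ∀ l ∈ V, VanishesOn g l) (hVh : ∀ l ∈ V, VanishesOn h l) :
    V.card ≤ g.totalDegree * h.totalDegree := by
  have hle := card_mul_le_totalDegree_mul_totalDegree_mul hg hh hgh hVg hVh
    (V.card ^ 2 + V.card)
  generalize g.totalDegree * h.totalDegree = b at hle ⊢
  generalize V.card = n at hle ⊢
  by_contra! hlt
  obtain ⟨i, hi⟩ : ∃ i, n ^ 2 + n + g.totalDegree + h.totalDegree + 2 = n ^ 2 + i + 1 + n :=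
    ⟨g.totalDegree + h.totalDegree + 1, by ring⟩
  rw [hi, Nat.add_sub_cancel] at hle
  nlinarith [Nat.mul_le_mul_right (n ^ 2 + i + 1 + n) (Nat.succ_le_of_lt hlt)]

end Bezout

/-! ### Degree reduction -/

section DegreeReduction

section RankSums

variable {ι : Type*}

/-- The number of elements of `A` whose key is smaller than that of `m`. -/
def rankIn (key : ι → ℕ) (A : Finset ι) (m : ι) : ℕ := (A.filter (key · < key m)).card

lemma rankIn_lt_rankIn {key : ι → ℕ} {A : Finset ι} {m m' : ι} (hm : m ∈ A)
    (h : key m < key m') : rankIn key A m < rankIn key A m' :=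
  Finset.card_lt_card <| Finset.ssubset_iff_of_subset
    (Finset.monotone_filter_right _ fun _ _ hr ↦ hr.trans h) |>.mpr
    ⟨m, Finset.mem_filter.mpr ⟨hm, h⟩, by simp⟩

lemma injOn_rankIn {key : ι → ℕ} (hkey : Function.Injective key) (A : Finset ι) :
    Set.InjOn (rankIn key A) A := fun m hm m' hm' h ↦ by
  by_contra hne
  rcases lt_or_gt_of_ne (hkey.ne hne) with hlt | hlt
  · exact (rankIn_lt_rankIn hm hlt).ne h
  · exact (rankIn_lt_rankIn hm' hlt).ne h.symm

lemma two_mul_sum_sub_rankIn_le {key : ι → ℕ} (hkey : Function.Injective key) (A : Finset ι)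
    (d : ℕ) : 2 * ∑ m ∈ A, (d + 1 - rankIn key A m) ≤ (d + 1) * (d + 2) := by
  have hsum : ∑ j ∈ Finset.range (d + 1), (d + 1 - j) = ∑ j ∈ Finset.range (d + 2), j := by
    rw [← Finset.sum_range_reflect (fun j ↦ j), Finset.sum_range_succ _ (d + 1)]
    simp
  calc 2 * ∑ m ∈ A, (d + 1 - rankIn key A m)
      = 2 * ∑ j ∈ A.image (rankIn key A), (d + 1 - j) := by
        rw [Finset.sum_image (injOn_rankIn hkey A)]
    _ ≤ 2 * ∑ j ∈ Finset.range (d + 1), (d + 1 - j) :=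
        Nat.mul_le_mul_left 2 <| Finset.sum_le_sum_of_ne_zero fun j _ hj ↦
          Finset.mem_range.mpr (by omega)
    _ = (d + 1) * (d + 2) := by
        rw [hsum, mul_comm 2, Finset.sum_range_id_mul_two, mul_comm]
        rfl

lemma rankIn_comp_swap [DecidableEq ι] (key : ι → ℕ) {A : Finset ι} {l m : ι} (hl : l ∈ A)
    (hm : m ∈ A) : rankIn (key ∘ Equiv.swap l m) A l = rankIn key A m := by
  have hA : A.map (Equiv.swap l m).toEmbedding = A := by
    refine Finset.map_perm fun x hx ↦ ?_
    rcases (Equiv.swap_apply_ne_self_iff.mp hx).2 with rfl | rfl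
    exacts [hl, hm]
  conv_rhs => rw [rankIn, ← hA, Finset.filter_map, Finset.card_map]
  simp [rankIn]

lemma rankIn_insert_image {X : Type*} [DecidableEq ι] {c : X → ι} {T : Finset X}
    (hc : Set.InjOn c T) (key : ι → ℕ) (l : ι) :
    rankIn key (insert l (T.image c)) l = (T.filter (fun x ↦ key (c x) < key l)).card := by
  rw [rankIn, Finset.filter_insert, if_neg (lt_irrefl _), Finset.filter_image,
    Finset.card_image_of_injOn (hc.mono (Finset.filter_subset _ _))]

lemma exists_sum_sub_rankIn_le [Fintype ι] (A : ι → Finset ι) (M d : ℕ)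
    (hself : ∀ l, l ∈ A l) (hA : ∀ l, (A l).card = M + 1) :
    ∃ key : ι → ℕ, 2 * (M + 1) * ∑ l, (d + 1 - rankIn key (A l) l) ≤
      Fintype.card ι * ((d + 1) * (d + 2)) := by
  classical
  -- For a random ordering of `ι`, the rank of `l` in `A l` is uniformly distributed.
  let key (σ : Equiv.Perm ι) (m : ι) : ℕ := Fintype.equivFin ι (σ m)
  have hkey (σ) : Function.Injective (key σ) :=
    Fin.val_injective.comp ((Fintype.equivFin ι).injective.comp σ.injective)
  have hsymm (l m) (hm : m ∈ A l) : ∑ σ, (d + 1 - rankIn (key σ) (A l) m) =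
      ∑ σ, (d + 1 - rankIn (key σ) (A l) l) :=
    Fintype.sum_equiv (Equiv.mulRight (Equiv.swap l m)) _ _ fun σ ↦
      congrArg (d + 1 - ·) (rankIn_comp_swap (key σ) (hself l) hm).symm
  have haverage (l) : 2 * (M + 1) * ∑ σ, (d + 1 - rankIn (key σ) (A l) l) ≤
      ∑ _σ : Equiv.Perm ι, (d + 1) * (d + 2) := by
    have hconst : (M + 1) * ∑ σ, (d + 1 - rankIn (key σ) (A l) l) =
        ∑ m ∈ A l, ∑ σ, (d + 1 - rankIn (key σ) (A l) m) := by
      rw [Finset.sum_congr rfl (hsymm l), Finset.sum_const, hA, smul_eq_mul]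
    rw [mul_assoc, hconst, Finset.sum_comm, Finset.mul_sum]
    exact Finset.sum_le_sum fun σ _ ↦ two_mul_sum_sub_rankIn_le (hkey σ) (A l) d
  have htotal : ∑ σ, 2 * (M + 1) * ∑ l, (d + 1 - rankIn (key σ) (A l) l) ≤
      ∑ _σ : Equiv.Perm ι, Fintype.card ι * ((d + 1) * (d + 2)) := by
    rw [← Finset.mul_sum, Finset.sum_comm, Finset.mul_sum]
    refine (Finset.sum_le_sum fun l _ ↦ haverage l).trans_eq ?_
    simp only [Finset.sum_const, Finset.card_univ, smul_eq_mul]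
    ring
  obtain ⟨σ, -, hσ⟩ := Finset.exists_le_of_sum_le Finset.univ_nonempty htotal
  exact ⟨key σ, hσ⟩

end RankSums

lemma exists_ne_zero_forall_eval_eq_zero {W : Finset Space} {d : ℕ}
    (hW : W.card < (d + 3).choose 3) :
    ∃ f : SpacePoly, f ≠ 0 ∧ f.totalDegree ≤ d ∧ ∀ x ∈ W, eval x f = 0 := by
  rw [← finrank_restrictTotalDegree_three] at hW
  obtain ⟨⟨f, hfd⟩, hf0, hf⟩ := exists_ne_zero_forall_apply_eq_zero W
    (fun x ↦ (aeval x : SpacePoly →ₐ[ℝ] ℝ).toLinearMap ∘ₗ Submodule.subtype _) hW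
  exact ⟨f, fun h ↦ hf0 (Subtype.ext h), (mem_restrictTotalDegree _ _ f).mp hfd,
    fun x hx ↦ by simpa using hf x hx⟩

lemma exists_card_eq_disjoint_of_line (l : Line) (T : Finset Space) (n : ℕ) :
    ∃ U : Finset Space, U.card = n ∧ Disjoint U T ∧ ∀ x ∈ U, x ∈ l := by
  have hinj : Function.Injective l.point := fun s t h ↦ congrFun h 2
  obtain ⟨U, hU, hcard⟩ :=
    ((Set.infinite_range_of_injective hinj).sdiff T.finite_toSet).exists_subset_card_eq n
  refine ⟨U, hcard, Finset.disjoint_left.mpr fun x hx ↦ (hU hx).2, fun x hx ↦ ?_⟩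
  obtain ⟨t, rfl⟩ := (hU hx).1
  exact l.point_mem t

lemma exists_crossing_lines {V : Finset Line} {l : V} {M : ℕ} {T : Finset Space}
    (hM : M ≤ T.card) (hT : ∀ x ∈ T, x ∈ l.1 ∧ ∃ m ∈ V, m ≠ l.1 ∧ x ∈ m) :
    ∃ T' : Finset Space, T'.card = M ∧ (∀ x ∈ T', x ∈ l.1) ∧ ∃ c : Space → V,
      Set.InjOn c T' ∧ ∀ x ∈ T', c x ≠ l ∧ x ∈ (c x).1 := by
  obtain ⟨T', hT'T, hcard⟩ := Finset.exists_subset_card_eq hM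
  have : Nonempty V := ⟨l⟩
  choose! c hc using fun x (hx : x ∈ T') ↦
    show ∃ m : V, m ≠ l ∧ x ∈ m.1 from
      let ⟨m, hm, hml, hxm⟩ := (hT x (hT'T hx)).2
      ⟨⟨m, hm⟩, fun h ↦ hml (congrArg Subtype.val h), hxm⟩
  have hl (x) (hx : x ∈ T') : x ∈ l.1 := (hT x (hT'T hx)).1
  refine ⟨T', hcard, hl, c, fun x hx y hy hxy ↦ ?_, hc⟩
  by_contra hne
  exact (hc x hx).1 (Subtype.ext (Line.eq_of_two_points (hc x hx).2 (hxy ▸ (hc y hy).2)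
    (hl x hx) (hl y hy) hne))

lemma vanishesOn_of_totalDegree_lt_card_add_card {V : Finset Line} {f : SpacePoly}
    {key : V → ℕ} {T U : V → Finset Space} {c : V → Space → V}
    (hT : ∀ l, ∀ x ∈ T l, x ∈ l.1 ∧ x ∈ (c l x).1)
    (hU : ∀ l, ∀ x ∈ U l, x ∈ l.1 ∧ eval x f = 0) (hUT : ∀ l, Disjoint (U l) (T l))
    (hcard : ∀ l, f.totalDegree < (U l).card + ((T l).filter (fun x ↦ key (c l x) < key l)).card)
    (l : V) : VanishesOn f l.1 := by
  induction hn : key l using Nat.strong_induction_on generalizing l with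
  | _ n ih =>
    subst hn
    refine vanishesOn_of_totalDegree_lt_card (U l ∪ (T l).filter (fun x ↦ key (c l x) < key l))
      (fun x hx ↦ ?_) (fun x hx ↦ ?_) ?_
    · rcases Finset.mem_union.mp hx with hx | hx
      · exact (hU l x hx).1
      · exact (hT l x (Finset.mem_filter.mp hx).1).1
    · rcases Finset.mem_union.mp hx with hx | hx
      · exact (hU l x hx).2
      · obtain ⟨hxT, hlt⟩ := Finset.mem_filter.mp hx
        exact (ih _ hlt (c l x) rfl).eval_eq_zero (hT l x hxT).2
    · rw [Finset.card_union_of_disjoint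
        (Finset.disjoint_of_subset_right (Finset.filter_subset _ _) (hUT l))]
      exact hcard l

theorem exists_vanishesOn_of_crossings {V : Finset Line} {M d : ℕ}
    (hM : ∀ l ∈ V, ∃ T : Finset Space, M ≤ T.card ∧ ∀ x ∈ T, x ∈ l ∧ ∃ m ∈ V, m ≠ l ∧ x ∈ m)
    (h : 3 * V.card < (M + 1) * (d + 3)) :
    ∃ f : SpacePoly, f ≠ 0 ∧ f.totalDegree ≤ d ∧ ∀ l ∈ V, VanishesOn f l := by
  -- Order the lines and prescribe zeros on each line `l` which, together with its crossings with
  -- preceding lines, outnumber the degree.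
  choose T hTcard hTl c hcinj hc using fun l : V ↦
    let ⟨_, hcard, hT⟩ := hM l l.2
    exists_crossing_lines hcard hT
  have hnot (l) : l ∉ (T l).image (c l) := fun hl ↦ by
    obtain ⟨x, hx, hxl⟩ := Finset.mem_image.mp hl
    exact (hc l x hx).1 hxl
  obtain ⟨key, hsum⟩ := exists_sum_sub_rankIn_le
    (fun l ↦ insert l ((T l).image (c l))) M d (fun l ↦ Finset.mem_insert_self _ _) fun l ↦ by
      rw [Finset.card_insert_of_notMem (hnot l), Finset.card_image_of_injOn (hcinj l), hTcard]
  simp only [rankIn_insert_image (hcinj _), Fintype.card_coe] at hsum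
  choose U hUcard hUT hUl using fun l : V ↦ exists_card_eq_disjoint_of_line l.1 (T l)
    (d + 1 - ((T l).filter (fun x ↦ key (c l x) < key l)).card)
  have hW : (Finset.univ.biUnion U).card < (d + 3).choose 3 := by
    refine (Finset.card_biUnion_le.trans_eq (Finset.sum_congr rfl fun l _ ↦ hUcard l)).trans_lt ?_
    generalize ∑ l, (d + 1 - ((T l).filter (fun x ↦ key (c l x) < key l)).card) = s at hsum ⊢
    refine lt_of_mul_lt_mul_left' (a := 6 * (M + 1)) ?_
    calc 6 * (M + 1) * s ≤ 3 * V.card * ((d + 1) * (d + 2)) := by linarith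
      _ < (M + 1) * (d + 3) * ((d + 1) * (d + 2)) := Nat.mul_lt_mul_of_pos_right h (by positivity)
      _ = 6 * (M + 1) * (d + 3).choose 3 := by
        rw [mul_comm 6, mul_assoc (M + 1) 6, six_mul_choose_three]
        ring
  obtain ⟨f, hf0, hfd, hf⟩ := exists_ne_zero_forall_eval_eq_zero hW
  refine ⟨f, hf0, hfd, fun l hl ↦ ?_⟩
  refine vanishesOn_of_totalDegree_lt_card_add_card (key := key) (c := c)
    (fun l x hx ↦ ⟨hTl l x hx, (hc l x hx).2⟩)
    (fun l x hx ↦ ⟨hUl l x hx, hf x (Finset.mem_biUnion.mpr ⟨l, Finset.mem_univ _, hx⟩)⟩)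
    hUT (fun l ↦ ?_) ⟨l, hl⟩
  have := hUcard l
  omega

end DegreeReduction

end GuthKatz

namespace GuthKatz

open MvPolynomial
open scoped PowerSeries

/-! ### Differential calculus on a hypersurface `g = 0` near a point with `∂ₙ g ≠ 0` -/

section TangentialCalculus

variable {σ K : Type*} [Field K]

/-- Polynomials with one further variable, which stands for the reciprocal of a derivative
`∂ₙ g`. This ring models the functions on the hypersurface `g = 0` away from `∂ₙ g = 0`. -/
abbrev ExtendedPoly (σ K : Type*) [Field K] : Type _ := MvPolynomial (Option σ) K

/-- The inclusion of the polynomials into the polynomials with one further variable. -/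
def extend : MvPolynomial σ K →ₐ[K] ExtendedPoly σ K := rename some

/-- The further variable of `ExtendedPoly`, which stands for `1 / ∂ₙ g`. -/
def recip : ExtendedPoly σ K := X none

lemma extend_X (i : σ) : extend (X i : MvPolynomial σ K) = X (some i) := rename_X _ _

@[simp]
lemma extend_C (r : K) : extend (C r : MvPolynomial σ K) = C r := rename_C _ _

variable (g : MvPolynomial σ K) (n : σ → K)

/-- The derivative along the projection of `v` to the tangent hyperplane of `g = 0` in direction
`n`, that is, `∂ᵥ - (∂ᵥ g / ∂ₙ g) ∂ₙ`. Its value at the variable `recip` is dictated by the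
chain rule for `1 / ∂ₙ g`. -/
def tangentDeriv (v : σ → K) : Derivation K (ExtendedPoly σ K) (ExtendedPoly σ K) :=
  mkDerivation K fun o ↦ o.elim
    (-recip ^ 2 * (extend (dirDeriv v (dirDeriv n g)) -
      recip * extend (dirDeriv v g) * extend (dirDeriv n (dirDeriv n g))))
    fun i ↦ C (v i) - recip * extend (dirDeriv v g) * C (n i)

lemma tangentDeriv_X_some (v : σ → K) (i : σ) :
    tangentDeriv g n v (X (some i)) = C (v i) - recip * extend (dirDeriv v g) * C (n i) :=
  mkDerivation_X _ _ _

lemma tangentDeriv_extend (v : σ → K) (f : MvPolynomial σ K) :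
    tangentDeriv g n v (extend f) =
      extend (dirDeriv v f) - recip * extend (dirDeriv v g) * extend (dirDeriv n f) := by
  induction f using MvPolynomial.induction_on with
  | C r => simp
  | add f h hf hh =>
    simp only [map_add, hf, hh]
    ring
  | mul_X f i hf =>
    simp only [map_mul, Derivation.leibniz, hf, extend_X, tangentDeriv_X_some, dirDeriv_X,
      smul_eq_mul, map_add, extend_C]
    ring

lemma tangentDeriv_recip (v : σ → K) :
    tangentDeriv g n v recip = -recip ^ 2 * tangentDeriv g n v (extend (dirDeriv n g)) := by
  rw [tangentDeriv_extend]
  exact mkDerivation_X _ _ _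

lemma tangentDeriv_comm (u v : σ → K) (s : ExtendedPoly σ K) :
    tangentDeriv g n u (tangentDeriv g n v s) = tangentDeriv g n v (tangentDeriv g n u s) := by
  have hextend (f) : tangentDeriv g n u (tangentDeriv g n v (extend f)) =
      tangentDeriv g n v (tangentDeriv g n u (extend f)) := by
    simp only [tangentDeriv_recip, tangentDeriv_extend, map_sub, Derivation.leibniz, smul_eq_mul]
    rw [dirDeriv_comm u v f, dirDeriv_comm u v g, dirDeriv_comm n v f, dirDeriv_comm n u f,
      dirDeriv_comm n u g, dirDeriv_comm n v g]
    ring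
  have h : ⁅tangentDeriv g n u, tangentDeriv g n v⁆ = 0 := by
    refine derivation_ext fun i ↦ ?_
    rw [Derivation.commutator_apply, Derivation.zero_apply, sub_eq_zero]
    cases i with
    | some i => exact extend_X (K := K) i ▸ hextend (X i)
    | none =>
      change tangentDeriv g n u (tangentDeriv g n v recip) =
        tangentDeriv g n v (tangentDeriv g n u recip)
      simp only [tangentDeriv_recip, Derivation.leibniz, hextend (dirDeriv n g), map_neg, pow_two,
        smul_eq_mul]
      ring
  rw [← sub_eq_zero, ← Derivation.commutator_apply, h, Derivation.zero_apply]

lemma tangentDeriv_add (u v : σ → K) :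
    tangentDeriv g n (u + v) = tangentDeriv g n u + tangentDeriv g n v := by
  refine derivation_ext fun i ↦ ?_
  cases i with
  | some i =>
    simp only [Derivation.add_apply, tangentDeriv_X_some, dirDeriv_add, Pi.add_apply, map_add]
    ring
  | none =>
    change tangentDeriv g n (u + v) recip = tangentDeriv g n u recip + tangentDeriv g n v recip
    simp only [tangentDeriv_recip, tangentDeriv_extend, dirDeriv_add, Derivation.add_apply,
      map_add]
    ring

lemma tangentDeriv_smul (r : K) (v : σ → K) :
    tangentDeriv g n (r • v) = r • tangentDeriv g n v := by
  refine derivation_ext fun i ↦ ?_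
  cases i with
  | some i =>
    simp only [Derivation.smul_apply, tangentDeriv_X_some, dirDeriv_smul, Pi.smul_apply,
      smul_eq_mul, map_mul, smul_eq_C_mul, extend_C]
    ring
  | none =>
    change tangentDeriv g n (r • v) recip = r • tangentDeriv g n v recip
    simp only [tangentDeriv_recip, tangentDeriv_extend, dirDeriv_smul, Derivation.smul_apply,
      smul_eq_C_mul, map_mul, extend_C]
    ring

/-- The ideal of the hypersurface `g = 0` away from `∂ₙ g = 0`. -/
def surfaceIdeal : Ideal (ExtendedPoly σ K) :=
  Ideal.span {extend g, 1 - recip * extend (dirDeriv n g)}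

lemma extend_mem_surfaceIdeal : extend g ∈ surfaceIdeal g n := Ideal.subset_span (by simp)

lemma one_sub_mem_surfaceIdeal : 1 - recip * extend (dirDeriv n g) ∈ surfaceIdeal g n :=
  Ideal.subset_span (by simp)

lemma one_sub_pow_mem_surfaceIdeal (j : ℕ) :
    1 - (recip * extend (dirDeriv n g)) ^ j ∈ surfaceIdeal g n :=
  Ideal.mem_of_dvd _ (one_sub_dvd_one_sub_pow _ _) (one_sub_mem_surfaceIdeal g n)

variable {g n}

lemma tangentDeriv_mem_surfaceIdeal (v : σ → K) {s : ExtendedPoly σ K}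
    (hs : s ∈ surfaceIdeal g n) : tangentDeriv g n v s ∈ surfaceIdeal g n := by
  have hmul (r) : r * (1 - recip * extend (dirDeriv n g)) ∈ surfaceIdeal g n :=
    Ideal.mul_mem_left _ r (one_sub_mem_surfaceIdeal g n)
  rw [surfaceIdeal] at hs
  induction hs using Submodule.span_induction with
  | mem s hs =>
    rcases hs with rfl | rfl
    · convert hmul (extend (dirDeriv v g)) using 1
      rw [tangentDeriv_extend]
      ring
    · convert hmul (-recip * tangentDeriv g n v (extend (dirDeriv n g))) using 1
      simp only [map_sub, Derivation.map_one_eq_zero, Derivation.leibniz, tangentDeriv_recip,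
        smul_eq_mul]
      ring
  | zero => simp
  | add s t _ _ hs ht => exact map_add (tangentDeriv g n v) s t ▸ Ideal.add_mem _ hs ht
  | smul a s hs h =>
    rw [smul_eq_mul, Derivation.leibniz]
    exact Ideal.add_mem _ (Ideal.mul_mem_left _ _ h) (Ideal.mul_mem_right _ _ hs)

section Values

variable (g n)

/-- The germ at `t = 0` of the function `t ↦ s (p + t • v)`, where `recip` is `1 / ∂ₙ g`; the
inverse of a power series with constant coefficient `0` is `0`, so this is meaningful only if
`∂ₙ g` does not vanish at `p`. -/
def lineGerm (p v : σ → K) : ExtendedPoly σ K →ₐ[K] K⟦X⟧ :=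
  aeval fun o ↦ o.elim ((restrictLine p v (dirDeriv n g) : K⟦X⟧)⁻¹)
    fun i ↦ (restrictLine p v (X i) : K⟦X⟧)

/-- The value at the point `x`, where `recip` is `1 / ∂ₙ g`. -/
def valueAt (x : σ → K) : ExtendedPoly σ K →ₐ[K] K :=
  aeval fun o ↦ o.elim (eval x (dirDeriv n g))⁻¹ x

variable {g n} {p v x : σ → K}

lemma lineGerm_recip (p v : σ → K) :
    lineGerm g n p v recip = (restrictLine p v (dirDeriv n g) : K⟦X⟧)⁻¹ := by
  simp [lineGerm, recip]

lemma lineGerm_extend (p v : σ → K) (f : MvPolynomial σ K) :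
    lineGerm g n p v (extend f) = restrictLine p v f := by
  have h : (lineGerm g n p v).comp extend =
      (Polynomial.coeToPowerSeries.algHom K).comp (restrictLine p v) := by
    refine MvPolynomial.algHom_ext fun i ↦ ?_
    simp [lineGerm, extend_X, Polynomial.coeToPowerSeries.algHom_apply]
  simpa [Polynomial.coeToPowerSeries.algHom_apply] using DFunLike.congr_fun h f

lemma valueAt_recip (x : σ → K) : valueAt g n x recip = (eval x (dirDeriv n g))⁻¹ := by
  simp [valueAt, recip]

lemma constantCoeff_restrictLine (p v : σ → K) (f : MvPolynomial σ K) :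
    PowerSeries.constantCoeff (restrictLine p v f : K⟦X⟧) = eval p f := by
  rw [Polynomial.constantCoeff_coe, Polynomial.coeff_zero_eq_eval_zero, eval_restrictLine,
    zero_smul, add_zero]

lemma constantCoeff_lineGerm (p v : σ → K) (s : ExtendedPoly σ K) :
    PowerSeries.constantCoeff (lineGerm g n p v s) = valueAt g n p s := by
  induction s using MvPolynomial.induction_on with
  | C r => simp [lineGerm, valueAt]
  | add s t hs ht => simp only [map_add, hs, ht]
  | mul_X s i hs =>
    rw [map_mul, map_mul, map_mul, hs]
    congr 1
    cases i with
    | some i =>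
      rw [← extend_X, lineGerm_extend, constantCoeff_restrictLine]
      simp [valueAt, extend_X]
    | none =>
      change PowerSeries.constantCoeff (lineGerm g n p v recip) = valueAt g n p recip
      rw [lineGerm_recip, PowerSeries.constantCoeff_inv, constantCoeff_restrictLine, valueAt_recip]

lemma valueAt_extend (x : σ → K) (f : MvPolynomial σ K) :
    valueAt g n x (extend f) = eval x f := by
  rw [← constantCoeff_lineGerm x 0, lineGerm_extend, constantCoeff_restrictLine]

lemma lineGerm_recip_mul (hn : eval p (dirDeriv n g) ≠ 0) :
    lineGerm g n p v recip * (restrictLine p v (dirDeriv n g) : K⟦X⟧) = 1 := by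
  rw [lineGerm_recip]
  exact PowerSeries.inv_mul_cancel _ (by rwa [constantCoeff_restrictLine])

lemma lineGerm_eq_zero_of_mem_surfaceIdeal (hg : restrictLine p v g = 0)
    (hn : eval p (dirDeriv n g) ≠ 0) {s : ExtendedPoly σ K} (hs : s ∈ surfaceIdeal g n) :
    lineGerm g n p v s = 0 := by
  suffices h : surfaceIdeal g n ≤ RingHom.ker (lineGerm g n p v) from h hs
  rw [surfaceIdeal, Ideal.span_le]
  rintro s (rfl | rfl)
  · simp [RingHom.mem_ker, lineGerm_extend, hg]
  · simp [RingHom.mem_ker, lineGerm_extend, lineGerm_recip_mul hn]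

lemma valueAt_eq_zero_of_mem_surfaceIdeal (hg : eval x g = 0) (hn : eval x (dirDeriv n g) ≠ 0)
    {s : ExtendedPoly σ K} (hs : s ∈ surfaceIdeal g n) : valueAt g n x s = 0 := by
  suffices h : surfaceIdeal g n ≤ RingHom.ker (valueAt g n x) from h hs
  rw [surfaceIdeal, Ideal.span_le]
  rintro s (rfl | rfl)
  · simp [RingHom.mem_ker, valueAt_extend, hg]
  · simp [RingHom.mem_ker, valueAt_extend, valueAt_recip, hn]

lemma derivative_lineGerm (hg : restrictLine p v g = 0) (s : ExtendedPoly σ K) :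
    d⁄dX K (lineGerm g n p v s) = lineGerm g n p v (tangentDeriv g n v s) := by
  have hv : restrictLine p v (dirDeriv v g) = 0 := by
    rw [← derivative_restrictLine, hg, Polynomial.derivative_zero]
  have hextend (f) : d⁄dX K (lineGerm g n p v (extend f)) =
      lineGerm g n p v (tangentDeriv g n v (extend f)) := by
    rw [lineGerm_extend, PowerSeries.derivative_coe, derivative_restrictLine, tangentDeriv_extend]
    simp [lineGerm_extend, hv]
  induction s using MvPolynomial.induction_on with
  | C r => simp [lineGerm]
  | add s t hs ht => simp only [map_add, hs, ht]
  | mul_X s i hs =>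
    have hX : d⁄dX K (lineGerm g n p v (X i)) = lineGerm g n p v (tangentDeriv g n v (X i)) := by
      cases i with
      | some i => exact extend_X (K := K) i ▸ hextend (X i)
      | none =>
        change d⁄dX K (lineGerm g n p v recip) = lineGerm g n p v (tangentDeriv g n v recip)
        rw [lineGerm_recip, PowerSeries.derivative_inv', tangentDeriv_recip, map_mul, ← hextend]
        simp [lineGerm_extend, lineGerm_recip]
    simp [Derivation.leibniz, hs, hX]

lemma lineGerm_tangentDeriv_self (hn : eval p (dirDeriv n g) ≠ 0) (s : ExtendedPoly σ K) :
    lineGerm g n p v (tangentDeriv g n n s) = 0 := by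
  have hextend (f) : lineGerm g n p v (tangentDeriv g n n (extend f)) = 0 := by
    rw [tangentDeriv_extend, map_sub, map_mul, map_mul, lineGerm_extend, lineGerm_extend,
      lineGerm_recip_mul hn]
    ring
  induction s using MvPolynomial.induction_on with
  | C r => simp
  | add s t hs ht => simp only [map_add, hs, ht, add_zero]
  | mul_X s i hs =>
    have hX : lineGerm g n p v (tangentDeriv g n n (X i)) = 0 := by
      cases i with
      | some i => exact extend_X (K := K) i ▸ hextend (X i)
      | none =>
        change lineGerm g n p v (tangentDeriv g n n recip) = 0
        rw [tangentDeriv_recip, map_mul, hextend, mul_zero]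
    simp [Derivation.leibniz, hs, hX]

lemma valueAt_tangentDeriv_self (hn : eval x (dirDeriv n g) ≠ 0) (s : ExtendedPoly σ K) :
    valueAt g n x (tangentDeriv g n n s) = 0 := by
  rw [← constantCoeff_lineGerm x 0, lineGerm_tangentDeriv_self hn, map_zero]

end Values

section PoleOrder

/-- The span of the fractions `N / (∂ₙ g) ^ j` with `j ≤ m` and `deg N ≤ j * deg g`. -/
def poleOrderLE (g : MvPolynomial σ K) (m : ℕ) : Submodule K (ExtendedPoly σ K) :=
  Submodule.span K
    {s | ∃ j N, j ≤ m ∧ N.totalDegree ≤ j * g.totalDegree ∧ s = recip ^ j * extend N}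

variable {m k : ℕ} {s t : ExtendedPoly σ K}

lemma recip_pow_mul_mem_poleOrderLE {j : ℕ} {N : MvPolynomial σ K} (hj : j ≤ m)
    (hN : N.totalDegree ≤ j * g.totalDegree) : recip ^ j * extend N ∈ poleOrderLE g m :=
  Submodule.subset_span ⟨j, N, hj, hN, rfl⟩

lemma mul_mem_poleOrderLE (hs : s ∈ poleOrderLE g m) (ht : t ∈ poleOrderLE g k) :
    s * t ∈ poleOrderLE g (m + k) := by
  have h := Submodule.mul_mem_mul hs ht
  rw [poleOrderLE, poleOrderLE, Submodule.span_mul_span] at h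
  refine Submodule.span_mono ?_ h
  rintro _ ⟨_, ⟨j, N, hj, hN, rfl⟩, _, ⟨i, M, hi, hM, rfl⟩, rfl⟩
  refine ⟨j + i, N * M, by omega, (totalDegree_mul _ _).trans ?_, ?_⟩
  · rw [add_mul]
    omega
  · simp only [map_mul]
    ring

lemma tangentDeriv_recip_pow_mul_extend (v : σ → K) (j : ℕ) (N : MvPolynomial σ K) :
    tangentDeriv g n v (recip ^ j * extend N) =
      -(j • (recip ^ (j + 1) * extend (dirDeriv v (dirDeriv n g) * N)))
        + j • (recip ^ (j + 2) * extend (dirDeriv v g * dirDeriv n (dirDeriv n g) * N))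
        + recip ^ j * extend (dirDeriv v N)
        - recip ^ (j + 1) * extend (dirDeriv v g * dirDeriv n N) := by
  rw [Derivation.leibniz, Derivation.leibniz_pow, tangentDeriv_recip, tangentDeriv_extend,
    tangentDeriv_extend]
  simp only [smul_eq_mul, map_mul, nsmul_eq_mul]
  cases j with
  | zero =>
    simp only [Nat.cast_zero]
    ring
  | succ j =>
    simp only [Nat.add_sub_cancel]
    ring

lemma tangentDeriv_mem_poleOrderLE (v : σ → K) (hs : s ∈ poleOrderLE g m) :
    tangentDeriv g n v s ∈ poleOrderLE g (m + 2) := by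
  rw [poleOrderLE] at hs
  induction hs using Submodule.span_induction with
  | zero => simp
  | add s t _ _ hs ht => exact map_add (tangentDeriv g n v) s t ▸ Submodule.add_mem _ hs ht
  | smul a s _ h => exact (tangentDeriv g n v).map_smul a s ▸ Submodule.smul_mem _ a h
  | mem s hs =>
    obtain ⟨j, N, hj, hN, rfl⟩ := hs
    have hgv := totalDegree_dirDeriv_le v g
    have hgn := totalDegree_dirDeriv_le n g
    have hgvn := totalDegree_dirDeriv_le v (dirDeriv n g)
    have hgnn := totalDegree_dirDeriv_le n (dirDeriv n g)
    have hNv := totalDegree_dirDeriv_le v N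
    have hNn := totalDegree_dirDeriv_le n N
    rw [tangentDeriv_recip_pow_mul_extend]
    refine sub_mem (add_mem (add_mem (neg_mem (nsmul_mem ?_ _)) (nsmul_mem ?_ _)) ?_) ?_ <;>
      refine recip_pow_mul_mem_poleOrderLE (by omega) ?_
    · refine (totalDegree_mul _ _).trans ?_
      rw [add_mul]
      omega
    · refine (totalDegree_mul _ _).trans
        ((Nat.add_le_add_right (totalDegree_mul _ _) _).trans ?_)
      rw [add_mul]
      omega
    · omega
    · refine (totalDegree_mul _ _).trans ?_
      rw [add_mul]
      omega

lemma exists_recip_pow_mul_extend_numerator {j : ℕ} {N : MvPolynomial σ K} (hj : j ≤ m)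
    (hN : N.totalDegree ≤ j * g.totalDegree) :
    ∃ M : MvPolynomial σ K, M.totalDegree ≤ m * g.totalDegree ∧
      recip ^ j * extend N * extend (dirDeriv n g) ^ m - extend M ∈ surfaceIdeal g n := by
  obtain ⟨i, rfl⟩ := Nat.exists_eq_add_of_le hj
  refine ⟨N * dirDeriv n g ^ i, ?_, ?_⟩
  · have hpow : (dirDeriv n g ^ i).totalDegree ≤ i * g.totalDegree :=
      (totalDegree_pow _ _).trans
        (Nat.mul_le_mul_left _ ((totalDegree_dirDeriv_le n g).trans (Nat.sub_le _ _)))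
    rw [add_mul]
    exact (totalDegree_mul _ _).trans (add_le_add hN hpow)
  · convert Ideal.mul_mem_left _ (-(extend N * extend (dirDeriv n g) ^ i))
      (one_sub_pow_mem_surfaceIdeal g n j) using 1
    simp only [map_mul, map_pow]
    ring

lemma exists_numerator (hs : s ∈ poleOrderLE g m) :
    ∃ N : MvPolynomial σ K, N.totalDegree ≤ m * g.totalDegree ∧
      s * extend (dirDeriv n g) ^ m - extend N ∈ surfaceIdeal g n := by
  rw [poleOrderLE] at hs
  induction hs using Submodule.span_induction with
  | zero => exact ⟨0, by simp, by simp⟩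
  | add s t _ _ hs ht =>
    obtain ⟨N, hN, hs⟩ := hs
    obtain ⟨M, hM, ht⟩ := ht
    refine ⟨N + M, (totalDegree_add _ _).trans (max_le hN hM), ?_⟩
    convert Ideal.add_mem _ hs ht using 1
    rw [map_add]
    ring
  | smul a s _ h =>
    obtain ⟨N, hN, h⟩ := h
    refine ⟨a • N, (totalDegree_smul_le _ _).trans hN, ?_⟩
    convert Ideal.mul_mem_left _ (C a) h using 1
    rw [map_smul, smul_eq_C_mul, smul_eq_C_mul]
    ring
  | mem s hs =>
    obtain ⟨j, N, hj, hN, rfl⟩ := hs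
    exact exists_recip_pow_mul_extend_numerator hj hN

end PoleOrder

end TangentialCalculus

end GuthKatz

namespace GuthKatz

open MvPolynomial
open scoped PowerSeries

/-! ### Lines contained in a hypersurface and the flecnode function -/

section SecondFundamentalForm

variable {σ K : Type*} [Field K] (g : MvPolynomial σ K) (n : σ → K)

/-- The function `-∂ᵥ g / ∂ₙ g`: the slope in direction `v` of the hypersurface `g = 0`, viewed
as a graph in direction `n`. -/
def slope (v : σ → K) : ExtendedPoly σ K := -(recip * extend (dirDeriv v g))

/-- The Hessian of the hypersurface `g = 0`, viewed as a graph in direction `n`. -/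
def hess (u v : σ → K) : ExtendedPoly σ K := tangentDeriv g n u (slope g v)

/-- Let `q` be the quadratic form of second derivatives and `c` the cubic form of third derivatives
of the hypersurface `g = 0`, both restricted to the plane of `b` and `e`. This is `(hess b b) ^ 2`
times the linear coefficient of the remainder of `c(p, 1)` on division by `q(p, 1)`, so it vanishes
where `q` divides `c`. -/
def flecnode (b e : σ → K) : ExtendedPoly σ K :=
  tangentDeriv g n b (hess g n b b) * (4 * hess g n b e ^ 2 - hess g n b b * hess g n e e)
    - 6 * (hess g n b b * hess g n b e * tangentDeriv g n b (hess g n b e))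
    + 3 * (hess g n b b ^ 2 * tangentDeriv g n e (hess g n b e))

lemma hess_comm (u v : σ → K) : hess g n u v = hess g n v u := by
  simp only [hess, slope, map_neg, Derivation.leibniz, tangentDeriv_recip, tangentDeriv_extend,
    smul_eq_mul]
  rw [dirDeriv_comm u v g, dirDeriv_comm u n g, dirDeriv_comm v n g]
  ring

lemma tangentDeriv_hess_left_comm (t u v : σ → K) :
    tangentDeriv g n t (hess g n u v) = tangentDeriv g n u (hess g n t v) :=
  tangentDeriv_comm g n t u _

lemma slope_add (u v : σ → K) : slope g (u + v) = slope g u + slope g v := by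
  simp only [slope, dirDeriv_add, Derivation.add_apply, map_add]
  ring

lemma slope_smul (r : K) (v : σ → K) : slope g (r • v) = r • slope g v := by
  simp [slope, dirDeriv_smul]

lemma slope_mem_poleOrderLE (v : σ → K) : slope g v ∈ poleOrderLE g 1 := by
  have hdeg : (dirDeriv v g).totalDegree ≤ 1 * g.totalDegree := by
    have := totalDegree_dirDeriv_le v g
    omega
  simpa [slope] using recip_pow_mul_mem_poleOrderLE le_rfl hdeg

lemma hess_mem_poleOrderLE (u v : σ → K) : hess g n u v ∈ poleOrderLE g 3 :=
  tangentDeriv_mem_poleOrderLE (m := 1) u (slope_mem_poleOrderLE g v)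

lemma flecnode_mem_poleOrderLE (b e : σ → K) : flecnode g n b e ∈ poleOrderLE g 11 := by
  have hhess (u v u' v') : hess g n u v * hess g n u' v' ∈ poleOrderLE g 6 :=
    mul_mem_poleOrderLE (m := 3) (k := 3) (hess_mem_poleOrderLE g n u v)
      (hess_mem_poleOrderLE g n u' v')
  have hthird (t u v) : tangentDeriv g n t (hess g n u v) ∈ poleOrderLE g 5 :=
    tangentDeriv_mem_poleOrderLE (m := 3) t (hess_mem_poleOrderLE g n u v)
  have hofNat (k : ℕ) [k.AtLeastTwo] {m : ℕ} {s} (hs : s ∈ poleOrderLE g m) :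
      (ofNat(k) : ExtendedPoly σ K) * s ∈ poleOrderLE g m := by
    rw [← Nat.cast_ofNat, ← nsmul_eq_mul]
    exact nsmul_mem hs k
  simp only [flecnode, pow_two]
  exact add_mem (sub_mem
    (mul_mem_poleOrderLE (m := 5) (k := 6) (hthird _ _ _)
      (sub_mem (hofNat 4 (hhess _ _ _ _)) (hhess _ _ _ _)))
    (hofNat 6 (mul_mem_poleOrderLE (m := 6) (k := 5) (hhess _ _ _ _) (hthird _ _ _))))
    (hofNat 3 (mul_mem_poleOrderLE (m := 6) (k := 5) (hhess _ _ _ _) (hthird _ _ _)))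

variable {g n} {x v w b e : σ → K}

lemma valueAt_slope (v : σ → K) :
    valueAt g n x (slope g v) = -((eval x (dirDeriv n g))⁻¹ * eval x (dirDeriv v g)) := by
  rw [slope, map_neg, map_mul, valueAt_extend, valueAt_recip]

lemma lineGerm_slope_eq_zero (hg : restrictLine x v g = 0) :
    lineGerm g n x v (slope g v) = 0 := by
  have h : restrictLine x v (dirDeriv v g) = 0 := by
    rw [← derivative_restrictLine, hg, Polynomial.derivative_zero]
  simp [slope, lineGerm_extend, h]

lemma lineGerm_hess_eq_zero (hg : restrictLine x v g = 0) :
    lineGerm g n x v (hess g n v v) = 0 := by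
  rw [hess, ← derivative_lineGerm hg, lineGerm_slope_eq_zero hg, map_zero]

lemma lineGerm_tangentDeriv_hess_eq_zero (hg : restrictLine x v g = 0) :
    lineGerm g n x v (tangentDeriv g n v (hess g n v v)) = 0 := by
  rw [← derivative_lineGerm hg, lineGerm_hess_eq_zero hg, map_zero]

section Frame

variable {v₁ v₂ v₃ w₁ w₂ w₃ : K}

lemma eq_slope_of_restrictLine_eq_zero (hv : v = v₁ • b + v₂ • e + v₃ • n)
    (hg : restrictLine x v g = 0) (hn : eval x (dirDeriv n g) ≠ 0) :
    v₃ = v₁ * valueAt g n x (slope g b) + v₂ * valueAt g n x (slope g e) := by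
  have h := congrArg PowerSeries.constantCoeff (lineGerm_slope_eq_zero (n := n) hg)
  have hslope : valueAt g n x (slope g n) = -1 := by rw [valueAt_slope, inv_mul_cancel₀ hn]
  rw [constantCoeff_lineGerm, hv, slope_add, slope_add, slope_smul, slope_smul, slope_smul] at h
  simp only [map_add, map_smul, smul_eq_mul, hslope, map_zero] at h
  linear_combination -h

lemma valueAt_tangentDeriv_frame (hv : v = v₁ • b + v₂ • e + v₃ • n)
    (hn : eval x (dirDeriv n g) ≠ 0) (s : ExtendedPoly σ K) :
    valueAt g n x (tangentDeriv g n v s) =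
      v₁ * valueAt g n x (tangentDeriv g n b s) + v₂ * valueAt g n x (tangentDeriv g n e s) := by
  rw [hv, tangentDeriv_add, tangentDeriv_add, tangentDeriv_smul, tangentDeriv_smul,
    tangentDeriv_smul]
  simp only [Derivation.add_apply, Derivation.smul_apply, map_add, map_smul, smul_eq_mul,
    valueAt_tangentDeriv_self hn, mul_zero, add_zero]

lemma quadratic_of_restrictLine_eq_zero (hv : v = v₁ • b + v₂ • e + v₃ • n)
    (hg : restrictLine x v g = 0) (hn : eval x (dirDeriv n g) ≠ 0) :
    v₁ ^ 2 * valueAt g n x (hess g n b b) + 2 * v₁ * v₂ * valueAt g n x (hess g n b e)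
      + v₂ ^ 2 * valueAt g n x (hess g n e e) = 0 := by
  have h := congrArg PowerSeries.constantCoeff (lineGerm_hess_eq_zero (n := n) hg)
  have hexpand (u) := valueAt_tangentDeriv_frame hv hn (slope g u)
  simp only [← hess.eq_1] at hexpand
  rw [constantCoeff_lineGerm, hexpand, hess_comm g n b, hess_comm g n e, hexpand, hexpand,
    hess_comm g n e b, map_zero] at h
  linear_combination h

lemma cubic_of_restrictLine_eq_zero (hv : v = v₁ • b + v₂ • e + v₃ • n)
    (hg : restrictLine x v g = 0) (hn : eval x (dirDeriv n g) ≠ 0) :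
    v₁ ^ 3 * valueAt g n x (tangentDeriv g n b (hess g n b b))
      + 3 * v₁ ^ 2 * v₂ * valueAt g n x (tangentDeriv g n b (hess g n b e))
      + 3 * v₁ * v₂ ^ 2 * valueAt g n x (tangentDeriv g n e (hess g n b e))
      + v₂ ^ 3 * valueAt g n x (tangentDeriv g n e (hess g n e e)) = 0 := by
  have h := congrArg PowerSeries.constantCoeff (lineGerm_tangentDeriv_hess_eq_zero (n := n) hg)
  have hexpand := valueAt_tangentDeriv_frame hv hn
  have hleft (t u) : tangentDeriv g n t (hess g n v u) = tangentDeriv g n v (hess g n t u) :=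
    tangentDeriv_hess_left_comm g n t v u
  have hright (t u) : tangentDeriv g n t (hess g n u v) = tangentDeriv g n v (hess g n t u) := by
    rw [hess_comm, hleft, hess_comm]
  have hbe : tangentDeriv g n e (hess g n b b) = tangentDeriv g n b (hess g n b e) := by
    rw [tangentDeriv_hess_left_comm, hess_comm]
  have heb : tangentDeriv g n b (hess g n e e) = tangentDeriv g n e (hess g n b e) :=
    tangentDeriv_hess_left_comm g n b e e
  rw [constantCoeff_lineGerm, hexpand, hleft, hleft, hexpand, hexpand, hright, hright, hright,
    hright, hexpand, hexpand, hexpand, hexpand] at h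
  simp only [hess_comm g n e b, hbe, heb, map_zero] at h
  linear_combination h

lemma det_ne_zero_of_linearIndependent (hv : v = v₁ • b + v₂ • e + v₃ • n)
    (hw : w = w₁ • b + w₂ • e + w₃ • n) (hgv : restrictLine x v g = 0)
    (hgw : restrictLine x w g = 0) (hn : eval x (dirDeriv n g) ≠ 0)
    (hvw : LinearIndependent K ![v, w]) : v₁ * w₂ - v₂ * w₁ ≠ 0 := by
  intro hdet
  have hv₃ := eq_slope_of_restrictLine_eq_zero hv hgv hn
  have hw₃ := eq_slope_of_restrictLine_eq_zero hw hgw hn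
  generalize valueAt g n x (slope g b) = y at hv₃ hw₃
  generalize valueAt g n x (slope g e) = z at hv₃ hw₃
  rw [LinearIndependent.pair_iff] at hvw
  have h₂ : w₂ • v + -v₂ • w = (v₁ * w₂ - v₂ * w₁) • (b + y • n) := by
    rw [hv, hw, hv₃, hw₃]
    module
  have h₁ : w₁ • v + -v₁ • w = -(v₁ * w₂ - v₂ * w₁) • (e + z • n) := by
    rw [hv, hw, hv₃, hw₃]
    module
  rw [hdet, neg_zero, zero_smul] at h₁
  rw [hdet, zero_smul] at h₂
  obtain ⟨hw₁, -⟩ := hvw _ _ h₁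
  obtain ⟨hw₂, -⟩ := hvw _ _ h₂
  have hw0 : w = 0 := by rw [hw, hw₃, hw₁, hw₂]; module
  exact one_ne_zero (hvw 0 1 (by rw [hw0]; simp)).2

end Frame

lemma remainder_eq_zero_of_common_zeros {q₀ q₁ q₂ c₀ c₁ c₂ c₃ v₁ v₂ w₁ w₂ : K}
    (hqv : v₁ ^ 2 * q₀ + 2 * v₁ * v₂ * q₁ + v₂ ^ 2 * q₂ = 0)
    (hcv : v₁ ^ 3 * c₀ + 3 * v₁ ^ 2 * v₂ * c₁ + 3 * v₁ * v₂ ^ 2 * c₂ + v₂ ^ 3 * c₃ = 0)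
    (hqw : w₁ ^ 2 * q₀ + 2 * w₁ * w₂ * q₁ + w₂ ^ 2 * q₂ = 0)
    (hcw : w₁ ^ 3 * c₀ + 3 * w₁ ^ 2 * w₂ * c₁ + 3 * w₁ * w₂ ^ 2 * c₂ + w₂ ^ 3 * c₃ = 0)
    (hvw : v₁ * w₂ - v₂ * w₁ ≠ 0) :
    c₀ * (4 * q₁ ^ 2 - q₀ * q₂) - 6 * (q₀ * q₁ * c₁) + 3 * (q₀ ^ 2 * c₂) = 0 := by
  let δ := v₁ * w₂ - v₂ * w₁
  -- the polar forms `q(v, w)`, `c(v, v, w)` and `c(v, w, w)`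
  let Q := v₁ * w₁ * q₀ + (v₁ * w₂ + v₂ * w₁) * q₁ + v₂ * w₂ * q₂
  let C₁ := v₁ ^ 2 * w₁ * c₀ + (v₁ ^ 2 * w₂ + 2 * v₁ * v₂ * w₁) * c₁
    + (2 * v₁ * v₂ * w₂ + v₂ ^ 2 * w₁) * c₂ + v₂ ^ 2 * w₂ * c₃
  let C₂ := v₁ * w₁ ^ 2 * c₀ + (2 * v₁ * w₁ * w₂ + v₂ * w₁ ^ 2) * c₁
    + (v₁ * w₂ ^ 2 + 2 * v₂ * w₁ * w₂) * c₂ + v₂ * w₂ ^ 2 * c₃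
  have hq₀ : δ ^ 2 * q₀ = -2 * v₂ * w₂ * Q := by
    linear_combination w₂ ^ 2 * hqv + v₂ ^ 2 * hqw
  have hq₁ : δ ^ 2 * q₁ = (v₁ * w₂ + v₂ * w₁) * Q := by
    linear_combination -w₁ * w₂ * hqv - v₁ * v₂ * hqw
  have hq₂ : δ ^ 2 * q₂ = -2 * v₁ * w₁ * Q := by
    linear_combination w₁ ^ 2 * hqv + v₁ ^ 2 * hqw
  have hc₀ : δ ^ 3 * c₀ = -3 * w₂ ^ 2 * v₂ * C₁ + 3 * w₂ * v₂ ^ 2 * C₂ := by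
    linear_combination w₂ ^ 3 * hcv - v₂ ^ 3 * hcw
  have hc₁ : δ ^ 3 * c₁ = (w₂ ^ 2 * v₁ + 2 * w₂ * v₂ * w₁) * C₁
      - (v₂ ^ 2 * w₁ + 2 * w₂ * v₂ * v₁) * C₂ := by
    linear_combination -w₂ ^ 2 * w₁ * hcv + v₂ ^ 2 * v₁ * hcw
  have hc₂ : δ ^ 3 * c₂ = -(2 * w₂ * v₁ * w₁ + v₂ * w₁ ^ 2) * C₁
      + (w₂ * v₁ ^ 2 + 2 * v₂ * v₁ * w₁) * C₂ := by
    linear_combination w₂ * w₁ ^ 2 * hcv - v₂ * v₁ ^ 2 * hcw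
  refine (mul_eq_zero.mp ?_).resolve_left (pow_ne_zero 7 hvw)
  calc δ ^ 7 * (c₀ * (4 * q₁ ^ 2 - q₀ * q₂) - 6 * (q₀ * q₁ * c₁) + 3 * (q₀ ^ 2 * c₂))
      = δ ^ 3 * c₀ * (4 * (δ ^ 2 * q₁) ^ 2 - δ ^ 2 * q₀ * (δ ^ 2 * q₂))
        - 6 * (δ ^ 2 * q₀ * (δ ^ 2 * q₁) * (δ ^ 3 * c₁))
        + 3 * ((δ ^ 2 * q₀) ^ 2 * (δ ^ 3 * c₂)) := by ring
    _ = 0 := by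
      rw [hq₀, hq₁, hq₂, hc₀, hc₁, hc₂]
      ring

lemma valueAt_flecnode_eq_zero {v₁ v₂ v₃ w₁ w₂ w₃ : K} (hv : v = v₁ • b + v₂ • e + v₃ • n)
    (hw : w = w₁ • b + w₂ • e + w₃ • n) (hgv : restrictLine x v g = 0)
    (hgw : restrictLine x w g = 0) (hn : eval x (dirDeriv n g) ≠ 0)
    (hvw : LinearIndependent K ![v, w]) : valueAt g n x (flecnode g n b e) = 0 := by
  simp only [flecnode, map_add, map_sub, map_mul, map_pow, map_ofNat]
  exact remainder_eq_zero_of_common_zeros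
    (quadratic_of_restrictLine_eq_zero hv hgv hn) (cubic_of_restrictLine_eq_zero hv hgv hn)
    (quadratic_of_restrictLine_eq_zero hw hgw hn) (cubic_of_restrictLine_eq_zero hw hgw hn)
    (det_ne_zero_of_linearIndependent hv hw hgv hgw hn hvw)

end SecondFundamentalForm

lemma eq_repr_combination {K M : Type*} [Ring K] [AddCommGroup M] [Module K M]
    (B : Module.Basis (Fin 3) K M) (v : M) :
    v = B.repr v 0 • B 0 + B.repr v 1 • B 1 + B.repr v 2 • B 2 := by
  rw [← Fin.sum_univ_three fun i ↦ B.repr v i • B i, B.sum_repr]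

lemma Line.linearIndependent_dir {l m : Line} {x : Space} (hxl : x ∈ l) (hxm : x ∈ m)
    (hlm : l ≠ m) : LinearIndependent ℝ ![l.dir, m.dir] := by
  rw [LinearIndependent.pair_iff]
  intro s t hst
  have ht : t = -s := by
    have h := congrFun hst 2
    simp only [Line.dir, Pi.add_apply, Pi.smul_apply, Matrix.cons_val, smul_eq_mul, mul_one,
      Pi.zero_apply] at h
    linarith
  suffices hs : s = 0 by simp [ht, hs]
  by_contra hs
  have hdir : l.dir = m.dir := smul_right_injective _ hs <| by
    rwa [ht, neg_smul, ← sub_eq_add_neg, sub_eq_zero] at hst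
  refine hlm (Line.eq_of_two_points hxl (Line.add_smul_dir_mem hxl 1) hxm
    (hdir ▸ Line.add_smul_dir_mem hxm 1) fun h ↦ ?_)
  simpa [Line.dir] using congrFun h 2

section ManyLines

variable {g : SpacePoly} {n : Space}

lemma not_dvd_dirDeriv (hn : dirDeriv n g ≠ 0) : ¬ g ∣ dirDeriv n g := fun hdvd ↦ by
  have hle := totalDegree_le_of_dvd_of_isDomain hdvd hn
  have hdeg := totalDegree_dirDeriv_le n g
  have hzero : g.totalDegree = 0 := by omega
  rw [totalDegree_eq_zero_iff_eq_C.mp hzero, dirDeriv_C] at hn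
  exact hn rfl

lemma eval_numerator_flecnode_mul_eq_zero (B : Module.Basis (Fin 3) ℝ Space) {N : SpacePoly} {k : ℕ}
    (hN : flecnode g (B 2) (B 0) (B 1) * extend (dirDeriv (B 2) g) ^ k - extend N ∈
      surfaceIdeal g (B 2)) {l m : Line} {x : Space} (hl : VanishesOn g l) (hm : VanishesOn g m)
    (hxl : x ∈ l) (hxm : x ∈ m) (hlm : l ≠ m) : eval x (N * dirDeriv (B 2) g) = 0 := by
  by_cases hn : eval x (dirDeriv (B 2) g) = 0
  · rw [map_mul, hn, mul_zero]
  have hflec : valueAt g (B 2) x (flecnode g (B 2) (B 0) (B 1)) = 0 :=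
    valueAt_flecnode_eq_zero (eq_repr_combination B l.dir) (eq_repr_combination B m.dir)
      ((vanishesOn_iff_restrictLine_eq_zero hxl).mp hl)
      ((vanishesOn_iff_restrictLine_eq_zero hxm).mp hm) hn (Line.linearIndependent_dir hxl hxm hlm)
  have h := valueAt_eq_zero_of_mem_surfaceIdeal (hl.eval_eq_zero hxl) hn hN
  rw [map_sub, map_mul, hflec, zero_mul, zero_sub, neg_eq_zero, valueAt_extend] at h
  rw [map_mul, h, zero_mul]

lemma mem_surfaceIdeal_of_dvd_numerator {s : ExtendedPoly (Fin 3) ℝ} {N : SpacePoly} {k : ℕ}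
    (hN : s * extend (dirDeriv n g) ^ k - extend N ∈ surfaceIdeal g n) (hdvd : g ∣ N) :
    s ∈ surfaceIdeal g n := by
  have hextend : extend N ∈ surfaceIdeal g n :=
    Ideal.mem_of_dvd _ (map_dvd extend hdvd) (extend_mem_surfaceIdeal g n)
  have hmul : s * extend (dirDeriv n g) ^ k ∈ surfaceIdeal g n := by
    simpa using Ideal.add_mem _ hN hextend
  convert Ideal.add_mem _ (Ideal.mul_mem_left _ s (one_sub_pow_mem_surfaceIdeal g n k))
    (Ideal.mul_mem_left _ (recip ^ k) hmul) using 1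
  ring

theorem flecnode_mem_surfaceIdeal (hg : Irreducible g) {V : Finset Line}
    (hV : ∀ l ∈ V, VanishesOn g l)
    (hT : ∀ l ∈ V, ∃ T : Finset Space, 12 * g.totalDegree < T.card ∧
      ∀ x ∈ T, x ∈ l ∧ ∃ m, m ≠ l ∧ VanishesOn g m ∧ x ∈ m)
    (hcard : 12 * g.totalDegree ^ 2 < V.card) (B : Module.Basis (Fin 3) ℝ Space)
    (hn : dirDeriv (B 2) g ≠ 0) :
    flecnode g (B 2) (B 0) (B 1) ∈ surfaceIdeal g (B 2) := by
  obtain ⟨N, hNdeg, hN⟩ :=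
    exists_numerator (n := B 2) (flecnode_mem_poleOrderLE g (B 2) (B 0) (B 1))
  refine mem_surfaceIdeal_of_dvd_numerator hN ?_
  have hdeg : (N * dirDeriv (B 2) g).totalDegree ≤ 12 * g.totalDegree := by
    have := totalDegree_dirDeriv_le (B 2) g
    exact (totalDegree_mul _ _).trans (by omega)
  have hvanish : ∀ l ∈ V, VanishesOn (N * dirDeriv (B 2) g) l := by
    intro l hl
    obtain ⟨T, hTcard, hT⟩ := hT l hl
    refine vanishesOn_of_totalDegree_lt_card T (fun x hx ↦ (hT x hx).1) (fun x hx ↦ ?_)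
      (hdeg.trans_lt hTcard)
    obtain ⟨hxl, m, hml, hm, hxm⟩ := hT x hx
    exact eval_numerator_flecnode_mul_eq_zero B hN (hV l hl) hm hxl hxm hml.symm
  have hdvd : g ∣ N * dirDeriv (B 2) g := by
    by_contra hndvd
    have hne : N * dirDeriv (B 2) g ≠ 0 := fun h ↦ hndvd (h ▸ dvd_zero g)
    have hbezout := card_le_totalDegree_mul_totalDegree hg.ne_zero hne
      (hg.isRelPrime_iff_not_dvd.mpr hndvd) hV hvanish
    have := Nat.mul_le_mul_left g.totalDegree hdeg
    nlinarith
  exact (hg.prime.dvd_or_dvd hdvd).resolve_right (not_dvd_dirDeriv hn)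

end ManyLines

end GuthKatz

namespace GuthKatz

open MvPolynomial
open scoped PowerSeries

/-! ### The ruling transverse to a line -/

section PowerSeries

variable {K : Type*} [Field K] [CharZero K]

-- The hypothesis says that the Schwarzian derivative of `a` vanishes; it integrates to say that
-- the square of the second derivative is a constant times the cube of the first.
lemma eq_X_of_schwarzian_eq_zero {a : K⟦X⟧}
    (h : 2 * d⁄dX K a * d⁄dX K (d⁄dX K (d⁄dX K a)) = 3 * d⁄dX K (d⁄dX K a) ^ 2)
    (h₀ : PowerSeries.constantCoeff a = 0) (h₁ : PowerSeries.constantCoeff (d⁄dX K a) = 1)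
    (h₂ : PowerSeries.constantCoeff (d⁄dX K (d⁄dX K a)) = 0) : a = PowerSeries.X := by
  set y := d⁄dX K a with hy
  have hinv : y⁻¹ * y = 1 := PowerSeries.inv_mul_cancel _ (by simp [h₁])
  have hconst : d⁄dX K y ^ 2 * y⁻¹ ^ 3 = 0 := by
    refine PowerSeries.derivative.ext ?_ (by simp [h₂])
    rw [map_zero, Derivation.leibniz, PowerSeries.derivative_pow, PowerSeries.derivative_pow,
      PowerSeries.derivative_inv']
    simp only [smul_eq_mul]
    push_cast
    linear_combination y⁻¹ ^ 4 * d⁄dX K y * h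
      - 2 * y⁻¹ ^ 3 * d⁄dX K y * d⁄dX K (d⁄dX K y) * hinv
  have hderiv : d⁄dX K y = 0 := by
    rw [← sq_eq_zero_iff]
    linear_combination y ^ 3 * hconst
      - d⁄dX K y ^ 2 * ((y⁻¹ * y) ^ 2 + y⁻¹ * y + 1) * hinv
  have hone : y = 1 :=
    PowerSeries.derivative.ext (by rw [hderiv, PowerSeries.derivative_one]) (by simp [h₁])
  exact PowerSeries.derivative.ext (by rw [← hy, hone, PowerSeries.derivative_X]) (by simp [h₀])

lemma eq_trunc_of_iterate_derivative_eq_zero {f : K⟦X⟧} {k : ℕ} (h : (d⁄dX K)^[k] f = 0) :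
    f = (PowerSeries.trunc k f : Polynomial K) := by
  ext i
  rw [Polynomial.coeff_coe, PowerSeries.coeff_trunc]
  split_ifs with hi
  · rfl
  obtain ⟨j, rfl⟩ := Nat.exists_eq_add_of_le' (not_lt.mp hi)
  have hcoeff := congrArg (PowerSeries.coeff j) h
  rw [PowerSeries.coeff_iterate_derivative, map_zero] at hcoeff
  exact (mul_eq_zero.mp hcoeff).resolve_left (Nat.cast_ne_zero.mpr (Nat.ascFactorial_pos _ _).ne')

end PowerSeries

lemma derivation_ofNat {R A M : Type*} [CommSemiring R] [CommSemiring A] [AddCommMonoid M]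
    [Algebra R A] [Module A M] [Module R M] (D : Derivation R A M) (k : ℕ)
    [k.AtLeastTwo] : D ofNat(k) = 0 :=
  D.map_natCast k

section Field

variable {σ K : Type*} [Field K] {g : MvPolynomial σ K} {x b e n : σ → K}

lemma valueAt_eq_eval_of_lineGerm_eq (hg : restrictLine x b g = 0)
    (hn : eval x (dirDeriv n g) ≠ 0) {m : ℕ} {s : ExtendedPoly σ K} (hs : s ∈ poleOrderLE g m)
    {u : Polynomial K} (hu : lineGerm g n x b s = (u : K⟦X⟧)) {t : K}
    (ht : eval (x + t • b) (dirDeriv n g) ≠ 0) : valueAt g n (x + t • b) s = u.eval t := by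
  obtain ⟨N, -, hN⟩ := exists_numerator (n := n) hs
  have hgerm := lineGerm_eq_zero_of_mem_surfaceIdeal hg hn hN
  rw [map_sub, map_mul, map_pow, hu, lineGerm_extend, lineGerm_extend, sub_eq_zero] at hgerm
  have hnum : u * restrictLine x b (dirDeriv n g) ^ m = restrictLine x b N := by
    apply Polynomial.coe_injective K
    push_cast
    exact hgerm
  have hvalue := valueAt_eq_zero_of_mem_surfaceIdeal (x := x + t • b)
    (by rw [← eval_restrictLine, hg, Polynomial.eval_zero]) ht hN
  rw [map_sub, map_mul, map_pow, valueAt_extend, valueAt_extend, sub_eq_zero,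
    ← eval_restrictLine x b N, ← hnum, Polynomial.eval_mul, Polynomial.eval_pow,
    eval_restrictLine] at hvalue
  exact mul_right_cancel₀ (pow_ne_zero _ ht) hvalue

lemma lineGerm_tangentDeriv_flecnode (hg : restrictLine x b g = 0) :
    lineGerm g n x b (tangentDeriv g n e (flecnode g n b e)) =
      4 * d⁄dX K (lineGerm g n x b (slope g e)) ^ 2 *
          d⁄dX K (d⁄dX K (d⁄dX K (lineGerm g n x b (slope g e))))
        - 6 * d⁄dX K (lineGerm g n x b (slope g e)) *
          d⁄dX K (d⁄dX K (lineGerm g n x b (slope g e))) ^ 2 := by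
  have hcomm (s) : tangentDeriv g n e (tangentDeriv g n b s) =
    tangentDeriv g n b (tangentDeriv g n e s) := tangentDeriv_comm g n e b s
  have hsymm : tangentDeriv g n e (slope g b) = tangentDeriv g n b (slope g e) := hess_comm g n e b
  simp only [flecnode, hess, pow_two, map_add, map_sub, Derivation.leibniz, derivation_ofNat,
    smul_eq_mul, hcomm, hsymm, map_mul, map_ofNat, ← derivative_lineGerm hg,
    lineGerm_slope_eq_zero hg, map_zero]
  ring

lemma lineGerm_tangentDeriv_tangentDeriv_flecnode (hg : restrictLine x b g = 0)
    (hX : lineGerm g n x b (slope g e) = PowerSeries.X) :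
    lineGerm g n x b (tangentDeriv g n e (tangentDeriv g n e (flecnode g n b e))) =
      4 * (d⁄dX K)^[3] (lineGerm g n x b (hess g n e e)) := by
  have hcomm (s) : tangentDeriv g n e (tangentDeriv g n b s) =
    tangentDeriv g n b (tangentDeriv g n e s) := tangentDeriv_comm g n e b s
  have hsymm : tangentDeriv g n e (slope g b) = tangentDeriv g n b (slope g e) := hess_comm g n e b
  simp only [flecnode, hess, pow_two, map_add, map_sub, Derivation.leibniz, derivation_ofNat,
    smul_eq_mul, hcomm, hsymm, map_mul, map_ofNat, ← derivative_lineGerm hg,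
    lineGerm_slope_eq_zero hg, hX, PowerSeries.derivative_X, PowerSeries.derivative_one, map_zero,
    Function.iterate_succ, Function.iterate_zero, Function.comp_apply, id_eq]
  ring

/-- A frame `b, e, n` at a point `x` of the line in direction `b` in which the slope
`-∂ₑ g / ∂ₙ g` of the surface along `x + t b` is `t + O(t³)`. -/
structure IsNormalFrame (g : MvPolynomial σ K) (x b e n : σ → K) : Prop where
  eval_fst : eval x (dirDeriv e g) = 0
  eval_normal_ne_zero : eval x (dirDeriv n g) ≠ 0
  eval_normal : eval x (dirDeriv n g) = -eval x (dirDeriv b (dirDeriv e g))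
  eval_dirDeriv_normal :
    2 * eval x (dirDeriv b (dirDeriv n g)) = -eval x (dirDeriv b (dirDeriv b (dirDeriv e g)))

lemma lineGerm_slope_mul (hn : eval x (dirDeriv n g) ≠ 0) :
    lineGerm g n x b (slope g e) * (restrictLine x b (dirDeriv n g) : Polynomial K) =
      -((restrictLine x b (dirDeriv e g) : Polynomial K) : K⟦X⟧) := by
  rw [slope, map_neg, map_mul, lineGerm_extend]
  linear_combination
    -((restrictLine x b (dirDeriv e g) : Polynomial K) : K⟦X⟧) * lineGerm_recip_mul (v := b) hn

lemma IsNormalFrame.constantCoeff_lineGerm_slope (h : IsNormalFrame g x b e n) :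
    PowerSeries.constantCoeff (lineGerm g n x b (slope g e)) = 0 ∧
      PowerSeries.constantCoeff (d⁄dX K (lineGerm g n x b (slope g e))) = 1 ∧
      PowerSeries.constantCoeff (d⁄dX K (d⁄dX K (lineGerm g n x b (slope g e)))) = 0 := by
  have hn := h.eval_normal_ne_zero
  have heq := lineGerm_slope_mul (b := b) (e := e) hn
  have heq' := congrArg (d⁄dX K) heq
  have heq'' := congrArg (d⁄dX K) heq'
  simp only [Derivation.leibniz, map_neg, map_add, PowerSeries.derivative_coe,
    derivative_restrictLine, smul_eq_mul] at heq' heq''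
  have hcoeff := congrArg PowerSeries.constantCoeff heq
  have hcoeff' := congrArg PowerSeries.constantCoeff heq'
  have hcoeff'' := congrArg PowerSeries.constantCoeff heq''
  simp only [map_mul, map_neg, map_add, constantCoeff_restrictLine] at hcoeff hcoeff' hcoeff''
  have h₀ : PowerSeries.constantCoeff (lineGerm g n x b (slope g e)) = 0 := by
    rw [h.eval_fst, neg_zero] at hcoeff
    exact (mul_eq_zero.mp hcoeff).resolve_right hn
  have h₁ : PowerSeries.constantCoeff (d⁄dX K (lineGerm g n x b (slope g e))) = 1 := by
    rw [h₀] at hcoeff'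
    apply mul_left_cancel₀ hn
    linear_combination hcoeff' - h.eval_normal
  refine ⟨h₀, h₁, ?_⟩
  rw [h₀, h₁] at hcoeff''
  apply mul_left_cancel₀ hn
  linear_combination hcoeff'' - h.eval_dirDeriv_normal

variable [CharZero K]

lemma IsNormalFrame.lineGerm_slope_eq_X (h : IsNormalFrame g x b e n)
    (hg : restrictLine x b g = 0) (hflec : flecnode g n b e ∈ surfaceIdeal g n) :
    lineGerm g n x b (slope g e) = PowerSeries.X := by
  obtain ⟨h₀, h₁, h₂⟩ := h.constantCoeff_lineGerm_slope
  refine eq_X_of_schwarzian_eq_zero ?_ h₀ h₁ h₂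
  have hzero := lineGerm_eq_zero_of_mem_surfaceIdeal hg h.eval_normal_ne_zero
    (tangentDeriv_mem_surfaceIdeal e hflec)
  rw [lineGerm_tangentDeriv_flecnode hg] at hzero
  have : CharZero K⟦X⟧ := charZero_of_injective_ringHom PowerSeries.C_injective
  have hne : d⁄dX K (lineGerm g n x b (slope g e)) ≠ 0 := fun h ↦ by simp [h] at h₁
  refine mul_left_cancel₀ (mul_ne_zero two_ne_zero hne) ?_
  linear_combination hzero

lemma IsNormalFrame.lineGerm_hess_eq_trunc (h : IsNormalFrame g x b e n)
    (hg : restrictLine x b g = 0) (hflec : flecnode g n b e ∈ surfaceIdeal g n) :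
    lineGerm g n x b (hess g n e e) =
      (PowerSeries.trunc 3 (lineGerm g n x b (hess g n e e)) : Polynomial K) := by
  have hzero := lineGerm_eq_zero_of_mem_surfaceIdeal hg h.eval_normal_ne_zero
    (tangentDeriv_mem_surfaceIdeal e (tangentDeriv_mem_surfaceIdeal e hflec))
  rw [lineGerm_tangentDeriv_tangentDeriv_flecnode hg (h.lineGerm_slope_eq_X hg hflec)] at hzero
  have : CharZero K⟦X⟧ := charZero_of_injective_ringHom PowerSeries.C_injective
  exact eq_trunc_of_iterate_derivative_eq_zero
    ((mul_eq_zero.mp hzero).resolve_left (OfNat.ofNat_ne_zero 4))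

theorem IsNormalFrame.exists_forall_restrictLine_eq_zero (h : IsNormalFrame g x b e n)
    (hg : restrictLine x b g = 0) (hflec : flecnode g n b e ∈ surfaceIdeal g n) :
    ∃ α β γ : K, ∀ t, eval (x + t • b) (dirDeriv n g) ≠ 0 →
      ∀ v v₁ v₂ v₃, v = v₁ • b + v₂ • e + v₃ • n → restrictLine (x + t • b) v g = 0 →
        v₃ = t * v₂ ∧ v₂ * (v₁ + (α + β * t + γ * t ^ 2) * v₂) = 0 := by
  let q := lineGerm g n x b (hess g n e e)
  refine ⟨PowerSeries.coeff 0 q / 2, PowerSeries.coeff 1 q / 2, PowerSeries.coeff 2 q / 2, ?_⟩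
  intro t ht v v₁ v₂ v₃ hv hgv
  have hn := h.eval_normal_ne_zero
  have hX := h.lineGerm_slope_eq_X hg hflec
  have hslope_b : valueAt g n (x + t • b) (slope g b) = 0 := by
    simpa using valueAt_eq_eval_of_lineGerm_eq hg hn (slope_mem_poleOrderLE g b) (u := 0)
      (by simp [lineGerm_slope_eq_zero hg]) ht
  have hslope_e : valueAt g n (x + t • b) (slope g e) = t := by
    simpa using valueAt_eq_eval_of_lineGerm_eq hg hn (slope_mem_poleOrderLE g e)
      (u := Polynomial.X) (by simp [hX]) ht
  have hhess_bb : valueAt g n (x + t • b) (hess g n b b) = 0 := by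
    simpa using valueAt_eq_eval_of_lineGerm_eq hg hn (hess_mem_poleOrderLE g n b b) (u := 0)
      (by simp [lineGerm_hess_eq_zero hg]) ht
  have hhess_be : valueAt g n (x + t • b) (hess g n b e) = 1 := by
    simpa using valueAt_eq_eval_of_lineGerm_eq hg hn (hess_mem_poleOrderLE g n b e) (u := 1)
      (by simp [hess, ← derivative_lineGerm hg, hX]) ht
  have hhess_ee : valueAt g n (x + t • b) (hess g n e e) = PowerSeries.coeff 0 q
      + PowerSeries.coeff 1 q * t + PowerSeries.coeff 2 q * t ^ 2 := by
    rw [valueAt_eq_eval_of_lineGerm_eq hg hn (hess_mem_poleOrderLE g n e e)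
      (h.lineGerm_hess_eq_trunc hg hflec) ht, Polynomial.eval,
      PowerSeries.eval₂_trunc_eq_sum_range]
    simp [Finset.sum_range_succ, q]
  have hlin := eq_slope_of_restrictLine_eq_zero hv hgv ht
  have hquad := quadratic_of_restrictLine_eq_zero hv hgv ht
  rw [hslope_b, hslope_e] at hlin
  rw [hhess_bb, hhess_be, hhess_ee] at hquad
  exact ⟨by linear_combination hlin, by linear_combination hquad / 2⟩

end Field

end GuthKatz

namespace GuthKatz

open MvPolynomial

/-! ### Frames and the quadric swept out by a ruling -/

section Frames

lemma basis_det_fin_three {R M : Type*} [CommRing R] [AddCommGroup M] [Module R M]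
    (B : Module.Basis (Fin 3) R M) (u v w : M) :
    B.det ![u, v, w] = B.repr u 0 * (B.repr v 1 * B.repr w 2 - B.repr v 2 * B.repr w 1)
      - B.repr u 1 * (B.repr v 0 * B.repr w 2 - B.repr v 2 * B.repr w 0)
      + B.repr u 2 * (B.repr v 0 * B.repr w 1 - B.repr v 1 * B.repr w 0) := by
  simp only [Module.Basis.det_apply, Matrix.det_fin_three, Module.Basis.toMatrix_apply,
    Matrix.cons_val]
  ring

lemma Line.coplanar_of_basis_det_eq_zero (B : Module.Basis (Fin 3) ℝ Space) {l m : Line}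
    {x y : Space} (hx : x ∈ l) (hy : y ∈ m) (h : B.det ![x - y, l.dir, m.dir] = 0) :
    l.Coplanar m := by
  have hstd : (Pi.basisFun ℝ (Fin 3)).det ![x - y, l.dir, m.dir] = 0 := by
    rw [AlternatingMap.eq_smul_basis_det B (Pi.basisFun ℝ (Fin 3)).det, AlternatingMap.smul_apply,
      h, smul_zero]
  rw [basis_det_fin_three] at hstd
  simp only [Pi.basisFun_repr, Pi.sub_apply, apply_zero_of_mem hx, apply_zero_of_mem hy,
    apply_one_of_mem hx, apply_one_of_mem hy, Line.dir, Matrix.cons_val] at hstd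
  unfold Coplanar
  linear_combination hstd

variable {K M : Type*} [Field K] [AddCommGroup M] [Module K M]

lemma exists_basis_of_linearIndependent {v : Fin 3 → M} (hv : LinearIndependent K v)
    (hM : Module.finrank K M = 3) : ∃ B : Module.Basis (Fin 3) K M, ⇑B = v :=
  ⟨_, coe_basisOfLinearIndependentOfCardEqFinrank hv (by simp [hM])⟩

lemma exists_basis_of_linearIndependent_pair {u w : M} (h : LinearIndependent K ![u, w])
    (hM : Module.finrank K M = 3) : ∃ B : Module.Basis (Fin 3) K M, B 0 = u ∧ B 2 = w := by
  obtain ⟨v, hv⟩ := exists_linearIndependent_cons_of_lt_finrank (n := 2) h (by omega)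
  obtain ⟨B, hB⟩ := exists_basis_of_linearIndependent hv hM
  refine ⟨B.reindex (Equiv.swap 0 1), ?_, ?_⟩ <;>
    simp [hB, Equiv.swap_apply_def]

lemma exists_basis_shear (B : Module.Basis (Fin 3) K M) (c s : K) {r : K} (hr : r ≠ 0) :
    ∃ B' : Module.Basis (Fin 3) K M, B' 0 = B 0 ∧ B' 1 = B 1 - c • B 2 ∧
      B' 2 = r • B 2 + s • (B 1 - c • B 2) := by
  have hindep :
      LinearIndependent K ![B 0, B 1 - c • B 2, r • B 2 + s • (B 1 - c • B 2)] := by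
    rw [Fintype.linearIndependent_iff]
    intro a ha
    have hcoeff := Fintype.linearIndependent_iff.mp B.linearIndependent
      ![a 0, a 1 + a 2 * s, a 2 * r - (a 1 + a 2 * s) * c] (by
        rw [← ha, Fin.sum_univ_three, Fin.sum_univ_three]
        simp only [Matrix.cons_val]
        module)
    have h₀ : a 0 = 0 := hcoeff 0
    have h₁ : a 1 + a 2 * s = 0 := hcoeff 1
    have h₂ : a 2 * r - (a 1 + a 2 * s) * c = 0 := hcoeff 2
    have ha₂ : a 2 = 0 := by simpa [h₁, hr] using h₂
    have ha₁ : a 1 = 0 := by simpa [ha₂] using h₁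
    intro i
    fin_cases i <;> assumption
  obtain ⟨B', hB'⟩ := exists_basis_of_linearIndependent hindep (Module.finrank_eq_card_basis B)
  exact ⟨B', by simp [hB'], by simp [hB'], by simp [hB']⟩

end Frames

section AffinePoly

variable {σ R : Type*} [Fintype σ] [DecidableEq σ] [CommRing R]

/-- The polynomial function `y ↦ φ (y - x)`, for a linear form `φ`. -/
def affinePoly (φ : (σ → R) →ₗ[R] R) (x : σ → R) : MvPolynomial σ R :=
  ∑ i, C (φ (Pi.single i 1)) * (X i - C (x i))

lemma eval_affinePoly (φ : (σ → R) →ₗ[R] R) (x y : σ → R) :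
    eval y (affinePoly φ x) = φ (y - x) := by
  conv_rhs => rw [pi_eq_sum_univ' (y - x)]
  simp [affinePoly, mul_comm]

lemma totalDegree_affinePoly_le [Nontrivial R] (φ : (σ → R) →ₗ[R] R) (x : σ → R) :
    (affinePoly φ x).totalDegree ≤ 1 := by
  refine totalDegree_finsetSum_le fun i _ ↦ (totalDegree_mul _ _).trans ?_
  rw [totalDegree_C, zero_add]
  exact (totalDegree_sub _ _).trans (by simp [totalDegree_X, totalDegree_C])

end AffinePoly

section Ruling

variable (B : Module.Basis (Fin 3) ℝ Space) (x : Space) (α β γ : ℝ)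

/-- The direction of the ruling through the point `x + t b` of a line in direction `b`, in the
frame `B = (b, e, n)`. -/
def rulingDir (t : ℝ) : Space := -(α + β * t + γ * t ^ 2) • B 0 + B 1 + t • B 2

/-- The quadric swept out by the lines through `x + t b` in direction `rulingDir B α β γ t`. -/
def rulingQuadric : SpacePoly :=
  affinePoly (B.coord 0) x * affinePoly (B.coord 1) x - affinePoly (B.coord 2) x
    + C α * (affinePoly (B.coord 1) x * affinePoly (B.coord 1) x)
    + C β * (affinePoly (B.coord 1) x * affinePoly (B.coord 2) x)
    + C γ * (affinePoly (B.coord 2) x * affinePoly (B.coord 2) x)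

lemma totalDegree_rulingQuadric_le : (rulingQuadric B x α β γ).totalDegree ≤ 2 := by
  have hlin (i) := totalDegree_affinePoly_le (B.coord i) x
  have hmul (i j) : (affinePoly (B.coord i) x * affinePoly (B.coord j) x).totalDegree ≤ 2 :=
    (totalDegree_mul _ _).trans (add_le_add (hlin i) (hlin j))
  have hC (r : ℝ) (i j) :
      (C r * (affinePoly (B.coord i) x * affinePoly (B.coord j) x)).totalDegree ≤ 2 :=
    (totalDegree_mul _ _).trans (by rw [totalDegree_C, zero_add]; exact hmul i j)
  have hadd {p q : SpacePoly} (hp : p.totalDegree ≤ 2) (hq : q.totalDegree ≤ 2) :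
      (p + q).totalDegree ≤ 2 := (totalDegree_add _ _).trans (max_le hp hq)
  have hsub := (totalDegree_sub _ _).trans
    (max_le (hmul 0 1) ((hlin 2).trans one_le_two))
  exact hadd (hadd (hadd hsub (hC α 1 1)) (hC β 1 2)) (hC γ 2 2)

lemma eval_rulingQuadric (y : Space) : eval (x + y) (rulingQuadric B x α β γ) =
    B.repr y 0 * B.repr y 1 - B.repr y 2 + α * B.repr y 1 ^ 2
      + β * (B.repr y 1 * B.repr y 2) + γ * B.repr y 2 ^ 2 := by
  simp only [rulingQuadric, map_add, map_sub, map_mul, eval_affinePoly, eval_C, add_sub_cancel_left,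
    Module.Basis.coord_apply]
  ring

lemma repr_rulingDir (t : ℝ) : B.repr (rulingDir B α β γ t) 0 = -(α + β * t + γ * t ^ 2) ∧
    B.repr (rulingDir B α β γ t) 1 = 1 ∧ B.repr (rulingDir B α β γ t) 2 = t := by
  simp [rulingDir]

variable {B x α β γ} {m : Line} {t r : ℝ}

lemma vanishesOn_rulingQuadric (hm : x + t • B 0 ∈ m) (hdir : m.dir = r • rulingDir B α β γ t) :
    VanishesOn (rulingQuadric B x α β γ) m := by
  rw [vanishesOn_iff_forall_smul_dir hm]
  intro s
  obtain ⟨h₀, h₁, h₂⟩ := repr_rulingDir B α β γ t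
  rw [add_assoc, eval_rulingQuadric, hdir]
  simp only [map_add, map_smul, Finsupp.add_apply, Finsupp.smul_apply, h₀, h₁, h₂,
    Module.Basis.repr_self, Finsupp.single_apply, smul_eq_mul]
  simp only [Fin.reduceEq, if_true, if_false]
  ring

-- Lines on the quadric other than the ruling `m₀` through one of its points form the opposite
-- family; `d` is the direction of such a line through the point at parameter `s` of `m₀`.
lemma repr_of_vanishesOn_rulingQuadric {t s : ℝ} {d : Space} (hs : s ≠ 0)
    (hd : d ≠ B.repr d 1 • rulingDir B α β γ t)
    (h : ∀ τ : ℝ, eval (x + t • B 0 + s • rulingDir B α β γ t + τ • d)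
      (rulingQuadric B x α β γ) = 0) :
    s * (B.repr d 0 + (α + β * t + γ * t ^ 2) * B.repr d 1)
        + (β * s + 2 * γ * t * s - 1) * (B.repr d 2 - t * B.repr d 1) = 0 ∧
      B.repr d 1 + γ * s * (B.repr d 2 - t * B.repr d 1) = 0 := by
  obtain ⟨h₀, h₁, h₂⟩ := repr_rulingDir B α β γ t
  have hframe := eq_repr_combination B d
  have hdir : rulingDir B α β γ t = -(α + β * t + γ * t ^ 2) • B 0 + B 1 + t • B 2 := rfl
  simp only [add_assoc, eval_rulingQuadric, map_add, map_smul, Finsupp.add_apply,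
    Finsupp.smul_apply, h₀, h₁, h₂, Module.Basis.repr_self, Finsupp.single_apply, smul_eq_mul] at h
  simp only [Fin.reduceEq, if_true, if_false] at h
  generalize B.repr d 0 = d₀ at *
  generalize B.repr d 1 = d₁ at *
  generalize B.repr d 2 = d₂ at *
  have hlin : s * (d₀ + (α + β * t + γ * t ^ 2) * d₁)
      + (β * s + 2 * γ * t * s - 1) * (d₂ - t * d₁) = 0 := by
    linear_combination (h 1 - h (-1)) / 2
  have hquad : d₁ * (d₀ + (α + β * t + γ * t ^ 2) * d₁ + (β + 2 * γ * t) * (d₂ - t * d₁))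
      + γ * (d₂ - t * d₁) ^ 2 = 0 := by
    linear_combination (h 1 + h (-1)) / 2 - h 0
  refine ⟨hlin, ?_⟩
  have hne : d₂ - t * d₁ ≠ 0 := by
    intro h0
    rw [h0, mul_zero, add_zero] at hlin
    have hd₀ := (mul_eq_zero.mp hlin).resolve_left hs
    apply hd
    rw [hframe, hdir, eq_neg_of_add_eq_zero_left hd₀, sub_eq_zero.mp h0]
    module
  refine mul_left_cancel₀ hne ?_
  linear_combination s * hquad - d₁ * hlin

lemma coplanar_of_vanishesOn_rulingQuadric {m₀ m₁ m' : Line} {t₀ r₀ t₁ r₁ : ℝ} {y : Space}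
    (hm₀ : x + t₀ • B 0 ∈ m₀) (hdir₀ : m₀.dir = r₀ • rulingDir B α β γ t₀)
    (hm₁ : x + t₁ • B 0 ∈ m₁) (hdir₁ : m₁.dir = r₁ • rulingDir B α β γ t₁)
    (hy₀ : y ∈ m₀) (hyx : y ≠ x + t₀ • B 0) (hy' : y ∈ m') (hm' : m' ≠ m₀)
    (hQ : VanishesOn (rulingQuadric B x α β γ) m') : m'.Coplanar m₁ := by
  obtain ⟨s, rfl⟩ := Line.exists_eq_add_smul_dir hm₀ hy₀
  have hs : s * r₀ ≠ 0 := by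
    intro h
    rw [hdir₀, smul_smul, h, zero_smul, add_zero] at hyx
    exact hyx rfl
  have hd : m'.dir ≠ B.repr m'.dir 1 • rulingDir B α β γ t₀ := by
    intro h
    have hindep := LinearIndependent.pair_iff.mp (Line.linearIndependent_dir hy' hy₀ hm') r₀
      (-B.repr m'.dir 1) (by rw [hdir₀]; nth_rw 1 [h]; module)
    rw [hindep.1, mul_zero] at hs
    exact hs rfl
  obtain ⟨hlin, hquad⟩ := repr_of_vanishesOn_rulingQuadric hs hd fun τ ↦ by
    rw [← smul_smul, ← hdir₀]
    exact (vanishesOn_iff_forall_smul_dir hy').mp hQ τ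
  apply Line.coplanar_of_basis_det_eq_zero B hy' hm₁
  obtain ⟨h₀₀, h₀₁, h₀₂⟩ := repr_rulingDir B α β γ t₀
  obtain ⟨h₁₀, h₁₁, h₁₂⟩ := repr_rulingDir B α β γ t₁
  rw [basis_det_fin_three, hdir₀, hdir₁]
  simp only [map_add, map_sub, map_smul, Finsupp.add_apply, Finsupp.sub_apply,
    Finsupp.smul_apply, h₀₀, h₀₁, h₀₂, h₁₀, h₁₁, h₁₂, Module.Basis.repr_self,
    Finsupp.single_apply, smul_eq_mul]
  simp only [Fin.reduceEq, if_true, if_false]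
  linear_combination -r₁ * (t₁ - t₀) ^ 2 * hquad - r₁ * (t₁ - t₀) * hlin

end Ruling

end GuthKatz

namespace GuthKatz

open MvPolynomial

/-! ### Lines on an irreducible surface -/

section Wronskian

lemma dirDeriv_sub_smul {σ R : Type*} [CommRing R] (u v : σ → R) (c : R) (f : MvPolynomial σ R) :
    dirDeriv (u - c • v) f = dirDeriv u f - C c * dirDeriv v f := by
  rw [sub_eq_add_neg, ← neg_smul, dirDeriv_add, dirDeriv_smul, Derivation.add_apply,
    Derivation.smul_apply, smul_eq_C_mul, C_neg, neg_mul, ← sub_eq_add_neg]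

variable {σ K : Type*} [Field K]

lemma eq_zero_of_wronskian_eq_zero [CharZero K] {A G : Polynomial K} (h : A.wronskian G = 0)
    (hA : A.eval 0 = 0) (hG : G.eval 0 ≠ 0) : A = 0 := by
  by_contra hA0
  have hW : A * G.derivative = A.derivative * G := sub_eq_zero.mp h
  have hG0 : G ≠ 0 := by
    rintro rfl
    exact hG Polynomial.eval_zero
  have hA' : A.derivative ≠ 0 := fun hd ↦ by
    rw [Polynomial.eq_C_of_derivative_eq_zero hd, Polynomial.eval_C] at hA
    rw [Polynomial.eq_C_of_derivative_eq_zero hd, hA, map_zero] at hA0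
    exact hA0 rfl
  have hne : A.derivative * G ≠ 0 := mul_ne_zero hA' hG0
  have hmult := congrArg (Polynomial.rootMultiplicity 0) hW
  rw [Polynomial.rootMultiplicity_mul (hW ▸ hne), Polynomial.rootMultiplicity_mul hne,
    Polynomial.derivative_rootMultiplicity_of_root hA, Polynomial.rootMultiplicity_eq_zero hG]
    at hmult
  have hpos := (Polynomial.rootMultiplicity_pos hA0).mpr hA
  omega

lemma not_irreducible_C (r : K) : ¬ Irreducible (C r : MvPolynomial σ K) := fun h ↦ by
  rcases eq_or_ne r 0 with rfl | hr
  · exact h.ne_zero C_0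
  · exact h.not_isUnit ((isUnit_iff_ne_zero.mpr hr).map C)

lemma totalDegree_pos_of_irreducible {g : MvPolynomial σ K} (hg : Irreducible g) :
    0 < g.totalDegree := by
  rw [pos_iff_ne_zero]
  intro h
  rw [totalDegree_eq_zero_iff_eq_C.mp h] at hg
  exact not_irreducible_C _ hg

lemma exists_dirDeriv_ne_zero [CharZero K] {g : MvPolynomial σ K} (hg : Irreducible g) :
    ∃ n, dirDeriv n g ≠ 0 := by
  by_contra! hzero
  have hconst (y : σ → K) : eval y g = eval 0 g := by
    have hd : Polynomial.derivative (restrictLine 0 y g) = 0 := by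
      rw [derivative_restrictLine, hzero, map_zero]
    have h₁ := eval_restrictLine 0 y g 1
    have h₀ := eval_restrictLine 0 y g 0
    rw [Polynomial.eq_C_of_derivative_eq_zero hd, Polynomial.eval_C] at h₀ h₁
    simpa using h₁.symm.trans h₀
  have hC : g = C (eval 0 g) := MvPolynomial.funext fun y ↦ by rw [hconst y, eval_C]
  rw [hC] at hg
  exact not_irreducible_C _ hg

/-- The Wronskian of `∂ₑ g` and `∂ₙ g` along lines in direction `b`. It vanishes identically on a
line of the surface `g = 0` when the tangent plane is constant along that line. -/
def dirWronskian (g : MvPolynomial σ K) (b e n : σ → K) : MvPolynomial σ K :=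
  dirDeriv e g * dirDeriv b (dirDeriv n g) - dirDeriv b (dirDeriv e g) * dirDeriv n g

variable {g : MvPolynomial σ K} {x b e n : σ → K}

lemma restrictLine_dirWronskian :
    restrictLine x b (dirWronskian g b e n) =
      (restrictLine x b (dirDeriv e g)).wronskian (restrictLine x b (dirDeriv n g)) := by
  simp only [dirWronskian, Polynomial.wronskian, derivative_restrictLine, map_sub, map_mul]

lemma totalDegree_dirWronskian_le : (dirWronskian g b e n).totalDegree ≤ 2 * g.totalDegree := by
  have he := totalDegree_dirDeriv_le e g
  have hn := totalDegree_dirDeriv_le n g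
  have hbe := totalDegree_dirDeriv_le b (dirDeriv e g)
  have hbn := totalDegree_dirDeriv_le b (dirDeriv n g)
  refine (totalDegree_sub _ _).trans (max_le ?_ ?_) <;>
    exact (totalDegree_mul _ _).trans (by omega)

lemma eval_dirWronskian_eq_zero (hb : eval x (dirDeriv b g) = 0)
    (hn : eval x (dirDeriv n g) ≠ 0) (h : valueAt g n x (hess g n b e) = 0) :
    eval x (dirWronskian g b e n) = 0 := by
  simp only [hess, slope, map_neg, Derivation.leibniz, tangentDeriv_recip, tangentDeriv_extend,
    smul_eq_mul, map_add, map_mul, map_sub, map_pow, valueAt_extend, valueAt_recip, hb] at h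
  field_simp at h
  simp only [dirWronskian, map_sub, map_mul]
  apply mul_left_cancel₀ hn
  linear_combination h

end Wronskian

section Transversals

open Classical in
/-- The lines of `V` other than `l` that pass through a point of `T`, a set of points of `l`. -/
def transversals (V : Finset Line) (l : Line) (T : Finset Space) : Finset Line :=
  V.filter fun m ↦ m ≠ l ∧ ∃ x ∈ T, x ∈ m

open Classical in
/-- Every line of `V` contains at least `M` points that lie on at least `κ` lines of `V`. -/
def IsRich (V : Finset Line) (M κ : ℕ) : Prop :=
  ∀ l ∈ V, ∃ T : Finset Space, M ≤ T.card ∧ ∀ x ∈ T, x ∈ l ∧ κ ≤ (V.filter (x ∈ ·)).card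

variable {V : Finset Line} {l m : Line} {T : Finset Space} {f : SpacePoly}

lemma mem_transversals : m ∈ transversals V l T ↔ m ∈ V ∧ m ≠ l ∧ ∃ x ∈ T, x ∈ m := by
  classical exact Finset.mem_filter

lemma transversals_subset : transversals V l T ⊆ V := by
  classical exact Finset.filter_subset _ _

open Classical in
lemma card_mul_le_card_transversals {κ : ℕ} (hT : ∀ x ∈ T, x ∈ l)
    (h : ∀ x ∈ T, κ ≤ (V.filter (x ∈ ·)).card) :
    T.card * (κ - 1) ≤ (transversals V l T).card := by
  have hdisj : (T : Set Space).PairwiseDisjoint fun x ↦ (V.filter (x ∈ ·)).erase l := by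
    intro x hx y hy hxy
    rw [Function.onFun, Finset.disjoint_left]
    intro m hm hm'
    simp only [Finset.mem_erase, Finset.mem_filter] at hm hm'
    exact hm.1 (Line.eq_of_two_points hm.2.2 hm'.2.2 (hT x hx) (hT y hy) hxy)
  calc T.card * (κ - 1) ≤ ∑ x ∈ T, ((V.filter (x ∈ ·)).erase l).card := by
        rw [← smul_eq_mul]
        exact Finset.card_nsmul_le_sum _ _ _ fun x hx ↦
          (Nat.sub_le_sub_right (h x hx) 1).trans Finset.pred_card_le_card_erase
    _ = (T.biUnion fun x ↦ (V.filter (x ∈ ·)).erase l).card := (Finset.card_biUnion hdisj).symm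
    _ ≤ (transversals V l T).card := Finset.card_le_card fun m hm ↦ by
        simp only [Finset.mem_biUnion, Finset.mem_erase, Finset.mem_filter] at hm
        obtain ⟨x, hx, hml, hmV, hxm⟩ := hm
        exact mem_transversals.mpr ⟨hmV, hml, x, hx, hxm⟩

lemma exists_subset_eval_ne_zero (hf : ¬ VanishesOn f l) (hT : ∀ x ∈ T, x ∈ l) :
    ∃ T' ⊆ T, (∀ x ∈ T', eval x f ≠ 0) ∧ T.card ≤ T'.card + f.totalDegree := by
  classical
  refine ⟨T.filter (eval · f ≠ 0), Finset.filter_subset _ _,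
    fun x hx ↦ (Finset.mem_filter.mp hx).2, ?_⟩
  rw [← Finset.card_filter_add_card_filter_not (s := T) (eval · f ≠ 0), add_le_add_iff_left]
  by_contra hlt
  exact hf (vanishesOn_of_totalDegree_lt_card _ (fun x hx ↦ hT x (Finset.mem_filter.mp hx).1)
    (fun x hx ↦ not_not.mp (Finset.mem_filter.mp hx).2) (not_le.mp hlt))

end Transversals

section Developable

variable {g : SpacePoly} {l m m' : Line} {x n : Space} {B : Module.Basis (Fin 3) ℝ Space}

lemma exists_basis_of_not_vanishesOn (hl : VanishesOn g l) (hn : ¬ VanishesOn (dirDeriv n g) l) :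
    ∃ B : Module.Basis (Fin 3) ℝ Space, B 0 = l.dir ∧ B 2 = n := by
  refine exists_basis_of_linearIndependent_pair ?_ (by simp)
  have hdir : l.dir ≠ 0 := fun h ↦ by simpa [Line.dir] using congrFun h 2
  rw [LinearIndependent.pair_iff' hdir]
  rintro r rfl
  refine hn fun t ↦ ?_
  rw [dirDeriv_smul, Derivation.smul_apply, smul_eval, hl.dirDeriv_dir t, mul_zero]

lemma pairwise_coplanar_transversals (hB : B 0 = l.dir) {V : Finset Line}
    (hV : ∀ m ∈ V, VanishesOn g m) (hl : VanishesOn g l) (he : VanishesOn (dirDeriv (B 1) g) l)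
    {T : Finset Space} (hT : ∀ x ∈ T, x ∈ l)
    (hn : ∀ x ∈ T, eval x (dirDeriv (B 2) g) ≠ 0) :
    ∀ m ∈ transversals V l T, ∀ m' ∈ transversals V l T, m.Coplanar m' := by
  have htangent {m x} (hm : m ∈ V) (hx : x ∈ T) (hxm : x ∈ m) : B.repr m.dir 2 = 0 := by
    rw [eq_slope_of_restrictLine_eq_zero (eq_repr_combination B m.dir)
      ((vanishesOn_iff_restrictLine_eq_zero hxm).mp (hV m hm)) (hn x hx), valueAt_slope,
      valueAt_slope, he.eval_eq_zero (hT x hx), hB, hl.dirDeriv_dir.eval_eq_zero (hT x hx)]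
    simp only [mul_zero, neg_zero, add_zero]
  intro m hm m' hm'
  obtain ⟨hmV, -, x, hx, hxm⟩ := mem_transversals.mp hm
  obtain ⟨hmV', -, y, hy, hym⟩ := mem_transversals.mp hm'
  obtain ⟨t, ht⟩ := Line.exists_eq_add_smul_dir (hT y hy) (hT x hx)
  apply Line.coplanar_of_basis_det_eq_zero B hxm hym
  rw [basis_det_fin_three, htangent hmV hx hxm, htangent hmV' hy hym, ht, ← hB,
    add_sub_cancel_left]
  simp

lemma exists_basis_vanishesOn_dirDeriv (hB : B 0 = l.dir)
    (hn : ¬ VanishesOn (dirDeriv (B 2) g) l)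
    (hW : VanishesOn (dirWronskian g (B 0) (B 1) (B 2)) l) :
    ∃ B' : Module.Basis (Fin 3) ℝ Space,
      B' 0 = l.dir ∧ B' 2 = B 2 ∧ VanishesOn (dirDeriv (B' 1) g) l := by
  obtain ⟨t, ht⟩ := not_forall.mp hn
  have hx := l.point_mem t
  generalize l.point t = x at hx ht
  obtain ⟨c, hc⟩ : ∃ c, eval x (dirDeriv (B 1) g) = c * eval x (dirDeriv (B 2) g) :=
    ⟨_ / _, (div_mul_cancel₀ _ ht).symm⟩
  obtain ⟨B', h₀, h₁, h₂⟩ := exists_basis_shear B c 0 one_ne_zero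
  refine ⟨B', h₀.trans hB, by simpa using h₂, ?_⟩
  rw [vanishesOn_iff_restrictLine_eq_zero hx, ← hB] at hW ⊢
  rw [restrictLine_dirWronskian] at hW
  refine eq_zero_of_wronskian_eq_zero (G := restrictLine x (B 0) (dirDeriv (B 2) g)) ?_ ?_ ?_
  · rw [← hW, h₁, dirDeriv_sub_smul, ← smul_eq_C_mul, map_sub, map_smul]
    simp only [Polynomial.wronskian, map_sub, Polynomial.smul_eq_C_mul,
      Polynomial.derivative_C_mul]
    ring
  · rw [eval_restrictLine, zero_smul, add_zero, h₁, dirDeriv_sub_smul, map_sub, map_mul, eval_C, hc,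
      sub_self]
  · rwa [eval_restrictLine, zero_smul, add_zero]

lemma eval_dirWronskian_eq_zero_of_three_lines (hB : B 0 = l.dir)
    (hn : eval x (dirDeriv (B 2) g) ≠ 0) (hl : VanishesOn g l) (hm : VanishesOn g m)
    (hm' : VanishesOn g m') (hxl : x ∈ l) (hxm : x ∈ m) (hxm' : x ∈ m') (hlm : l ≠ m)
    (hlm' : l ≠ m') (hmm' : m ≠ m') : eval x (dirWronskian g (B 0) (B 1) (B 2)) = 0 := by
  refine eval_dirWronskian_eq_zero (hB ▸ hl.dirDeriv_dir.eval_eq_zero hxl) hn ?_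
  have hdir : l.dir = (1 : ℝ) • B 0 + (0 : ℝ) • B 1 + (0 : ℝ) • B 2 := by rw [← hB]; module
  have hdirm := eq_repr_combination B m.dir
  have hdirm' := eq_repr_combination B m'.dir
  have hgl := (vanishesOn_iff_restrictLine_eq_zero hxl).mp hl
  have hgm := (vanishesOn_iff_restrictLine_eq_zero hxm).mp hm
  have hgm' := (vanishesOn_iff_restrictLine_eq_zero hxm').mp hm'
  have hql := quadratic_of_restrictLine_eq_zero hdir hgl hn
  have hqm := quadratic_of_restrictLine_eq_zero hdirm hgm hn
  have hqm' := quadratic_of_restrictLine_eq_zero hdirm' hgm' hn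
  have hdetm := det_ne_zero_of_linearIndependent hdir hdirm hgl hgm hn
    (Line.linearIndependent_dir hxl hxm hlm)
  have hdetm' := det_ne_zero_of_linearIndependent hdir hdirm' hgl hgm' hn
    (Line.linearIndependent_dir hxl hxm' hlm')
  have hdetmm' := det_ne_zero_of_linearIndependent hdirm hdirm' hgm hgm' hn
    (Line.linearIndependent_dir hxm hxm' hmm')
  simp only [one_mul, zero_mul, sub_zero] at hdetm' hdetm
  -- A binary quadratic form with three non-proportional zeros is zero.
  apply mul_left_cancel₀ (mul_ne_zero (mul_ne_zero hdetm hdetm') hdetmm')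
  generalize B.repr m.dir 0 = v₁ at *
  generalize B.repr m.dir 1 = v₂ at *
  generalize B.repr m'.dir 0 = w₁ at *
  generalize B.repr m'.dir 1 = w₂ at *
  linear_combination
    (1 / 2) * (w₂ ^ 2 * hqm - v₂ ^ 2 * hqm' - (w₂ ^ 2 * v₁ ^ 2 - v₂ ^ 2 * w₁ ^ 2) * hql)

open Classical in
lemma vanishesOn_dirWronskian_of_three_le (hB : B 0 = l.dir)
    (hn : ¬ VanishesOn (dirDeriv (B 2) g) l) {V : Finset Line} (hV : ∀ m ∈ V, VanishesOn g m)
    (hl : VanishesOn g l) {T : Finset Space} (hT : ∀ x ∈ T, x ∈ l)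
    (hthree : ∀ x ∈ T, 3 ≤ (V.filter (x ∈ ·)).card) (hcard : 3 * g.totalDegree < T.card) :
    VanishesOn (dirWronskian g (B 0) (B 1) (B 2)) l := by
  obtain ⟨T', hT', hn', hle⟩ := exists_subset_eval_ne_zero hn hT
  have hdeg := totalDegree_dirDeriv_le (B 2) g
  have hW := totalDegree_dirWronskian_le (g := g) (b := B 0) (e := B 1) (n := B 2)
  refine vanishesOn_of_totalDegree_lt_card T' (fun x hx ↦ hT x (hT' hx)) (fun x hx ↦ ?_) (by omega)
  have herase : 1 < ((V.filter (x ∈ ·)).erase l).card :=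
    (Nat.sub_le_sub_right (hthree x (hT' hx)) 1).trans Finset.pred_card_le_card_erase
  obtain ⟨m, hm, m', hm', hmm'⟩ := Finset.one_lt_card.mp herase
  simp only [Finset.mem_erase, Finset.mem_filter] at hm hm'
  exact eval_dirWronskian_eq_zero_of_three_lines hB (hn' x hx) hl (hV m hm.2.1) (hV m' hm'.2.1)
    (hT x (hT' hx)) hm.2.2 hm'.2.2 hm.1.symm hm'.1.symm hmm'

open Classical in
lemma exists_coplanar_of_vanishesOn_dirWronskian (hB : B 0 = l.dir)
    (hn : ¬ VanishesOn (dirDeriv (B 2) g) l) {V : Finset Line} (hV : ∀ m ∈ V, VanishesOn g m)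
    (hl : VanishesOn g l) {T : Finset Space} (hT : ∀ x ∈ T, x ∈ l) {κ : ℕ}
    (hκ : ∀ x ∈ T, κ ≤ (V.filter (x ∈ ·)).card)
    (hW : VanishesOn (dirWronskian g (B 0) (B 1) (B 2)) l) :
    ∃ W ⊆ V, (∀ m ∈ W, ∀ m' ∈ W, m.Coplanar m') ∧
      (T.card - g.totalDegree) * (κ - 1) ≤ W.card := by
  obtain ⟨B', h₀, h₂, h₁⟩ := exists_basis_vanishesOn_dirDeriv hB hn hW
  rw [← h₂] at hn
  obtain ⟨T', hT', hn', hle⟩ := exists_subset_eval_ne_zero hn hT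
  refine ⟨transversals V l T', transversals_subset,
    pairwise_coplanar_transversals h₀ hV hl h₁ (fun x hx ↦ hT x (hT' hx)) hn',
    le_trans (Nat.mul_le_mul_right _ ?_) (card_mul_le_card_transversals
      (fun x hx ↦ hT x (hT' hx)) fun x hx ↦ hκ x (hT' hx))⟩
  have hdeg := totalDegree_dirDeriv_le (B' 2) g
  omega

end Developable

section Ruled

variable {g : SpacePoly} {l : Line} {B : Module.Basis (Fin 3) ℝ Space}

lemma exists_isNormalFrame (hB : B 0 = l.dir) (hn : ¬ VanishesOn (dirDeriv (B 2) g) l)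
    (hW : ¬ VanishesOn (dirWronskian g (B 0) (B 1) (B 2)) l) :
    ∃ x ∈ l, ∃ B' : Module.Basis (Fin 3) ℝ Space,
      B' 0 = l.dir ∧ IsNormalFrame g x (B' 0) (B' 1) (B' 2) := by
  obtain ⟨t, ht⟩ := not_forall.mp (vanishesOn_mul.not.mpr (not_or.mpr ⟨hW, hn⟩))
  have hx := l.point_mem t
  generalize l.point t = x at hx ht
  obtain ⟨hw, hG⟩ := mul_ne_zero_iff.mp ((map_mul (eval x) _ _).symm.trans_ne ht)
  rw [dirWronskian, map_sub, map_mul, map_mul] at hw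
  obtain ⟨c, hc⟩ : ∃ c, eval x (dirDeriv (B 1) g) = c * eval x (dirDeriv (B 2) g) :=
    ⟨_ / _, (div_mul_cancel₀ _ hG).symm⟩
  let e := B 1 - c • B 2
  have he : eval x (dirDeriv e g) = 0 := by
    rw [dirDeriv_sub_smul, map_sub, map_mul, eval_C, hc, sub_self]
  have hbe : eval x (dirDeriv (B 0) (dirDeriv e g)) ≠ 0 := fun h ↦ by
    rw [dirDeriv_sub_smul, map_sub, dirDeriv_C_mul, map_sub, map_mul, eval_C] at h
    apply hw
    rw [hc]
    linear_combination (-eval x (dirDeriv (B 2) g)) * h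
  obtain ⟨r, hr⟩ : ∃ r, r * eval x (dirDeriv (B 2) g) = -eval x (dirDeriv (B 0) (dirDeriv e g)) :=
    ⟨_ / _, div_mul_cancel₀ _ hG⟩
  obtain ⟨s, hs⟩ : ∃ s, s * eval x (dirDeriv (B 0) (dirDeriv e g)) =
      -eval x (dirDeriv (B 0) (dirDeriv (B 0) (dirDeriv e g))) / 2
        - r * eval x (dirDeriv (B 0) (dirDeriv (B 2) g)) := ⟨_ / _, div_mul_cancel₀ _ hbe⟩
  have hr0 : r ≠ 0 := left_ne_zero_of_mul (hr.trans_ne (neg_ne_zero.mpr hbe))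
  obtain ⟨B', h₀, h₁, h₂⟩ := exists_basis_shear B c s hr0
  have hnormal : dirDeriv (B' 2) g = C r * dirDeriv (B 2) g + C s * dirDeriv e g := by
    rw [h₂, dirDeriv_add, dirDeriv_smul, dirDeriv_smul, Derivation.add_apply,
      Derivation.smul_apply, Derivation.smul_apply, smul_eq_C_mul, smul_eq_C_mul]
  have hval : eval x (dirDeriv (B' 2) g) = -eval x (dirDeriv (B 0) (dirDeriv e g)) := by
    rw [hnormal, map_add, map_mul, map_mul, eval_C, eval_C, hr, he, mul_zero, add_zero]
  refine ⟨x, hx, B', h₀.trans hB, ?_⟩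
  rw [h₀, h₁]
  refine ⟨he, hval.trans_ne (neg_ne_zero.mpr hbe), hval, ?_⟩
  rw [hnormal, map_add, dirDeriv_C_mul, dirDeriv_C_mul, map_add, map_mul, map_mul, eval_C, eval_C]
  linear_combination 2 * hs

lemma IsNormalFrame.exists_dir_eq_smul_rulingDir {x : Space}
    (h : IsNormalFrame g x (B 0) (B 1) (B 2)) (hB : B 0 = l.dir) (hl : VanishesOn g l)
    (hx : x ∈ l) (hflec : flecnode g (B 2) (B 0) (B 1) ∈ surfaceIdeal g (B 2)) :
    ∃ α β γ : ℝ, ∀ t, eval (x + t • B 0) (dirDeriv (B 2) g) ≠ 0 → ∀ m : Line, m ≠ l →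
      VanishesOn g m → x + t • B 0 ∈ m → ∃ r : ℝ, m.dir = r • rulingDir B α β γ t := by
  obtain ⟨α, β, γ, hruling⟩ := h.exists_forall_restrictLine_eq_zero
    (hB ▸ (vanishesOn_iff_restrictLine_eq_zero hx).mp hl) hflec
  refine ⟨α, β, γ, fun t ht m hml hm hxm ↦ ⟨B.repr m.dir 1, ?_⟩⟩
  have hxl : x + t • B 0 ∈ l := hB ▸ Line.add_smul_dir_mem hx t
  have hframe := eq_repr_combination B m.dir
  have hdir : l.dir = (1 : ℝ) • B 0 + (0 : ℝ) • B 1 + (0 : ℝ) • B 2 := by rw [← hB]; module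
  have hgl := (vanishesOn_iff_restrictLine_eq_zero hxl).mp hl
  have hgm := (vanishesOn_iff_restrictLine_eq_zero hxm).mp hm
  have hdet := det_ne_zero_of_linearIndependent hdir hframe hgl hgm ht
    (Line.linearIndependent_dir hxl hxm hml.symm)
  obtain ⟨h₃, h₂⟩ := hruling t ht _ _ _ _ hframe hgm
  have h₁ := (mul_eq_zero.mp h₂).resolve_left (by simpa using hdet)
  conv_lhs => rw [hframe, h₃, eq_neg_of_add_eq_zero_left h₁]
  rw [rulingDir]
  module

lemma dvd_rulingQuadric (hg : Irreducible g) {x : Space} {α β γ : ℝ} {I : Finset Line}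
    (hI : ∀ m ∈ I, VanishesOn g m)
    (hruling : ∀ m ∈ I, ∃ t r : ℝ, x + t • B 0 ∈ m ∧ m.dir = r • rulingDir B α β γ t)
    (hcard : 2 * g.totalDegree < I.card) : g ∣ rulingQuadric B x α β γ := by
  by_contra hdvd
  have hQ : rulingQuadric B x α β γ ≠ 0 := by
    intro h
    exact hdvd (h ▸ dvd_zero g)
  have hbezout := card_le_totalDegree_mul_totalDegree hg.ne_zero hQ
    (hg.isRelPrime_iff_not_dvd.mpr hdvd) hI fun m hm ↦ by
      obtain ⟨t, r, hmem, hdir⟩ := hruling m hm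
      exact vanishesOn_rulingQuadric hmem hdir
  have hdeg := Nat.mul_le_mul_left g.totalDegree (totalDegree_rulingQuadric_le B x α β γ)
  omega

lemma IsRich.flecnode_mem_surfaceIdeal {V : Finset Line} {M κ : ℕ} (h : IsRich V M κ)
    (hg : Irreducible g) (hV : ∀ l ∈ V, VanishesOn g l) (hcard : 12 * g.totalDegree ^ 2 < V.card)
    (hκ : 2 ≤ κ) (hM : 12 * g.totalDegree < M) (hn : dirDeriv (B 2) g ≠ 0) :
    flecnode g (B 2) (B 0) (B 1) ∈ surfaceIdeal g (B 2) := by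
  classical
  refine GuthKatz.flecnode_mem_surfaceIdeal hg hV (fun l hl ↦ ?_) hcard B hn
  obtain ⟨T, hTM, hT⟩ := h l hl
  refine ⟨T, hM.trans_le hTM, fun x hx ↦ ⟨(hT x hx).1, ?_⟩⟩
  obtain ⟨m, hm, hml⟩ := Finset.exists_mem_ne (hκ.trans (hT x hx).2) l
  obtain ⟨hmV, hxm⟩ := Finset.mem_filter.mp hm
  exact ⟨m, hml, hV m hmV, hxm⟩

open Classical in
lemma card_le_card_transversals {V : Finset Line} {T : Finset Space} {κ : ℕ} (hκ : 2 ≤ κ)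
    (hT : ∀ x ∈ T, x ∈ l ∧ κ ≤ (V.filter (x ∈ ·)).card) : T.card ≤ (transversals V l T).card :=
  (Nat.le_mul_of_pos_right _ (by omega)).trans
    (card_mul_le_card_transversals (fun x hx ↦ (hT x hx).1) fun x hx ↦ (hT x hx).2)

lemma IsRich.exists_rulings {V : Finset Line} {M κ : ℕ} (h : IsRich V M κ) (hg : Irreducible g)
    (hV : ∀ l ∈ V, VanishesOn g l) (hcard : 12 * g.totalDegree ^ 2 < V.card) (hκ : 2 ≤ κ)
    (hM : 12 * g.totalDegree < M) (hlV : l ∈ V) (hB : B 0 = l.dir)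
    {x : Space} (hx : x ∈ l) (hframe : IsNormalFrame g x (B 0) (B 1) (B 2)) :
    ∃ α β γ : ℝ, ∃ I ⊆ V, M - g.totalDegree ≤ I.card ∧
      ∀ m ∈ I, ∃ t r : ℝ, x + t • B 0 ∈ m ∧ m.dir = r • rulingDir B α β γ t := by
  classical
  have hn : ¬ VanishesOn (dirDeriv (B 2) g) l := fun hn ↦
    hframe.eval_normal_ne_zero (hn.eval_eq_zero hx)
  have hn0 : dirDeriv (B 2) g ≠ 0 := by
    intro h0
    exact hframe.eval_normal_ne_zero (by rw [h0, map_zero])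
  obtain ⟨α, β, γ, hdir⟩ := hframe.exists_dir_eq_smul_rulingDir hB (hV l hlV) hx
    (h.flecnode_mem_surfaceIdeal hg hV hcard hκ hM hn0)
  obtain ⟨T, hTM, hT⟩ := h l hlV
  obtain ⟨T', hT', hn', hle⟩ := exists_subset_eval_ne_zero hn fun x hx ↦ (hT x hx).1
  have hdeg := totalDegree_dirDeriv_le (B 2) g
  have hI := card_le_card_transversals hκ fun x hx ↦ hT x (hT' hx)
  refine ⟨α, β, γ, transversals V l T', transversals_subset, by omega, fun m hm ↦ ?_⟩
  obtain ⟨hmV, hml, y, hy, hym⟩ := mem_transversals.mp hm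
  obtain ⟨t, rfl⟩ := Line.exists_eq_add_smul_dir hx (hT y (hT' hy)).1
  rw [← hB] at hy hym
  exact ⟨t, (hdir t (hn' _ hy) m hml (hV m hmV) hym).imp fun r hr ↦ ⟨hym, hr⟩⟩

-- One family of the grid consists of rulings of the quadric, the other of the transversals of one
-- of them, `m₀`: these lie on the quadric and belong to its opposite ruling.
lemma IsRich.exists_grid {V : Finset Line} {M κ : ℕ} (h : IsRich V M κ) (hg : Irreducible g)
    (hV : ∀ l ∈ V, VanishesOn g l) (hcard : 12 * g.totalDegree ^ 2 < V.card) (hκ : 2 ≤ κ)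
    (hM : 20 * g.totalDegree ≤ M) (hlV : l ∈ V) (hB : B 0 = l.dir)
    {x : Space} (hx : x ∈ l) (hframe : IsNormalFrame g x (B 0) (B 1) (B 2)) :
    ∃ I ⊆ V, ∃ J ⊆ V, (∀ m ∈ I, ∀ m' ∈ J, m.Coplanar m') ∧
      M - g.totalDegree ≤ I.card ∧ M - g.totalDegree ≤ J.card := by
  classical
  have hpos := totalDegree_pos_of_irreducible hg
  obtain ⟨α, β, γ, I, hIV, hI, hruling⟩ :=
    h.exists_rulings hg hV hcard hκ (by omega) hlV hB hx hframe
  have hdvd := dvd_rulingQuadric hg (fun m hm ↦ hV m (hIV hm)) hruling (by omega)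
  obtain ⟨m₀, hm₀⟩ := Finset.card_pos.mp (by omega : 0 < I.card)
  obtain ⟨t₀, r₀, hmem₀, hdir₀⟩ := hruling m₀ hm₀
  obtain ⟨T₀, hT₀M, hT₀⟩ := h m₀ (hIV hm₀)
  have hJ := card_le_card_transversals hκ fun y hy ↦
    hT₀ y (Finset.mem_of_mem_erase (a := x + t₀ • B 0) hy)
  have herase := Finset.pred_card_le_card_erase (s := T₀) (a := x + t₀ • B 0)
  refine ⟨I, hIV, transversals V m₀ (T₀.erase (x + t₀ • B 0)), transversals_subset,
    fun m₁ hm₁ m' hm' ↦ ?_, hI, by omega⟩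
  obtain ⟨hmV', hne, y, hy, hym'⟩ := mem_transversals.mp hm'
  obtain ⟨hyx, hyT⟩ := Finset.mem_erase.mp hy
  obtain ⟨t₁, r₁, hmem₁, hdir₁⟩ := hruling m₁ hm₁
  refine (coplanar_of_vanishesOn_rulingQuadric hmem₀ hdir₀ hmem₁ hdir₁ (hT₀ y hyT).1 hyx hym' hne
    ?_).symm
  obtain ⟨q, hq⟩ := hdvd
  rw [hq, vanishesOn_mul]
  exact Or.inl (hV m' hmV')

lemma exists_mem_not_vanishesOn_dirDeriv (hg : Irreducible g) {V : Finset Line}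
    (hV : ∀ l ∈ V, VanishesOn g l) (hcard : g.totalDegree ^ 2 < V.card) :
    ∃ n, ∃ l ∈ V, ¬ VanishesOn (dirDeriv n g) l := by
  obtain ⟨n, hn⟩ := exists_dirDeriv_ne_zero hg
  refine ⟨n, ?_⟩
  by_contra! hvanish
  have hbezout := card_le_totalDegree_mul_totalDegree hg.ne_zero hn
    (hg.isRelPrime_iff_not_dvd.mpr (not_dvd_dirDeriv hn)) hV hvanish
  have hdeg := Nat.mul_le_mul_left g.totalDegree
    ((totalDegree_dirDeriv_le n g).trans (Nat.sub_le _ 1))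
  rw [← pow_two] at hdeg
  omega

theorem IsRich.exists_coplanar_or_grid_of_irreducible {V : Finset Line} {M κ : ℕ}
    (h : IsRich V M κ) (hg : Irreducible g) (hV : ∀ l ∈ V, VanishesOn g l)
    (hcard : 12 * g.totalDegree ^ 2 < V.card) (hκ : 2 ≤ κ) (hM : 20 * g.totalDegree ≤ M) :
    (∃ W ⊆ V, (∀ m ∈ W, ∀ m' ∈ W, m.Coplanar m') ∧ (M - g.totalDegree) * (κ - 1) ≤ W.card) ∨
    (κ = 2 ∧ ∃ I ⊆ V, ∃ J ⊆ V, (∀ m ∈ I, ∀ m' ∈ J, m.Coplanar m') ∧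
      M - g.totalDegree ≤ I.card ∧ M - g.totalDegree ≤ J.card) := by
  classical
  have hpos := totalDegree_pos_of_irreducible hg
  obtain ⟨n, l, hlV, hn⟩ := exists_mem_not_vanishesOn_dirDeriv hg hV (by omega)
  obtain ⟨B, hB, rfl⟩ := exists_basis_of_not_vanishesOn (hV l hlV) hn
  obtain ⟨T, hTM, hT⟩ := h l hlV
  have hTl (x) (hx : x ∈ T) := (hT x hx).1
  by_cases hW : VanishesOn (dirWronskian g (B 0) (B 1) (B 2)) l
  · left
    obtain ⟨W, hWV, hcopl, hle⟩ := exists_coplanar_of_vanishesOn_dirWronskian hB hn hV (hV l hlV)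
      hTl (fun x hx ↦ (hT x hx).2) hW
    exact ⟨W, hWV, hcopl, (Nat.mul_le_mul_right _ (Nat.sub_le_sub_right hTM _)).trans hle⟩
  · right
    obtain ⟨x, hx, B', hB', hframe⟩ := exists_isNormalFrame hB hn hW
    refine ⟨?_, h.exists_grid hg hV hcard hκ hM hlV hB' hx hframe⟩
    by_contra hne
    refine hW (vanishesOn_dirWronskian_of_three_le hB hn hV (hV l hlV) hTl (fun x hx ↦ ?_)
      (by omega))
    have hle := (hT x hx).2
    omega

end Ruled

section Factor

open Classical in
lemma exists_irreducible_dvd_card_filter_vanishesOn {c : ℕ} {f : SpacePoly} (hf : f ≠ 0)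
    {V : Finset Line} (hV : ∀ l ∈ V, VanishesOn f l) (hcard : c * f.totalDegree < V.card) :
    ∃ g, Irreducible g ∧ g ∣ f ∧ c * g.totalDegree < (V.filter (VanishesOn g ·)).card := by
  induction f using UniqueFactorizationMonoid.induction_on_prime generalizing V with
  | h₁ => exact absurd rfl hf
  | h₂ f hunit =>
    obtain ⟨l, hl⟩ := Finset.card_pos.mp (Nat.zero_lt_of_lt hcard)
    exact absurd (hV l hl) (not_vanishesOn_of_isUnit hunit l)
  | h₃ a p ha hp ih =>
    rw [totalDegree_mul_of_isDomain hp.ne_zero ha, mul_add] at hcard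
    by_cases hcard_p : c * p.totalDegree < (V.filter (VanishesOn p ·)).card
    · exact ⟨p, hp.irreducible, dvd_mul_right _ _, hcard_p⟩
    have hcover : V ⊆ V.filter (VanishesOn p ·) ∪ V.filter (VanishesOn a ·) := by
      rw [← Finset.filter_or]
      exact fun l hl ↦ Finset.mem_filter.mpr ⟨hl, vanishesOn_mul.mp (hV l hl)⟩
    have hle := (Finset.card_le_card hcover).trans (Finset.card_union_le _ _)
    obtain ⟨g, hg, hga, hcard_g⟩ := ih ha (V := V.filter (VanishesOn a ·))
      (fun l hl ↦ (Finset.mem_filter.mp hl).2) (by omega)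
    exact ⟨g, hg, hga.mul_left _, hcard_g.trans_le
      (Finset.card_le_card (Finset.filter_subset_filter _ (Finset.filter_subset _ _)))⟩

variable {V : Finset Line} {M κ d : ℕ}

open Classical in
lemma IsRich.filter_not_vanishesOn (hrich : IsRich V M κ) (h : SpacePoly) :
    IsRich (V.filter (¬ VanishesOn h ·)) (M - h.totalDegree) κ := by
  intro l hl
  obtain ⟨hlV, hlh⟩ := Finset.mem_filter.mp hl
  obtain ⟨T, hTM, hT⟩ := hrich l hlV
  obtain ⟨T', hT', hne, hle⟩ := exists_subset_eval_ne_zero hlh fun x hx ↦ (hT x hx).1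
  refine ⟨T', by omega, fun x hx ↦ ⟨(hT x (hT' hx)).1, (hT x (hT' hx)).2.trans ?_⟩⟩
  refine Finset.card_le_card fun m hm ↦ ?_
  obtain ⟨hmV, hxm⟩ := Finset.mem_filter.mp hm
  exact Finset.mem_filter.mpr
    ⟨Finset.mem_filter.mpr ⟨hmV, fun hmh ↦ hne x hx (hmh.eval_eq_zero hxm)⟩, hxm⟩

theorem IsRich.exists_coplanar_or_grid (hrich : IsRich V M κ) {f : SpacePoly} (hf : f ≠ 0)
    (hd : f.totalDegree ≤ d) (hV : ∀ l ∈ V, VanishesOn f l) (hcard : 100 * d ^ 2 < V.card)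
    (hM : 100 * d ≤ M) (hκ : 2 ≤ κ) :
    (∃ W ⊆ V, (∀ m ∈ W, ∀ m' ∈ W, m.Coplanar m') ∧ M * (κ - 1) ≤ 2 * W.card) ∨
    (κ = 2 ∧ ∃ I ⊆ V, ∃ J ⊆ V, (∀ m ∈ I, ∀ m' ∈ J, m.Coplanar m') ∧
      M ≤ 2 * I.card ∧ M ≤ 2 * J.card) := by
  classical
  obtain ⟨g, hg, hgf, hcard_g⟩ := exists_irreducible_dvd_card_filter_vanishesOn (c := 100 * d) hf
    hV (by nlinarith)
  have hgd : g.totalDegree ≤ d := (totalDegree_le_of_dvd_of_isDomain hgf hf).trans hd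
  obtain ⟨h, hfactor, hgh⟩ :=
    (FiniteMultiplicity.of_not_isUnit hg.not_isUnit hf).exists_eq_pow_mul_and_not_dvd
  have hhd : h.totalDegree ≤ d :=
    (totalDegree_le_of_dvd_of_isDomain (Dvd.intro_left _ hfactor.symm) hf).trans hd
  have hh : h ≠ 0 := by
    rintro rfl
    exact hgh (dvd_zero g)
  have hVg : ∀ l ∈ V.filter (¬ VanishesOn h ·), VanishesOn g l := fun l hl ↦ by
    obtain ⟨hlV, hlh⟩ := Finset.mem_filter.mp hl
    exact ((vanishesOn_mul.mp (hfactor ▸ hV l hlV)).resolve_right hlh).of_pow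
  have hbezout : ((V.filter (VanishesOn g ·)).filter (VanishesOn h ·)).card ≤ g.totalDegree * d :=
    (card_le_totalDegree_mul_totalDegree hg.ne_zero hh (hg.isRelPrime_iff_not_dvd.mpr hgh)
      (fun l hl ↦ (Finset.mem_filter.mp (Finset.mem_filter.mp hl).1).2)
      fun l hl ↦ (Finset.mem_filter.mp hl).2).trans (Nat.mul_le_mul_left _ hhd)
  have hsplit := Finset.card_filter_add_card_filter_not (s := V.filter (VanishesOn g ·))
    (VanishesOn h ·)
  have hsub : ((V.filter (VanishesOn g ·)).filter (¬ VanishesOn h ·)).card ≤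
      (V.filter (¬ VanishesOn h ·)).card :=
    Finset.card_le_card (Finset.filter_subset_filter _ (Finset.filter_subset _ _))
  have hcard' : 12 * g.totalDegree ^ 2 < (V.filter (¬ VanishesOn h ·)).card := by
    nlinarith [Nat.mul_le_mul_left g.totalDegree hgd]
  rcases (hrich.filter_not_vanishesOn h).exists_coplanar_or_grid_of_irreducible hg hVg hcard' hκ
    (by omega) with ⟨W, hWV, hcopl, hle⟩ | ⟨rfl, I, hIV, J, hJV, hcopl, hI, hJ⟩
  · refine Or.inl ⟨W, hWV.trans (Finset.filter_subset _ _), hcopl, ?_⟩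
    calc M * (κ - 1) ≤ 2 * (M - h.totalDegree - g.totalDegree) * (κ - 1) :=
          Nat.mul_le_mul_right _ (by omega)
      _ = 2 * ((M - h.totalDegree - g.totalDegree) * (κ - 1)) := mul_assoc _ _ _
      _ ≤ 2 * W.card := Nat.mul_le_mul_left _ hle
  · exact Or.inr ⟨rfl, I, hIV.trans (Finset.filter_subset _ _), J,
      hJV.trans (Finset.filter_subset _ _), hcopl, by omega, by omega⟩

end Factor

end GuthKatz

namespace GuthKatz

open MvPolynomial

/-! ### The incidence theorem -/

section Subconfiguration

variable {α β : Type*} (R : α → β → Prop) [DecidableRel R] (S : Finset α) (V : Finset β)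

lemma sum_card_filter_comm :
    ∑ x ∈ S, (V.filter (R x ·)).card = ∑ l ∈ V, (S.filter (R · l)).card :=
  Finset.sum_card_bipartiteAbove_eq_sum_card_bipartiteBelow R

/-- The number of incidences between `S` and `V`, doubled, with every point charged `k + 1` and
every line charged `2 * M`. A maximiser has no element incident to less than its charge. -/
def incidenceSurplus (k M : ℕ) (S : Finset α) (V : Finset β) : ℤ :=
  2 * ∑ x ∈ S, ((V.filter (R x ·)).card : ℤ) - (k + 1) * S.card - 2 * M * V.card

variable {R S V} {k M : ℕ}

lemma incidenceSurplus_erase_left [DecidableEq α] {x : α} (hx : x ∈ S) :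
    incidenceSurplus R k M (S.erase x) V =
      incidenceSurplus R k M S V + (k + 1) - 2 * (V.filter (R x ·)).card := by
  have hcard : ((S.erase x).card : ℤ) + 1 = S.card := mod_cast Finset.card_erase_add_one hx
  rw [incidenceSurplus, incidenceSurplus, ← Finset.add_sum_erase S _ hx, ← hcard]
  ring

lemma incidenceSurplus_erase_right [DecidableEq β] {l : β} (hl : l ∈ V) :
    incidenceSurplus R k M S (V.erase l) =
      incidenceSurplus R k M S V + 2 * M - 2 * (S.filter (R · l)).card := by
  have hcard : ((V.erase l).card : ℤ) + 1 = V.card := mod_cast Finset.card_erase_add_one hl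
  simp only [incidenceSurplus, ← Nat.cast_sum]
  rw [sum_card_filter_comm R S, sum_card_filter_comm R S, ← Finset.add_sum_erase V _ hl, ← hcard]
  push_cast
  ring

lemma exists_subconfiguration (hS : ∀ x ∈ S, k ≤ (V.filter (R x ·)).card)
    (h : (k + 1) * S.card + 2 * M * V.card < 2 * (k * S.card)) :
    ∃ S' ⊆ S, ∃ V' ⊆ V, V'.Nonempty ∧ (∀ l ∈ V', M ≤ (S'.filter (R · l)).card) ∧
      ∀ x ∈ S', k + 1 ≤ 2 * (V'.filter (R x ·)).card := by
  classical
  obtain ⟨⟨S', V'⟩, hmem, hmax⟩ := Finset.exists_max_image (S.powerset ×ˢ V.powerset)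
    (fun c ↦ incidenceSurplus R k M c.1 c.2) ⟨(S, V), by simp⟩
  simp only [Finset.mem_product, Finset.mem_powerset, Prod.forall, and_imp] at hmem hmax
  obtain ⟨hS', hV'⟩ := hmem
  have hpos : 0 < incidenceSurplus R k M S' V' := by
    refine lt_of_lt_of_le ?_ (hmax S V subset_rfl subset_rfl)
    have hsum : k * S.card ≤ ∑ x ∈ S, (V.filter (R x ·)).card := by
      simpa [mul_comm] using Finset.card_nsmul_le_sum _ _ _ hS
    zify at hsum h
    rw [incidenceSurplus]
    linarith
  refine ⟨S', hS', V', hV', ?_, fun l hl ↦ ?_, fun x hx ↦ ?_⟩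
  · rw [Finset.nonempty_iff_ne_empty]
    rintro rfl
    have : (0 : ℤ) ≤ (k + 1) * S'.card := by positivity
    simp only [incidenceSurplus, Finset.filter_empty, Finset.card_empty, Nat.cast_zero,
      Finset.sum_const_zero] at hpos
    linarith
  · have := hmax S' (V'.erase l) hS' ((Finset.erase_subset _ _).trans hV')
    rw [incidenceSurplus_erase_right hl] at this
    zify
    linarith
  · have := hmax (S'.erase x) V' ((Finset.erase_subset _ _).trans hS') hV'
    rw [incidenceSurplus_erase_left hx] at this
    zify
    linarith

lemma exists_subset_card_mul_mem_Ioc {A c : ℕ} (hc : 0 < c) (hcA : c ≤ A) (hS : A < S.card * c) :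
    ∃ S' ⊆ S, S'.card * c ∈ Set.Ioc A (2 * A) := by
  obtain ⟨S', hS', hcard⟩ := Finset.exists_subset_card_eq (n := A / c + 1) (s := S)
    ((Nat.div_lt_iff_lt_mul hc).mpr hS)
  have hle := Nat.div_mul_le_self A c
  have hlt := Nat.lt_div_mul_add hc (a := A)
  refine ⟨S', hS', ?_, ?_⟩ <;> rw [hcard, add_one_mul] <;> omega

end Subconfiguration

/-- Every line of `V` contains at least `M` points of `S` and every point of `S` lies on at least
`κ` lines of `V`. -/
structure IsRichPair (S : Finset Space) (V : Finset Line) (M κ : ℕ) : Prop where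
  le_card_points : open Classical in ∀ l ∈ V, M ≤ (S.filter (· ∈ l)).card
  le_card_lines : open Classical in ∀ x ∈ S, κ ≤ (V.filter (x ∈ ·)).card

/-- A set of at most `N ^ 2` lines in which at most `N` lines are pairwise coplanar, and in which
more than `2 * N` lines are simultaneously coplanar with at most `N` lines. -/
structure IsSpread (V : Finset Line) (N : ℕ) : Prop where
  card_le : V.card ≤ N ^ 2
  card_le_of_coplanar : ∀ W ⊆ V, (∀ m ∈ W, ∀ m' ∈ W, m.Coplanar m') → W.card ≤ N
  card_le_of_grid : ∀ I ⊆ V, ∀ J ⊆ V, (∀ m ∈ I, ∀ m' ∈ J, m.Coplanar m') → 2 * N < I.card →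
    J.card ≤ N

variable {S : Finset Space} {V : Finset Line} {M κ : ℕ}

lemma IsRichPair.isRich (h : IsRichPair S V M κ) : IsRich V M κ := by
  classical
  refine fun l hl ↦ ⟨S.filter (· ∈ l), by convert h.le_card_points l hl, fun x hx ↦ ?_⟩
  obtain ⟨hxS, hxl⟩ := Finset.mem_filter.mp hx
  exact ⟨hxl, h.le_card_lines x hxS⟩

lemma IsRich.exists_vanishesOn (h : IsRich V M κ) (hκ : 2 ≤ κ) (hM : 0 < M) :
    ∃ f : SpacePoly, f ≠ 0 ∧ f.totalDegree ≤ 3 * V.card / M ∧ ∀ l ∈ V, VanishesOn f l := by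
  classical
  refine exists_vanishesOn_of_crossings (M := M) (fun l hl ↦ ?_) ?_
  · obtain ⟨T, hT, hTl⟩ := h l hl
    refine ⟨T, hT, fun x hx ↦ ⟨(hTl x hx).1, ?_⟩⟩
    obtain ⟨m, hm, hml⟩ := Finset.exists_mem_ne (hκ.trans (hTl x hx).2) l
    exact ⟨m, (Finset.mem_filter.mp hm).1, hml, (Finset.mem_filter.mp hm).2⟩
  · have := Nat.lt_div_mul_add hM (a := 3 * V.card)
    nlinarith

open Classical in
lemma IsRichPair.card_mul_le_sum_off_surface (h : IsRichPair S V M κ) (f : SpacePoly) :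
    (V.filter (¬ VanishesOn f ·)).card * (M - f.totalDegree) ≤
      ∑ x ∈ S with eval x f ≠ 0, (V.filter (x ∈ ·)).card := by
  rw [sum_card_filter_comm (fun (x : Space) (l : Line) ↦ x ∈ l), ← smul_eq_mul]
  refine (Finset.card_nsmul_le_sum _ _ _ fun l hl ↦ ?_).trans
    (Finset.sum_le_sum_of_subset (Finset.filter_subset _ _))
  obtain ⟨hlV, hfl⟩ := Finset.mem_filter.mp hl
  obtain ⟨T, hTS, hTf, hcard⟩ := exists_subset_eval_ne_zero hfl (T := S.filter (· ∈ l))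
    fun x hx ↦ (Finset.mem_filter.mp hx).2
  have hsub : T ⊆ (S.filter (eval · f ≠ 0)).filter (· ∈ l) := fun x hx ↦ by
    obtain ⟨hxS, hxl⟩ := Finset.mem_filter.mp (hTS hx)
    exact Finset.mem_filter.mpr ⟨Finset.mem_filter.mpr ⟨hxS, hTf x hx⟩, hxl⟩
  have hT := Finset.card_le_card hsub
  have hM := h.le_card_points l hlV
  omega

lemma exists_mul_two_pow_lt_and_le {C M : ℕ} (hC : 0 < C) (hM : C < M) :
    ∃ m, C * 2 ^ m < M ∧ M ≤ 2 * C * 2 ^ m := by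
  obtain ⟨m, hle, hlt⟩ := exists_nat_pow_near (x := (M - 1) / C) (y := 2)
    ((Nat.one_le_div_iff hC).mpr (by omega)) one_lt_two
  rw [Nat.le_div_iff_mul_le hC] at hle
  rw [Nat.div_lt_iff_lt_mul hC, pow_succ] at hlt
  exact ⟨m, by rw [mul_comm]; omega, by linarith [show M ≤ M - 1 + 1 by omega]⟩

lemma two_mul_div_eight_pow_le {n M κ m : ℕ} (hM : M ≤ 5400 * 2 ^ m)
    (hn : 2 * 5400 ^ 3 * n ≤ κ * M ^ 3) : 2 * (n / 8 ^ m) ≤ κ := by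
  have hcube : κ * M ^ 3 ≤ κ * (5400 ^ 3 * 8 ^ m) := by
    refine Nat.mul_le_mul_left _ ((Nat.pow_le_pow_left hM 3).trans_eq ?_)
    rw [mul_pow, ← pow_mul, mul_comm m 3, pow_mul]
    norm_num
  have hdiv : n / 8 ^ m * 8 ^ m ≤ n := Nat.div_mul_le_self _ _
  refine Nat.le_of_mul_le_mul_right ?_ (show 0 < 8 ^ m by positivity)
  nlinarith

-- If some line were not contained in the partitioning surface, the incidences off the surface
-- would be too many: half of them are absorbed by the cells, and the rest are crossings of
-- lines with the surface, of which each line has far fewer than `M`.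
open Classical in
lemma IsRichPair.exists_vanishesOn_of_card_le (h : IsRichPair S V M κ) (hM : 2700 < M)
    (hS : 2 * 5400 ^ 3 * S.card ≤ κ * M ^ 3) :
    ∃ f : SpacePoly, f ≠ 0 ∧ 300 * f.totalDegree < M ∧ ∀ l ∈ V, VanishesOn f l := by
  obtain ⟨m, hlt, hle⟩ := exists_mul_two_pow_lt_and_le (by norm_num) hM
  obtain ⟨f, hf, hdeg, hpart⟩ := exists_partitioning_polynomial S V m
  refine ⟨f, hf, by omega, ?_⟩
  by_contra! ⟨l, hlV, hfl⟩
  have hlines := h.card_mul_le_sum_off_surface f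
  have hpoints : (S.filter (eval · f ≠ 0)).card * κ ≤
      ∑ x ∈ S with eval x f ≠ 0, (V.filter (x ∈ ·)).card := by
    rw [← smul_eq_mul]
    exact Finset.card_nsmul_le_sum _ _ _ fun x hx ↦ h.le_card_lines x (Finset.mem_filter.mp hx).1
  have hcells := Nat.mul_le_mul_left (S.filter (eval · f ≠ 0)).card
    (two_mul_div_eight_pow_le hle hS)
  have hcross : (V.filter (¬ VanishesOn f ·)).card * (M - f.totalDegree) ≤
      (V.filter (¬ VanishesOn f ·)).card * (2 * (9 * 2 ^ m + 1)) := by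
    linarith
  have := Nat.le_of_mul_le_mul_left hcross
    (Finset.card_pos.mpr ⟨l, Finset.mem_filter.mpr ⟨hlV, hfl⟩⟩)
  omega

lemma IsRichPair.exists_vanishesOn (h : IsRichPair S V M κ) (hV : V.Nonempty) (hκ : 2 ≤ κ)
    (hM : 2700 < M) (hS : 2 * 5400 ^ 3 * S.card ≤ κ * M ^ 3) :
    ∃ f : SpacePoly, f ≠ 0 ∧ (∀ l ∈ V, VanishesOn f l) ∧ 100 * f.totalDegree ^ 2 < V.card ∧
      100 * f.totalDegree ≤ M := by
  by_cases hcard : 900 * V.card < M ^ 2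
  · obtain ⟨f, hf, hdeg, hfV⟩ := h.isRich.exists_vanishesOn hκ (by omega)
    have hMd : f.totalDegree * M ≤ 3 * V.card := (Nat.le_div_iff_mul_le (by omega)).mp hdeg
    refine ⟨f, hf, hfV, ?_, ?_⟩
    · have hsq : (f.totalDegree * M) ^ 2 ≤ (3 * V.card) ^ 2 := Nat.pow_le_pow_left hMd 2
      have := Nat.mul_lt_mul_of_pos_left hcard hV.card_pos
      refine lt_of_mul_lt_mul_right (a := M ^ 2) ?_ (Nat.zero_le _)
      nlinarith
    · by_contra! hlt
      nlinarith
  · obtain ⟨f, hf, hdeg, hfV⟩ := h.exists_vanishesOn_of_card_le hM hS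
    exact ⟨f, hf, hfV, by nlinarith, by omega⟩

lemma exists_isRichPair {N k : ℕ} (hVN : V.card ≤ N ^ 2) (hk : 2 ≤ k) (hkM : 4 * k * M ≤ 10 ^ 8 * N)
    (hlines : open Classical in ∀ x ∈ S, k ≤ (V.filter (x ∈ ·)).card)
    (hS : 10 ^ 8 * N ^ 3 < S.card * k ^ 2) :
    ∃ S' ⊆ S, ∃ V' ⊆ V, V'.Nonempty ∧ IsRichPair S' V' M ((k + 2) / 2) := by
  have hpoints : 4 * M * N ^ 2 < k * S.card := by
    refine lt_of_mul_lt_mul_right (a := k) ?_ (Nat.zero_le _)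
    calc 4 * M * N ^ 2 * k = 4 * k * M * N ^ 2 := by ring
      _ ≤ 10 ^ 8 * N * N ^ 2 := Nat.mul_le_mul_right _ hkM
      _ = 10 ^ 8 * N ^ 3 := by ring
      _ < S.card * k ^ 2 := hS
      _ = k * S.card * k := by ring
  have hcharge : (k + 1) * S.card + 2 * M * V.card < 2 * (k * S.card) := by
    nlinarith [Nat.mul_le_mul_left (4 * M) hVN, Nat.mul_le_mul_right S.card hk]
  classical
  obtain ⟨S', hS', V', hV', hne, hpts, hlns⟩ := exists_subconfiguration hlines hcharge
  exact ⟨S', hS', V', hV', hne, hpts, fun x hx ↦ by have := hlns x hx; omega⟩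

lemma mul_le_mul_cube_of_mul_sq_le {n k N M : ℕ} (hk : 0 < k) (hn : n * k ^ 2 ≤ 2 * 10 ^ 8 * N ^ 3)
    (hkM : 10 ^ 8 * N ≤ 8 * (k * M)) : 4 * 5400 ^ 3 * n ≤ k * M ^ 3 := by
  refine Nat.le_of_mul_le_mul_right (c := k ^ 2 * 10 ^ 16) ?_ (by positivity)
  calc 4 * 5400 ^ 3 * n * (k ^ 2 * 10 ^ 16) = 4 * 5400 ^ 3 * 10 ^ 16 * (n * k ^ 2) := by ring
    _ ≤ 4 * 5400 ^ 3 * 10 ^ 16 * (2 * 10 ^ 8 * N ^ 3) := Nat.mul_le_mul_left _ hn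
    _ = 8 * 5400 ^ 3 * (10 ^ 8 * N) ^ 3 := by ring
    _ ≤ 8 * 5400 ^ 3 * (8 * (k * M)) ^ 3 := Nat.mul_le_mul_left _ (Nat.pow_le_pow_left hkM 3)
    _ = 4096 * 5400 ^ 3 * (k ^ 3 * M ^ 3) := by ring
    _ ≤ 10 ^ 16 * (k ^ 3 * M ^ 3) := Nat.mul_le_mul_right _ (by norm_num)
    _ = k * M ^ 3 * (k ^ 2 * 10 ^ 16) := by ring

lemma IsSpread.mul_le_of_isRich {N k : ℕ} (hV : IsSpread V N) {V' : Finset Line} (hV' : V' ⊆ V)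
    (h : IsRich V' M ((k + 2) / 2)) (hk : 2 ≤ k) {f : SpacePoly} (hf : f ≠ 0)
    (hfV : ∀ l ∈ V', VanishesOn f l) (hcard : 100 * f.totalDegree ^ 2 < V'.card)
    (hM : 100 * f.totalDegree ≤ M) : k * M ≤ 12 * N := by
  rcases h.exists_coplanar_or_grid hf le_rfl hfV hcard hM (by omega) with
    ⟨W, hW, hcopl, hle⟩ | ⟨hκ, I, hI, J, hJ, hcopl, hMI, hMJ⟩
  · have hWN := hV.card_le_of_coplanar W (hW.trans hV') hcopl
    have : k * M ≤ 3 * ((k + 2) / 2 - 1) * M := Nat.mul_le_mul_right _ (by omega)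
    nlinarith
  · by_contra! hlt
    have : k * M ≤ 3 * M := Nat.mul_le_mul_right _ (by omega)
    have := hV.card_le_of_grid I (hI.trans hV') J (hJ.trans hV') hcopl (by omega)
    omega

theorem IsSpread.card_mul_sq_le {N k : ℕ} (hV : IsSpread V N) (hk : 2 ≤ k) (hkN : k ≤ N)
    (hlines : open Classical in ∀ x ∈ S, k ≤ (V.filter (x ∈ ·)).card) :
    S.card * k ^ 2 ≤ 10 ^ 8 * N ^ 3 := by
  by_contra! hcon
  have hkk : k ^ 2 ≤ N ^ 3 :=
    (Nat.pow_le_pow_left hkN 2).trans (Nat.pow_le_pow_right (by omega) (by norm_num))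
  obtain ⟨S₀, hS₀, hlt, hle⟩ := exists_subset_card_mul_mem_Ioc (by positivity) (by omega) hcon
  obtain ⟨M, hM⟩ : ∃ M, M = 10 ^ 8 * N / (4 * k) := ⟨_, rfl⟩
  have hM0 : 2700 < M := by
    rw [hM, ← Nat.succ_le_iff, Nat.le_div_iff_mul_le (by omega)]
    omega
  have hkM : 4 * k * M ≤ 10 ^ 8 * N := hM ▸ Nat.mul_div_le _ _
  have hkM' : 10 ^ 8 * N ≤ 8 * (k * M) := by
    have := Nat.lt_div_mul_add (show 0 < 4 * k by omega) (a := 10 ^ 8 * N)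
    rw [← hM] at this
    nlinarith
  obtain ⟨S', hS', V', hV', hne, hrich⟩ :=
    exists_isRichPair hV.card_le hk hkM (fun x hx ↦ hlines x (hS₀ hx)) hlt
  have hS'card : 2 * 5400 ^ 3 * S'.card ≤ (k + 2) / 2 * M ^ 3 := by
    have hcube := mul_le_mul_cube_of_mul_sq_le (by omega) (hle.trans_eq (by ring)) hkM'
    have hκ : k * M ^ 3 ≤ 2 * ((k + 2) / 2) * M ^ 3 := Nat.mul_le_mul_right _ (by omega)
    have := Finset.card_le_card hS'
    linarith
  obtain ⟨f, hf, hfV, hdeg, hdM⟩ := hrich.exists_vanishesOn hne (by omega) hM0 hS'card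
  have := hV.mul_le_of_isRich hV' hrich.isRich hk hf hfV hdeg hdM
  omega

end GuthKatz

namespace GuthKatz

/-! ### The line of transformations taking one point to another -/

lemma Line.dir_eq_iff {l m : Line} : l.dir = m.dir ↔ l.c = m.c ∧ l.d = m.d := by
  simp [Line.dir]

lemma Line.Coplanar.exists_mem {l m : Line} (h : l.Coplanar m) (hdir : l.dir ≠ m.dir) :
    ∃ x, x ∈ l ∧ x ∈ m := by
  rw [Line.Coplanar] at h
  obtain ⟨t, hac, hbd⟩ :
      ∃ t, l.a - m.a + t * (l.c - m.c) = 0 ∧ l.b - m.b + t * (l.d - m.d) = 0 := by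
    rcases ne_or_eq l.c m.c with hc | hc
    · have hc' : l.c - m.c ≠ 0 := sub_ne_zero.mpr hc
      refine ⟨-(l.a - m.a) / (l.c - m.c), by field_simp; ring, ?_⟩
      field_simp
      linear_combination -h
    · have hd : l.d - m.d ≠ 0 := sub_ne_zero.mpr fun hd ↦ hdir (Line.dir_eq_iff.mpr ⟨hc, hd⟩)
      refine ⟨-(l.b - m.b) / (l.d - m.d), ?_, by field_simp; ring⟩
      rw [hc, sub_self, mul_zero] at h ⊢
      rw [(mul_eq_zero.mp h).resolve_right hd, add_zero]
  refine ⟨l.point t, l.point_mem t, ?_⟩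
  have hpoint : l.point t = m.point t := by
    rw [Line.point, Line.point, show l.a + t * l.c = m.a + t * m.c by linarith,
      show l.b + t * l.d = m.b + t * m.d by linarith]
  exact hpoint ▸ m.point_mem t

/-- The transformations `z ↦ (α * z + β) / (γ * z + δ)` taking `p` to `r` form a line in the
projective space of `(α : β : γ : δ)`. This is that line in the affine chart `δ + θ * γ = 1`, with
coordinates `(α, β, γ)`. -/
def transportLine (θ : ℝ) (p r : ℍ) : Line where
  a := r.im / p.im
  b := r.re - r.im / p.im * p.re
  c := r.re + r.im / p.im * p.re - θ * (r.im / p.im)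
  d := -(r.im / p.im * (p.re ^ 2 + p.im ^ 2)) - θ * (r.re - r.im / p.im * p.re)

lemma dist_eq_dist_iff {p q r s : ℍ} : dist p q = dist r s ↔
    ((p.re - q.re) ^ 2 + p.im ^ 2 + q.im ^ 2) * (r.im * s.im) =
      ((r.re - s.re) ^ 2 + r.im ^ 2 + s.im ^ 2) * (p.im * q.im) := by
  rw [← Real.cosh_strictMonoOn.injOn.eq_iff (Set.mem_Ici.mpr dist_nonneg)
    (Set.mem_Ici.mpr dist_nonneg), UpperHalfPlane.cosh_dist', UpperHalfPlane.cosh_dist',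
    div_eq_div_iff (by positivity) (by positivity)]
  constructor <;> intro h <;> linarith

lemma coplanar_transportLine_iff {θ : ℝ} {p q r s : ℍ} :
    (transportLine θ p r).Coplanar (transportLine θ q s) ↔ dist p q = dist r s := by
  have hp := p.im_ne_zero
  have hq := q.im_ne_zero
  rw [dist_eq_dist_iff, Line.Coplanar, ← sub_eq_zero, ← sub_eq_zero (b := _ * (p.im * q.im)),
    ← mul_eq_zero_iff_left (mul_ne_zero hp hq)]
  refine Eq.congr_left ?_
  simp only [transportLine]
  field_simp
  ring

lemma eq_of_dir_transportLine_eq {p q r s : ℍ} {θ θ' : ℝ} (hne : θ ≠ θ')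
    (hθ : (transportLine θ p r).dir = (transportLine θ q s).dir)
    (hθ' : (transportLine θ' p r).dir = (transportLine θ' q s).dir) : p = q ∧ r = s := by
  obtain ⟨hc, hd⟩ := Line.dir_eq_iff.mp hθ
  obtain ⟨hc', hd'⟩ := Line.dir_eq_iff.mp hθ'
  simp only [transportLine] at hc hd hc' hd'
  have hsub := sub_ne_zero.mpr hne
  have hscale : r.im / p.im = s.im / q.im := mul_left_cancel₀ hsub (by linear_combination hc' - hc)
  obtain ⟨ρ, hr, hs, hρ⟩ : ∃ ρ, r.im = ρ * p.im ∧ s.im = ρ * q.im ∧ ρ ≠ 0 :=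
    ⟨r.im / p.im, (div_mul_cancel₀ _ p.im_ne_zero).symm,
      hscale ▸ (div_mul_cancel₀ _ q.im_ne_zero).symm, div_ne_zero r.im_ne_zero p.im_ne_zero⟩
  rw [hr, hs, mul_div_cancel_right₀ _ p.im_ne_zero, mul_div_cancel_right₀ _ q.im_ne_zero]
    at hc hd hc' hd'
  have hshift : r.re - ρ * p.re = s.re - ρ * q.re :=
    mul_left_cancel₀ hsub (by linear_combination hd' - hd)
  have hpre : p.re = q.re := mul_left_cancel₀ hρ (by linear_combination (hc - hshift) / 2)
  have hpim : p.im = q.im := by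
    refine (pow_left_inj₀ p.im_pos.le q.im_pos.le two_ne_zero).mp (mul_left_cancel₀ hρ ?_)
    rw [hpre] at hd hshift
    linear_combination -hd - θ * hshift
  refine ⟨UpperHalfPlane.ext_re_im hpre hpim, UpperHalfPlane.ext_re_im ?_ (by rw [hr, hs, hpim])⟩
  linear_combination hshift + ρ * hpre

lemma exists_injOn_dir_transportLine (P : Finset ℍ) :
    ∃ θ, Set.InjOn (fun t : ℍ × ℍ ↦ (transportLine θ t.1 t.2).dir) (P ×ˢ P) := by
  let Q : Set ((ℍ × ℍ) × ℍ × ℍ) := ((P ×ˢ P : Set (ℍ × ℍ)).offDiag)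
  have hfin : (⋃ t ∈ Q, {θ | (transportLine θ t.1.1 t.1.2).dir =
      (transportLine θ t.2.1 t.2.2).dir}).Finite := by
    refine (P.finite_toSet.prod P.finite_toSet).offDiag.biUnion fun t ht ↦
      Set.Subsingleton.finite fun θ hθ θ' hθ' ↦ ?_
    by_contra hne
    obtain ⟨hfst, hsnd⟩ := eq_of_dir_transportLine_eq hne hθ hθ'
    exact ht.2.2 (Prod.ext hfst hsnd)
  obtain ⟨θ, hθ⟩ := hfin.exists_notMem
  refine ⟨θ, fun t ht u hu htu ↦ ?_⟩
  by_contra hne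
  exact hθ (Set.mem_biUnion (x := (t, u)) ⟨ht, hu, hne⟩ htu)

/-! ### Quadruples of points at equal distances -/

-- Hyperbolic circles are Euclidean circles, so two of them with three common points coincide; the
-- Euclidean centre and radius determine the hyperbolic centre.
lemma eq_of_dist_eq_of_dist_eq {r₁ r₂ r₃ s s' : ℍ} (h₁₂ : r₁ ≠ r₂) (h₁₃ : r₁ ≠ r₃) (h₂₃ : r₂ ≠ r₃)
    (hs₂ : dist r₁ s = dist r₂ s) (hs₃ : dist r₁ s = dist r₃ s)
    (hs'₂ : dist r₁ s' = dist r₂ s') (hs'₃ : dist r₁ s' = dist r₃ s') : s = s' := by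
  have hcircle {r t : ℍ} (h : dist r₁ t = dist r t) :=
    UpperHalfPlane.dist_eq_iff_dist_coe_center_eq.mp h.symm
  have hcenter : s.center (dist r₁ s) = s'.center (dist r₁ s') := by
    by_contra hne
    rcases EuclideanGeometry.eq_of_dist_eq_of_dist_eq_of_finrank_eq_two Complex.finrank_real_complex
      (UpperHalfPlane.coe_injective.ne hne) (UpperHalfPlane.coe_injective.ne h₁₂) (hcircle rfl)
      (hcircle hs₂) (hcircle hs₃) (hcircle rfl) (hcircle hs'₂) (hcircle hs'₃) with h | h
    · exact h₁₃ (UpperHalfPlane.coe_injective h).symm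
    · exact h₂₃ (UpperHalfPlane.coe_injective h).symm
  have hre : (s.center (dist r₁ s)).re = (s'.center (dist r₁ s')).re :=
    congrArg UpperHalfPlane.re hcenter
  have hcosh : s.im * Real.cosh (dist r₁ s) = s'.im * Real.cosh (dist r₁ s') :=
    congrArg UpperHalfPlane.im hcenter
  have hsinh : s.im * Real.sinh (dist r₁ s) = s'.im * Real.sinh (dist r₁ s') := by
    rw [← hcircle (t := s) rfl, ← hcircle (t := s') rfl, hcenter]
  refine UpperHalfPlane.ext_re_im hre ?_
  rw [← pow_left_inj₀ s.im_pos.le s'.im_pos.le two_ne_zero]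
  calc s.im ^ 2 = (s.im * Real.cosh (dist r₁ s)) ^ 2 - (s.im * Real.sinh (dist r₁ s)) ^ 2 := by
        rw [mul_pow, mul_pow, ← mul_sub, Real.cosh_sq_sub_sinh_sq, mul_one]
    _ = s'.im ^ 2 := by
        rw [hcosh, hsinh, mul_pow, mul_pow, ← mul_sub, Real.cosh_sq_sub_sinh_sq, mul_one]

lemma card_le_of_forall_dist_eq {X : Type*} [MetricSpace X] {P : Finset X} {A : Finset (X × X)}
    (hA : A ⊆ P ×ˢ P) (h : ∀ t ∈ A, ∀ u ∈ A, dist t.1 u.1 = dist t.2 u.2) : A.card ≤ P.card := by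
  refine Finset.card_le_card_of_injOn Prod.fst
    (fun t ht ↦ (Finset.mem_product.mp (hA ht)).1) fun t ht u hu htu ↦ Prod.ext htu ?_
  rw [← dist_eq_zero, ← h t ht u hu, htu, dist_self]

lemma card_le_of_forall_dist_eq_of_lt_card {P : Finset ℍ} {A B : Finset (ℍ × ℍ)}
    (hA : A ⊆ P ×ˢ P) (hB : B ⊆ P ×ˢ P) (h : ∀ t ∈ A, ∀ u ∈ B, dist t.1 u.1 = dist t.2 u.2)
    (hcard : 2 * P.card < A.card) : B.card ≤ P.card := by
  classical
  obtain ⟨p, -, hp⟩ := Finset.exists_lt_card_fiber_of_mul_lt_card_of_maps_to (f := Prod.fst)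
    (fun t ht ↦ (Finset.mem_product.mp (hA ht)).1) (mul_comm 2 P.card ▸ hcard)
  obtain ⟨t₁, t₂, t₃, ht₁, ht₂, ht₃, h₁₂, h₁₃, h₂₃⟩ := Finset.two_lt_card_iff.mp hp
  simp only [Finset.mem_filter] at ht₁ ht₂ ht₃
  have hsnd {t u : ℍ × ℍ} (ht : t ∈ A ∧ t.1 = p) (hu : u ∈ A ∧ u.1 = p) (htu : t ≠ u) :
      t.2 ≠ u.2 := fun heq ↦ htu (Prod.ext (ht.2.trans hu.2.symm) heq)
  have hdist {t u b : ℍ × ℍ} (ht : t ∈ A ∧ t.1 = p) (hu : u ∈ A ∧ u.1 = p) (hb : b ∈ B) :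
      dist t.2 b.2 = dist u.2 b.2 := by
    rw [← h t ht.1 b hb, ← h u hu.1 b hb, ht.2, hu.2]
  refine Finset.card_le_card_of_injOn Prod.fst
    (fun t ht ↦ (Finset.mem_product.mp (hB ht)).1) fun b hb b' hb' hbb' ↦ Prod.ext hbb' ?_
  exact eq_of_dist_eq_of_dist_eq (hsnd ht₁ ht₂ h₁₂) (hsnd ht₁ ht₃ h₁₃) (hsnd ht₂ ht₃ h₂₃)
    (hdist ht₁ ht₂ hb) (hdist ht₁ ht₃ hb) (hdist ht₁ ht₂ hb') (hdist ht₁ ht₃ hb')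

lemma isSpread_image_transportLine [DecidableEq Line] (θ : ℝ) (P : Finset ℍ) :
    IsSpread ((P ×ˢ P).image fun t ↦ transportLine θ t.1 t.2) P.card := by
  refine ⟨Finset.card_image_le.trans (by rw [Finset.card_product, sq]), fun W hW hcopl ↦ ?_,
    fun I hI J hJ hcopl hcard ↦ ?_⟩
  · obtain ⟨A, hA, rfl⟩ := Finset.subset_image_iff.mp hW
    refine Finset.card_image_le.trans (card_le_of_forall_dist_eq hA fun t ht u hu ↦ ?_)
    exact coplanar_transportLine_iff.mp
      (hcopl _ (Finset.mem_image_of_mem _ ht) _ (Finset.mem_image_of_mem _ hu))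
  · obtain ⟨A, hA, rfl⟩ := Finset.subset_image_iff.mp hI
    obtain ⟨B, hB, rfl⟩ := Finset.subset_image_iff.mp hJ
    refine Finset.card_image_le.trans (card_le_of_forall_dist_eq_of_lt_card hA hB
      (fun t ht u hu ↦ ?_) (hcard.trans_le Finset.card_image_le))
    exact coplanar_transportLine_iff.mp
      (hcopl _ (Finset.mem_image_of_mem _ ht) _ (Finset.mem_image_of_mem _ hu))

lemma sum_Icc_two_inv_le_log {N : ℕ} (hN : 1 ≤ N) :
    ∑ j ∈ Finset.Icc 2 N, (j : ℝ)⁻¹ ≤ Real.log N := by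
  have h := harmonic_le_one_add_log N
  rw [harmonic_eq_sum_Icc, ← Finset.add_sum_Ioc_eq_sum_Icc hN] at h
  push_cast at h
  rw [show Finset.Icc 2 N = Finset.Ioc 1 N from (Finset.Icc_add_one_left_eq_Ioc 1 N)]
  linarith [inv_one (G := ℝ)]

lemma sum_Icc_two_mul_sub_one (k : ℕ) :
    ∑ j ∈ Finset.Icc 2 k, 2 * ((j : ℝ) - 1) = (k : ℝ) * k - k := by
  induction k with
  | zero => simp
  | succ k ih =>
    rcases Nat.eq_zero_or_pos k with rfl | h
    · simp
    · rw [Finset.sum_Icc_succ_top (by omega), ih]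
      push_cast
      ring

-- Writing `k ^ 2 - k` as a sum over levels `j ≤ k`, the level `j` contributes at most `2 * A / j`.
lemma sum_sq_sub_self_le_mul_log {α : Type*} {S : Finset α} {k : α → ℕ} {N : ℕ} {A : ℝ} (hN : 1 ≤ N)
    (hA : 0 ≤ A) (hkN : ∀ x, k x ≤ N)
    (hk : ∀ j, 2 ≤ j → j ≤ N → (S.filter (j ≤ k ·)).card * (j : ℝ) ^ 2 ≤ A) :
    ∑ x ∈ S, ((k x : ℝ) * k x - k x) ≤ 2 * A * Real.log N := by
  have hlevel : ∀ j ∈ Finset.Icc 2 N,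
      (S.filter (j ≤ k ·)).card * (2 * ((j : ℝ) - 1)) ≤ 2 * A * (j : ℝ)⁻¹ := fun j hj ↦ by
    obtain ⟨hj2, hjN⟩ := Finset.mem_Icc.mp hj
    have hj0 : (0 : ℝ) < j := by positivity
    rw [← div_eq_mul_inv, le_div_iff₀ hj0]
    nlinarith [hk j hj2 hjN, mul_nonneg (Nat.cast_nonneg (α := ℝ) (S.filter (j ≤ k ·)).card) hj0.le]
  calc ∑ x ∈ S, ((k x : ℝ) * k x - k x)
      = ∑ x ∈ S, ∑ j ∈ Finset.Icc 2 N, if j ≤ k x then 2 * ((j : ℝ) - 1) else 0 := by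
        refine Finset.sum_congr rfl fun x _ ↦ ?_
        rw [← sum_Icc_two_mul_sub_one, ← Finset.sum_filter]
        congr 1
        ext j
        have := hkN x
        simp only [Finset.mem_filter, Finset.mem_Icc]
        omega
    _ = ∑ j ∈ Finset.Icc 2 N, (S.filter (j ≤ k ·)).card * (2 * ((j : ℝ) - 1)) := by
        rw [Finset.sum_comm]
        refine Finset.sum_congr rfl fun j _ ↦ ?_
        rw [← Finset.sum_filter, Finset.sum_const, nsmul_eq_mul]
    _ ≤ ∑ j ∈ Finset.Icc 2 N, 2 * A * (j : ℝ)⁻¹ := Finset.sum_le_sum hlevel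
    _ = 2 * A * ∑ j ∈ Finset.Icc 2 N, (j : ℝ)⁻¹ := (Finset.mul_sum _ _ _).symm
    _ ≤ 2 * A * Real.log N := mul_le_mul_of_nonneg_left (sum_Icc_two_inv_le_log hN) (by positivity)

open Classical in
lemma exists_card_le_sum_of_meet {V : Finset Line} {T : Finset (Line × Line)}
    (hT : ∀ t ∈ T, t.1 ∈ V ∧ t.2 ∈ V ∧ t.1 ≠ t.2 ∧ ∃ x, x ∈ t.1 ∧ x ∈ t.2) :
    ∃ S : Finset Space, (T.card : ℝ) ≤
      ∑ x ∈ S, (((V.filter (x ∈ ·)).card : ℝ) * (V.filter (x ∈ ·)).card -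
        (V.filter (x ∈ ·)).card) := by
  have hmeet (t) : ∃ x, t ∈ T → x ∈ t.1 ∧ x ∈ t.2 := by
    by_cases ht : t ∈ T
    · exact (hT t ht).2.2.2.imp fun x hx _ ↦ hx
    · exact ⟨0, fun ht' ↦ absurd ht' ht⟩
  choose g hg using hmeet
  refine ⟨T.image g, ?_⟩
  rw [Finset.card_eq_sum_card_image g T, Nat.cast_sum]
  refine Finset.sum_le_sum fun x _ ↦ ?_
  have hsub : T.filter (g · = x) ⊆ (V.filter (x ∈ ·)).offDiag := fun t ht ↦ by
    obtain ⟨htT, rfl⟩ := Finset.mem_filter.mp ht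
    obtain ⟨h₁, h₂, hne, -⟩ := hT t htT
    simp only [Finset.mem_offDiag, Finset.mem_filter]
    exact ⟨⟨h₁, (hg t htT).1⟩, ⟨h₂, (hg t htT).2⟩, hne⟩
  have hcard := Finset.card_le_card hsub
  rw [Finset.offDiag_card] at hcard
  rw [← Nat.cast_mul, ← Nat.cast_sub (Nat.le_mul_self _)]
  exact_mod_cast hcard

theorem IsSpread.card_meeting_pairs_le {N : ℕ} {V : Finset Line} (hV : IsSpread V N) (hN : 1 ≤ N)
    {T : Finset (Line × Line)}
    (hT : ∀ t ∈ T, t.1 ∈ V ∧ t.2 ∈ V ∧ t.1 ≠ t.2 ∧ ∃ x, x ∈ t.1 ∧ x ∈ t.2) :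
    (T.card : ℝ) ≤ 2 * 10 ^ 8 * N ^ 3 * Real.log N := by
  classical
  obtain ⟨S, hS⟩ := exists_card_le_sum_of_meet hT
  have hlog := sum_sq_sub_self_le_mul_log (S := S) (k := fun x ↦ (V.filter (x ∈ ·)).card)
    (A := 10 ^ 8 * N ^ 3) hN (by positivity)
    (fun x ↦ hV.card_le_of_coplanar _ (Finset.filter_subset _ _) fun m hm m' hm' ↦
      Line.coplanar_of_mem (Finset.mem_filter.mp hm).2 (Finset.mem_filter.mp hm').2)
    fun j hj hjN ↦ mod_cast hV.card_mul_sq_le hj hjN fun x hx ↦ (Finset.mem_filter.mp hx).2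
  linarith

theorem card_quadruples_le {P : Finset ℍ} (hP : P.Nonempty) {T : Finset ((ℍ × ℍ) × ℍ × ℍ)}
    (hT : ∀ t ∈ T, t.1 ∈ P ×ˢ P ∧ t.2 ∈ P ×ˢ P ∧ t.1.1 ≠ t.1.2 ∧
      dist t.1.1 t.1.2 = dist t.2.1 t.2.2) :
    (T.card : ℝ) ≤ 2 * 10 ^ 8 * P.card ^ 3 * Real.log P.card := by
  classical
  obtain ⟨θ, hθ⟩ := exists_injOn_dir_transportLine P
  have hmem : ∀ t ∈ T, (t.1.1, t.2.1) ∈ P ×ˢ P ∧ (t.1.2, t.2.2) ∈ P ×ˢ P := fun t ht ↦ by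
    obtain ⟨h₁, h₂, -⟩ := hT t ht
    rw [Finset.mem_product] at h₁ h₂
    exact ⟨Finset.mk_mem_product h₁.1 h₂.1, Finset.mk_mem_product h₁.2 h₂.2⟩
  have hdir {t u : ℍ × ℍ} (ht : t ∈ P ×ˢ P) (hu : u ∈ P ×ˢ P)
      (h : (transportLine θ t.1 t.2).dir = (transportLine θ u.1 u.2).dir) : t = u :=
    hθ (mod_cast ht) (mod_cast hu) h
  have hinj : Set.InjOn (fun t : (ℍ × ℍ) × ℍ × ℍ ↦
      (transportLine θ t.1.1 t.2.1, transportLine θ t.1.2 t.2.2)) T := fun t ht u hu htu ↦ by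
    have h₁ := hdir (hmem t ht).1 (hmem u hu).1 (congrArg (Line.dir ·.1) htu)
    have h₂ := hdir (hmem t ht).2 (hmem u hu).2 (congrArg (Line.dir ·.2) htu)
    simp only [Prod.mk.injEq] at h₁ h₂
    exact Prod.ext (Prod.ext h₁.1 h₂.1) (Prod.ext h₁.2 h₂.2)
  rw [← Finset.card_image_of_injOn hinj]
  refine (isSpread_image_transportLine θ P).card_meeting_pairs_le hP.card_pos fun _ hl ↦ ?_
  obtain ⟨t, ht, rfl⟩ := Finset.mem_image.mp hl
  obtain ⟨-, -, hne, hdist⟩ := hT t ht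
  have hdir_ne : (transportLine θ t.1.1 t.2.1).dir ≠ (transportLine θ t.1.2 t.2.2).dir := fun h ↦
    hne (congrArg Prod.fst (hdir (hmem t ht).1 (hmem t ht).2 h))
  exact ⟨Finset.mem_image_of_mem _ (hmem t ht).1, Finset.mem_image_of_mem _ (hmem t ht).2,
    fun h ↦ hdir_ne (congrArg Line.dir h),
    (coplanar_transportLine_iff.mpr hdist).exists_mem hdir_ne⟩

end GuthKatz

namespace GuthKatz

/-! ### Quotient distances -/

lemma log_mul_le {B N : ℝ} (hB : 1 ≤ B) (hN : 2 ≤ N) :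
    Real.log (B * N) ≤ (1 + Real.log B / Real.log 2) * Real.log N := by
  have hlog2 : 0 < Real.log 2 := Real.log_pos one_lt_two
  have hlogB : Real.log B ≤ Real.log B / Real.log 2 * Real.log N := by
    rw [div_mul_eq_mul_div, le_div_iff₀ hlog2]
    exact mul_le_mul_of_nonneg_left (Real.log_le_log two_pos hN) (Real.log_nonneg hB)
  rw [Real.log_mul (by positivity) (by positivity)]
  linarith

section QuotDist

variable {Γ : Subgroup SL(2, ℝ)}

lemma quotDist_le (p q : ℍ) (γ : Γ) : quotDist Γ p q ≤ dist p ((γ : SL(2, ℝ)) • q) :=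
  ciInf_le ⟨0, by rintro _ ⟨γ, rfl⟩; exact dist_nonneg⟩ γ

lemma quotDist_eq_zero_of_smul_eq_smul {p q : ℍ} {γ δ : Γ}
    (h : (γ : SL(2, ℝ)) • p = (δ : SL(2, ℝ)) • q) : quotDist Γ p q = 0 := by
  refine le_antisymm ((quotDist_le p q (γ⁻¹ * δ)).trans_eq ?_)
    (Real.iInf_nonneg fun _ ↦ dist_nonneg)
  rw [Subgroup.coe_mul, mul_smul, ← h, Subgroup.coe_inv, inv_smul_smul, dist_self]

-- Only the finitely many `γ` for which `γ • F` comes within `diam F` of `F` can compete with `1`.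
lemma exists_finset_quotDist_eq_dist [ProperlyDiscontinuousSMul Γ ℍ] {F : Set ℍ}
    (hF : IsCompact F) : ∃ G : Finset Γ, 1 ∈ G ∧ ∀ p ∈ F, ∀ q ∈ F, ∃ γ ∈ G,
      quotDist Γ p q = dist p ((γ : SL(2, ℝ)) • q) := by
  classical
  have hfin := ProperlyDiscontinuousSMul.finite_disjoint_inter_image (Γ := Γ) hF
    (hF.cthickening (r := Metric.diam F))
  refine ⟨insert 1 hfin.toFinset, Finset.mem_insert_self _ _, fun p hp q hq ↦ ?_⟩
  obtain ⟨γ₀, hγ₀, hmin⟩ := Finset.exists_min_image (insert 1 hfin.toFinset)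
    (fun γ : Γ ↦ dist p ((γ : SL(2, ℝ)) • q)) ⟨1, Finset.mem_insert_self _ _⟩
  refine ⟨γ₀, hγ₀, le_antisymm (quotDist_le p q γ₀) (le_ciInf fun γ ↦ ?_)⟩
  by_cases hγ : γ ∈ insert 1 hfin.toFinset
  · exact hmin γ hγ
  have hfar : (γ : SL(2, ℝ)) • q ∉ Metric.cthickening (Metric.diam F) F := fun h ↦ by
    refine hγ (Finset.mem_insert_of_mem (hfin.mem_toFinset.mpr ?_))
    exact ⟨(γ : SL(2, ℝ)) • q, ⟨q, hq, rfl⟩, h⟩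
  calc dist p ((γ₀ : SL(2, ℝ)) • q) ≤ dist p (((1 : Γ) : SL(2, ℝ)) • q) :=
        hmin 1 (Finset.mem_insert_self _ _)
    _ = dist p q := by rw [OneMemClass.coe_one, one_smul]
    _ ≤ Metric.diam F := Metric.dist_le_diam_of_mem hF.isBounded hp hq
    _ ≤ dist p ((γ : SL(2, ℝ)) • q) := by
        by_contra! hlt
        exact hfar (Metric.mem_cthickening_of_dist_le _ p _ _ hp (dist_comm p _ ▸ hlt.le))

open scoped Pointwise in
open Classical in
-- The map sends `(p, q)` to `(p, γ • q)`, where `γ ∈ G` realises the quotient distance.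
lemma exists_injOn_offDiag_quotDist_eq_dist {G : Finset Γ} (hG1 : 1 ∈ G) {P : Finset ℍ}
    (hG : ∀ p ∈ P, ∀ q ∈ P, ∃ γ ∈ G, quotDist Γ p q = dist p ((γ : SL(2, ℝ)) • q))
    (hne : ∀ p ∈ P, ∀ q ∈ P, p ≠ q → quotDist Γ p q ≠ 0) :
    ∃ lift : ℍ × ℍ → ℍ × ℍ, Set.InjOn lift P.offDiag ∧ ∀ a ∈ P.offDiag,
      lift a ∈ (G • P) ×ˢ (G • P) ∧ quotDist Γ a.1 a.2 = dist (lift a).1 (lift a).2 := by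
  have hrep (a : ℍ × ℍ) : ∃ γ : Γ, a ∈ P.offDiag →
      γ ∈ G ∧ quotDist Γ a.1 a.2 = dist a.1 ((γ : SL(2, ℝ)) • a.2) := by
    by_cases ha : a ∈ P.offDiag
    · obtain ⟨h₁, h₂, -⟩ := Finset.mem_offDiag.mp ha
      exact (hG a.1 h₁ a.2 h₂).imp fun γ hγ _ ↦ hγ
    · exact ⟨1, fun ha' ↦ absurd ha' ha⟩
  choose g hg using hrep
  refine ⟨fun a ↦ (a.1, (g a : SL(2, ℝ)) • a.2), fun a ha b hb hab ↦ ?_, fun a ha ↦ ?_⟩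
  · obtain ⟨hfst, hsnd⟩ := Prod.mk.inj hab
    refine Prod.ext hfst ?_
    by_contra hab₂
    exact hne _ (Finset.mem_offDiag.mp ha).2.1 _ (Finset.mem_offDiag.mp hb).2.1 hab₂
      (quotDist_eq_zero_of_smul_eq_smul hsnd)
  · obtain ⟨h₁, h₂, -⟩ := Finset.mem_offDiag.mp ha
    have hfst : a.1 ∈ G • P := by simpa using Finset.smul_mem_smul hG1 h₁
    exact ⟨Finset.mk_mem_product hfst (Finset.smul_mem_smul (hg a ha).1 h₂), (hg a ha).2⟩

open scoped Pointwise in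
open Classical in
lemma card_quotDist_quadruples_le {G : Finset Γ} (hG1 : 1 ∈ G) {P : Finset ℍ} (hP : P.Nonempty)
    (hG : ∀ p ∈ P, ∀ q ∈ P, ∃ γ ∈ G, quotDist Γ p q = dist p ((γ : SL(2, ℝ)) • q))
    (hne : ∀ p ∈ P, ∀ q ∈ P, p ≠ q → quotDist Γ p q ≠ 0) :
    (((P.offDiag ×ˢ P.offDiag).filter fun t ↦
        quotDist Γ t.1.1 t.1.2 = quotDist Γ t.2.1 t.2.2).card : ℝ) ≤
      2 * 10 ^ 8 * (G.card * P.card) ^ 3 * Real.log (G.card * P.card) := by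
  obtain ⟨lift, hinj, hlift⟩ := exists_injOn_offDiag_quotDist_eq_dist hG1 hG hne
  have hGP : (G • P).Nonempty := Finset.Nonempty.smul ⟨1, hG1⟩ hP
  rw [← Finset.card_image_of_injOn (f := Prod.map lift lift) <| (hinj.prodMap hinj).mono
    fun t ht ↦ by simpa using (Finset.mem_filter.mp ht).1]
  refine (card_quadruples_le hGP fun t ht ↦ ?_).trans ?_
  · obtain ⟨u, hu, rfl⟩ := Finset.mem_image.mp ht
    obtain ⟨hu, hdist⟩ := Finset.mem_filter.mp hu
    obtain ⟨ha, hb⟩ := Finset.mem_product.mp hu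
    obtain ⟨ha_mem, ha_dist⟩ := hlift _ ha
    obtain ⟨hb_mem, hb_dist⟩ := hlift _ hb
    refine ⟨ha_mem, hb_mem, fun h ↦ ?_, (ha_dist.symm.trans hdist).trans hb_dist⟩
    obtain ⟨h₁, h₂, h₁₂⟩ := Finset.mem_offDiag.mp ha
    exact hne _ h₁ _ h₂ h₁₂ (ha_dist.trans (dist_eq_zero.mpr h))
  · have hcard : ((G • P).card : ℝ) ≤ G.card * P.card := mod_cast Finset.card_smul_le
    gcongr

open Classical in
lemma card_quotDist_quadruples_le_mul_log {G : Finset Γ} (hG1 : 1 ∈ G) {P : Finset ℍ}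
    (hP : 2 ≤ P.card)
    (hG : ∀ p ∈ P, ∀ q ∈ P, ∃ γ ∈ G, quotDist Γ p q = dist p ((γ : SL(2, ℝ)) • q))
    (hne : ∀ p ∈ P, ∀ q ∈ P, p ≠ q → quotDist Γ p q ≠ 0) :
    (((P.offDiag ×ˢ P.offDiag).filter fun t ↦
        quotDist Γ t.1.1 t.1.2 = quotDist Γ t.2.1 t.2.2).card : ℝ) ≤
      2 * 10 ^ 8 * G.card ^ 3 * (1 + Real.log G.card / Real.log 2) * Real.log P.card *
        P.card ^ 3 := by
  have hG_card : (1 : ℝ) ≤ G.card := mod_cast Finset.card_pos.mpr ⟨1, hG1⟩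
  calc _ ≤ 2 * 10 ^ 8 * (G.card * P.card) ^ 3 * Real.log (G.card * P.card) :=
        card_quotDist_quadruples_le hG1 (Finset.card_pos.mp (by omega)) hG hne
    _ ≤ 2 * 10 ^ 8 * (G.card * P.card) ^ 3 *
          ((1 + Real.log G.card / Real.log 2) * Real.log P.card) := by
        gcongr
        exact log_mul_le hG_card (mod_cast hP)
    _ = _ := by ring

end QuotDist

open Classical in
lemma sq_card_le_card_image_mul_card_filter {α β : Type*} (A : Finset α) (f : α → β) :
    A.card ^ 2 ≤ (A.image f).card * ((A ×ˢ A).filter fun t ↦ f t.1 = f t.2).card := by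
  have hpairs : ((A ×ˢ A).filter fun t ↦ f t.1 = f t.2).card =
      ∑ b ∈ A.image f, (A.filter (f · = b)).card ^ 2 := by
    rw [Finset.card_eq_sum_card_fiberwise (f := fun t ↦ f t.1) (t := A.image f) fun t ht ↦
      Finset.mem_image_of_mem f (Finset.mem_product.mp (Finset.mem_filter.mp ht).1).1]
    refine Finset.sum_congr rfl fun b _ ↦ ?_
    rw [sq, ← Finset.card_product]
    congr 1
    ext ⟨x, y⟩
    simp only [Finset.mem_filter, Finset.mem_product]
    grind
  rw [hpairs, Finset.card_eq_sum_card_image f A]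
  exact sq_sum_le_card_mul_sum_sq

lemma le_mul_of_sq_sub_sq_le {N D E C : ℝ} (hN : 2 ≤ N) (hD : 0 ≤ D)
    (h : (N * N - N) ^ 2 ≤ D * E) (hE : E ≤ C * N ^ 3) : N ≤ 4 * C * D := by
  have hlow : (N ^ 2 / 2) ^ 2 ≤ (N * N - N) ^ 2 := pow_le_pow_left₀ (by positivity) (by nlinarith) 2
  refine le_of_mul_le_mul_left (a := N ^ 3) ?_ (by positivity)
  nlinarith [mul_le_mul_of_nonneg_left hE hD]

end GuthKatz

theorem distinct_distances_cocompact_general (Γ : Subgroup SL(2, ℝ)) (hΓ : DiscreteTopology Γ)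
    (F : Set ℍ) (hF : IsCompact F) :
    ∃ c : ℝ, 0 < c ∧ ∀ P : Finset ℍ, (↑P : Set ℍ) ⊆ F → 2 ≤ P.card →
      (∀ p ∈ P, ∀ q ∈ P, p ≠ q → quotDist Γ p q ≠ 0) →
      c * (P.card : ℝ) / Real.log P.card ≤
        ({t : ℝ | ∃ p ∈ P, ∃ q ∈ P, p ≠ q ∧ quotDist Γ p q = t}.ncard : ℝ) := by
  classical
  have : ProperlyDiscontinuousSMul Γ ℍ :=
    @UpperHalfPlane.instProperlyDiscontinuousSL2RSubgroup Γ hΓ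
  obtain ⟨G, hG1, hG⟩ := GuthKatz.exists_finset_quotDist_eq_dist (Γ := Γ) hF
  have hG_pos : (0 : ℝ) < G.card := mod_cast Finset.card_pos.mpr ⟨1, hG1⟩
  refine ⟨(8 * 10 ^ 8 * G.card ^ 3 * (1 + Real.log G.card / Real.log 2))⁻¹, by positivity,
    fun P hPF hP hne ↦ ?_⟩
  have hN : (2 : ℝ) ≤ P.card := mod_cast hP
  have hset : {t : ℝ | ∃ p ∈ P, ∃ q ∈ P, p ≠ q ∧ quotDist Γ p q = t} =
      P.offDiag.image fun a ↦ quotDist Γ a.1 a.2 := by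
    ext t
    simp [and_assoc]
  have hcauchy :=
    GuthKatz.sq_card_le_card_image_mul_card_filter P.offDiag fun a ↦ quotDist Γ a.1 a.2
  rw [Finset.offDiag_card, ← Nat.cast_le (α := ℝ), Nat.cast_pow,
    Nat.cast_sub (Nat.le_mul_self _), Nat.cast_mul, Nat.cast_mul] at hcauchy
  have henergy := GuthKatz.card_quotDist_quadruples_le_mul_log hG1 hP
    (fun p hp q hq ↦ hG p (hPF hp) q (hPF hq)) hne
  rw [hset, Set.ncard_coe_finset, div_le_iff₀ (Real.log_pos (by linarith)),
    inv_mul_le_iff₀ (by positivity)]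
  exact (GuthKatz.le_mul_of_sq_sub_sq_le hN (Nat.cast_nonneg _) hcauchy henergy).trans_eq (by ring)

/-- If `Γ ≤ SL(2,ℝ)` is a discrete subgroup admitting a compact set `F` with
`⋃_{γ ∈ Γ} γ·F = ℍ²` (co-compactness), then there is `c(Γ) > 0` such that any `N ≥ 2`
points of `F` projecting to distinct points of `Γ\ℍ²` determine at least
`c(Γ) · N / log N` distinct quotient distances. -/
theorem distinct_distances_cocompact (Γ : Subgroup SL(2, ℝ))
    (hΓ : DiscreteTopology Γ) (F : Set ℍ) (hF : IsCompact F)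
    (hcover : ∀ z : ℍ, ∃ γ ∈ Γ, ∃ x ∈ F, γ • x = z) :
    ∃ c : ℝ, 0 < c ∧ ∀ P : Finset ℍ, (↑P : Set ℍ) ⊆ F → 2 ≤ P.card →
      (∀ p ∈ P, ∀ q ∈ P, p ≠ q → quotDist Γ p q ≠ 0) →
      c * (P.card : ℝ) / Real.log P.card ≤
        ({t : ℝ | ∃ p ∈ P, ∃ q ∈ P, p ≠ q ∧ quotDist Γ p q = t}.ncard : ℝ) :=
  distinct_distances_cocompact_general Γ hΓ F hF

end
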